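/- Let F : ℝ² → ℝ² be a lift of a homeomorphism f of the two-torus homotopic to the identity. Suppose f is non-wandering and the rotation set ρ(F) has non-empty interior. Then for every open, bounded and connected set U ⊆ T² one of the following holds: (i) ρ_U(F) = {ρ} for a single rational vector ρ ∈ ℚ², and there exist p ≥ 1 and an open, connected, simply connected set D ⊆ T² (an embedded topological open disk) with U ⊆ D, f^p(D) = D, and a point z ∈ D with f^p(z) = z; or (ii) the convex hull of ρ_U(F) has non-empty interior. -/

import Mathlib

noncomputable section
open Filter Topology Metric Set MeasureTheory

/-- Euclidean space `ℝ^d`. -/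
abbrev E (d : ℕ) := EuclideanSpace ℝ (Fin d)

/-- The integer lattice `ℤ^d` as an additive subgroup of `ℝ^d`. -/
def ZLat (d : ℕ) : AddSubgroup (E d) where
  carrier := {z | ∀ i, ∃ m : ℤ, z i = (m : ℝ)}
  zero_mem' := fun i => ⟨0, by simp⟩
  add_mem' := by
    intro x y hx hy i
    obtain ⟨m, hm⟩ := hx i
    obtain ⟨n, hn⟩ := hy i
    exact ⟨m + n, by simp [PiLp.add_apply, hm, hn]⟩
  neg_mem' := by
    intro x hx i
    obtain ⟨m, hm⟩ := hx i
    exact ⟨-m, by simp [PiLp.neg_apply, hm]⟩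

/-- The torus `T^d = ℝ^d / ℤ^d`. -/
abbrev T (d : ℕ) := E d ⧸ ZLat d

/-- The canonical projection `π : ℝ^d → T^d`. -/
def tpi (d : ℕ) : E d → T d := QuotientAddGroup.mk

/-- The set of rotation vectors of orbit segments starting in `W ⊆ ℝ^d`:
`{ρ | ∃ nᵢ → ∞, zᵢ ∈ W, (F^{nᵢ}(zᵢ) - zᵢ)/nᵢ → ρ}`. -/
def rotRel {d : ℕ} (F : E d → E d) (W : Set (E d)) : Set (E d) :=
  {ρ | ∃ (n : ℕ → ℕ) (z : ℕ → E d),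
    Tendsto n atTop atTop ∧ (∀ i, z i ∈ W) ∧
    Tendsto (fun i => (n i : ℝ)⁻¹ • (F^[n i] (z i) - z i)) atTop (𝓝 ρ)}

/-- The Misiurewicz–Ziemian rotation set `ρ(F)` of a lift `F`. -/
def rotSet {d : ℕ} (F : E d → E d) : Set (E d) := rotRel F Set.univ

/-- The rotation subset `ρ_U(F)` for `U ⊆ T^d` (starting points in `π⁻¹(U)`). -/
def rotU {d : ℕ} (F : E d → E d) (U : Set (T d)) : Set (E d) :=
  rotRel F (tpi d ⁻¹' U)

/-- `F` is a lift of the torus homeomorphism `f` (which is then homotopic to the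
identity, as expressed by commutation with the deck translations). -/
def IsLift {d : ℕ} (F : E d ≃ₜ E d) (f : T d ≃ₜ T d) : Prop :=
  (∀ z : E d, tpi d (F z) = f (tpi d z)) ∧ ∀ z : E d, ∀ m ∈ ZLat d, F (z + m) = F z + m

/-- `U ⊆ T^d` is bounded: the connected components of `π⁻¹(U)` are bounded. -/
def BoundedSet {d : ℕ} (U : Set (T d)) : Prop :=
  ∀ z ∈ tpi d ⁻¹' U, Bornology.IsBounded (connectedComponentIn (tpi d ⁻¹' U) z)

/-- `U ⊆ T^d` is recurrent: `f^n(U) ∩ U ≠ ∅` for infinitely many `n ≥ 1`. -/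
def Recurrent {d : ℕ} (f : T d ≃ₜ T d) (U : Set (T d)) : Prop :=
  {n : ℕ | 1 ≤ n ∧ ((⇑f)^[n] '' U ∩ U).Nonempty}.Infinite

/-- The Euclidean scalar product `⟨z, v⟩` in `ℝ²`. -/
def sdot (v z : E 2) : ℝ := z 0 * v 0 + z 1 * v 1

/-- `⟨z, v^⊥⟩` where `v^⊥ = (-v₂, v₁)`. -/
def pdot (v z : E 2) : ℝ := z 1 * v 0 - z 0 * v 1

/-- The affine line `L_{λ,v} = λv + {v}^⊥ = {z | ⟨z,v⟩ = λ⟨v,v⟩}`. -/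
def lineL (lam : ℝ) (v : E 2) : Set (E 2) := {z | sdot v z = lam * sdot v v}

/-- A vector of `ℝ²` is rational if both coordinates are rational. -/
def RatVec (z : E 2) : Prop := (∃ q : ℚ, z 0 = (q : ℝ)) ∧ ∃ q : ℚ, z 1 = (q : ℝ)

/-!
Identify the plane with `ℂ` and lift `U` to a bounded connected set `W`.

Suppose that curves of arbitrarily large height `N` move under `F` for a time `N` at horizontal
speed `λ`, up to an error `o(N)`. By a crossing argument no orbit starting to the left of such a
curve overtakes it, and by periodicity it does not matter where an orbit starts. Hence every
rotation vector has first coordinate `λ`, and `ρ(F)` has empty interior. Such curves exist, after a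
rotation of the plane, in two cases.

* If the rotation vectors of `W` lie on a line and there are two of them, iterate a return map
  `F^P - M` of `W` with `P` large, which exists because `f` is non-wandering: consecutive images of
  `W` overlap, so together they contain a curve that is long along the line.
* If `W` has only one rotation vector and the full orbit of `W + ℤ²` contains an arc from `x` to
  `x + k` with `0 ≠ k ∈ ℤ²`, concatenate translates of that arc.

So if the convex hull of the rotation vectors of `W` has empty interior, there is a single rotation
vector and the component of the full orbit that contains `W` is disjoint from its translates. The
same is true of the simply connected domain `D` obtained by filling its holes, and since `f` is
non-wandering, `F^p D = D + m` for some `p ≥ 1` and `m ∈ ℤ²`. Since `F^p - m` is non-wandering on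
that component, if it had no fixed point in `D` then a small perturbation without fixed points would
have a periodic point on a translation arc, contradicting Brouwer's lemma. Therefore the rotation
vector is `m / p`.
-/

/-! ### Logarithms of plane-valued maps and crossing paths -/

lemma exists_continuousOn_exp_eq_of_starConvex {V : Type*} [AddCommGroup V] [Module ℝ V]
    [TopologicalSpace V] [IsTopologicalAddGroup V] [ContinuousSMul ℝ V] {S : Set V} {p : V}
    (hp : p ∈ S) (hS : StarConvex ℝ p S) {g : V → ℂ} (hg : ContinuousOn g S)
    (h0 : ∀ x ∈ S, g x ≠ 0) :
    ∃ f : V → ℂ, ContinuousOn f S ∧ ∀ x ∈ S, Complex.exp (f x) = g x := by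
  have hmem (t : unitInterval) (x : S) : p + (t : ℝ) • ((x : V) - p) ∈ S :=
    hS.add_smul_sub_mem x.2 t.2.1 t.2.2
  let H : C(unitInterval × S, {z : ℂ // z ≠ 0}) :=
    { toFun := fun q => ⟨g (p + (q.1 : ℝ) • ((q.2 : V) - p)), h0 _ (hmem q.1 q.2)⟩
      continuous_toFun :=
        (hg.comp_continuous (f := fun q : unitInterval × S => p + (q.1 : ℝ) • ((q.2 : V) - p))
          (by fun_prop) fun q => hmem q.1 q.2).subtype_mk _ }
  have H_zero (x : S) : H (0, x) = ⟨Complex.exp (ContinuousMap.const S (Complex.log (g p)) x),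
      Complex.exp_ne_zero _⟩ := by
    simp [H, Complex.exp_log (h0 p hp)]
  let G := Complex.isCoveringMap_exp.liftHomotopy H _ H_zero
  have hG : _ ∘ G = H := Complex.isCoveringMap_exp.liftHomotopy_lifts H _ H_zero
  have hG' (x : V) (hx : x ∈ S) : Complex.exp (G (1, ⟨x, hx⟩)) = g x := by
    simpa [H] using congrArg Subtype.val (congrFun hG (1, ⟨x, hx⟩))
  obtain ⟨f, hf⟩ : ∃ f : V → ℂ, ∀ x : S, f x = G (1, x) :=
    ⟨Function.extend Subtype.val (fun x => G (1, x)) 0, Subtype.val_injective.extend_apply _ _⟩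
  refine ⟨f, ?_, fun x hx => by rw [← hG' x hx, hf ⟨x, hx⟩]⟩
  rw [continuousOn_iff_continuous_domRestrict]
  exact (G.continuous.comp (Continuous.prodMk_right (1 : unitInterval))).congr fun x => (hf x).symm

lemma sub_eq_sub_of_exp_eq {X : Type*} [TopologicalSpace X] {S : Set X}
    (hS : IsPreconnected S) {f g : X → ℂ} (hf : ContinuousOn f S) (hg : ContinuousOn g S)
    (h : ∀ x ∈ S, Complex.exp (f x) = Complex.exp (g x)) {x y : X} (hx : x ∈ S) (hy : y ∈ S) :
    f x - g x = f y - g y := by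
  have heq : EqOn f (fun z => g z + (f y - g y)) S := by
    refine Complex.isCoveringMap_exp.eqOn_of_comp_eqOn hS hf (hg.add continuousOn_const)
      (fun z hz => Subtype.ext ?_) hy (by ring)
    simp [Complex.exp_add, Complex.exp_sub, h z hz, h y hy]
  rw [heq hx]; ring

lemma complex_log_neg_I_mul {w : ℂ} (hre : 0 < w.re) :
    Complex.log (-Complex.I * w) = Complex.log w - Complex.I * (Real.pi / 2) := by
  have hw : w ≠ 0 := by rintro rfl; simp at hre
  have harg := abs_lt.1 (Complex.abs_arg_lt_pi_div_two_iff.2 (Or.inl hre))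
  rw [Complex.log_mul (by simp) hw, Complex.log_neg_I]
  · ring
  · rw [Complex.arg_neg_I]
    constructor <;> linarith [Real.pi_pos, harg.1, harg.2]

/-- Chaining this lemma along the four sides of a square computes the winding number of `g`, since
the branch of `log` used at the end of one side is the one used at the start of the next. -/
lemma log_quarter_turn {X : Type*} [TopologicalSpace X] {A : Set X} (hA : IsPreconnected A)
    {f g : X → ℂ} (hf : ContinuousOn f A) (hg : ContinuousOn g A)
    (hexp : ∀ q ∈ A, Complex.exp (f q) = g q) {c : ℂ} (hpos : ∀ q ∈ A, 0 < (c * g q).re)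
    {x y : X} (hx : x ∈ A) (hy : y ∈ A) :
    f y - Complex.log (-Complex.I * (c * g y)) =
      f x - Complex.log (c * g x) + Complex.I * (Real.pi / 2) := by
  have hne (q) (hq : q ∈ A) : c * g q ≠ 0 := fun h => by simpa [h] using hpos q hq
  have hc : c ≠ 0 := left_ne_zero_of_mul (hne x hx)
  have hconst := sub_eq_sub_of_exp_eq hA hf
    (g := fun q => Complex.log (c * g q) - Complex.log c)
    (((continuousOn_const.mul hg).clog fun q hq =>
      Complex.mem_slitPlane_iff.2 (Or.inl (hpos q hq))).sub continuousOn_const)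
    (fun q hq => by
      rw [Complex.exp_sub, Complex.exp_log (hne q hq), Complex.exp_log hc, hexp q hq,
        mul_div_cancel_left₀ _ hc]) hx hy
  rw [complex_log_neg_I_mul (hpos y hy)]
  linear_combination -hconst

lemma exists_eq_of_crossing {γ δ : ℝ → ℂ} (hγ : ContinuousOn γ (Icc 0 1))
    (hδ : ContinuousOn δ (Icc 0 1))
    (hleft : ∀ t ∈ Icc (0 : ℝ) 1, (γ 0).re < (δ t).re)
    (hright : ∀ t ∈ Icc (0 : ℝ) 1, (δ t).re < (γ 1).re)
    (hbot : ∀ s ∈ Icc (0 : ℝ) 1, (δ 0).im < (γ s).im)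
    (htop : ∀ s ∈ Icc (0 : ℝ) 1, (γ s).im < (δ 1).im) :
    ∃ s ∈ Icc (0 : ℝ) 1, ∃ t ∈ Icc (0 : ℝ) 1, γ s = δ t := by
  by_contra! hne
  let g : ℝ × ℝ → ℂ := fun q => γ q.1 - δ q.2
  have h0 : (0 : ℝ) ∈ Icc (0 : ℝ) 1 := by simp
  have h1 : (1 : ℝ) ∈ Icc (0 : ℝ) 1 := by simp
  have hg : ContinuousOn g (Icc 0 1 ×ˢ Icc 0 1) :=
    (hγ.comp continuousOn_fst fun q hq => hq.1).sub (hδ.comp continuousOn_snd fun q hq => hq.2)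
  obtain ⟨f, hf, hexp⟩ := exists_continuousOn_exp_eq_of_starConvex (mk_mem_prod h0 h0)
    (((convex_Icc 0 1).prod (convex_Icc 0 1)).starConvex (mk_mem_prod h0 h0)) hg
    (fun q hq => sub_ne_zero.2 (hne q.1 hq.1 q.2 hq.2))
  have turn {A : Set (ℝ × ℝ)} (hA : A ⊆ Icc 0 1 ×ˢ Icc 0 1) (hAc : IsPreconnected A) {c : ℂ}
      (hpos : ∀ q ∈ A, 0 < (c * g q).re) {x y : ℝ × ℝ} (hx : x ∈ A) (hy : y ∈ A) :=
    log_quarter_turn hAc (hf.mono hA) (hg.mono hA) (fun q hq => hexp q (hA hq)) hpos hx hy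
  have hside : IsPreconnected (Icc (0 : ℝ) 1) := isPreconnected_Icc
  have bottom := turn (A := Icc 0 1 ×ˢ {0}) (prod_mono le_rfl (by simp))
    (hside.prod isPreconnected_singleton) (c := -Complex.I) (x := (1, 0)) (y := (0, 0))
    (by rintro ⟨a, _⟩ ⟨ha, rfl⟩; simpa [g] using hbot a ha) ⟨h1, rfl⟩ ⟨h0, rfl⟩
  have left := turn (A := {0} ×ˢ Icc 0 1) (prod_mono (by simp) le_rfl)
    (isPreconnected_singleton.prod hside) (c := -1) (x := (0, 0)) (y := (0, 1))
    (by rintro ⟨_, b⟩ ⟨rfl, hb⟩; simpa [g] using hleft b hb) ⟨rfl, h0⟩ ⟨rfl, h1⟩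
  have top := turn (A := Icc 0 1 ×ˢ {1}) (prod_mono le_rfl (by simp))
    (hside.prod isPreconnected_singleton) (c := Complex.I) (x := (0, 1)) (y := (1, 1))
    (by rintro ⟨a, _⟩ ⟨ha, rfl⟩; simpa [g] using htop a ha) ⟨h0, rfl⟩ ⟨h1, rfl⟩
  have right := turn (A := {1} ×ˢ Icc 0 1) (prod_mono (by simp) le_rfl)
    (isPreconnected_singleton.prod hside) (c := 1) (x := (1, 1)) (y := (1, 0))
    (by rintro ⟨_, b⟩ ⟨rfl, hb⟩; simpa [g] using hright b hb) ⟨rfl, h1⟩ ⟨rfl, h0⟩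
  simp only [← mul_assoc, Complex.I_mul_I, mul_neg, mul_one, neg_neg, neg_mul]
    at bottom left top right
  have : (Complex.I * (Real.pi / 2) : ℂ) * 4 = 0 := by
    linear_combination -bottom - left - top - right
  simp [Real.pi_ne_zero] at this

/-! ### Brouwer's lemma on translation arcs -/

lemma differenceQuotient_re_pos {h : ℂ → ℂ} {M : ℝ} (hM : ∀ z, ‖h z - z‖ ≤ M) (z : ℂ) {u : ℂ}
    (hu : 2 * M < ‖u‖) : 0 < ((h z - h (z - u)) / u).re := by
  have hnorm : 0 < ‖u‖ := by linarith [(norm_nonneg _).trans (hM 0)]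
  have hu0 : u ≠ 0 := norm_pos_iff.1 hnorm
  have hsub : (h z - h (z - u)) / u - 1 = ((h z - z) - (h (z - u) - (z - u))) / u := by
    field_simp; ring
  have hclose : ‖(h z - h (z - u)) / u - 1‖ < 1 := by
    rw [hsub, norm_div, div_lt_one hnorm]
    linarith [norm_sub_le (h z - z) (h (z - u) - (z - u)), hM z, hM (z - u)]
  have hre := (abs_lt.1 ((Complex.abs_re_le_norm _).trans_lt hclose)).1
  rw [Complex.sub_re, Complex.one_re] at hre
  linarith

/-- `L` is a logarithm of the difference quotient of `h` along the chord from `z` to `z - exp ζ`.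
Parametrising chords by their logarithm `ζ` makes the domain simply connected. -/
structure IsLogDifferenceQuotient (h : ℂ → ℂ) (L : ℂ × ℂ → ℂ) : Prop where
  continuous : Continuous L
  exp_eq (z ζ : ℂ) : Complex.exp (L (z, ζ)) = (h z - h (z - Complex.exp ζ)) / Complex.exp ζ

lemma exists_isLogDifferenceQuotient {h : ℂ → ℂ} (hc : Continuous h)
    (hi : Function.Injective h) : ∃ L, IsLogDifferenceQuotient h L := by
  obtain ⟨L, hL, hexp⟩ := exists_continuousOn_exp_eq_of_starConvex (mem_univ (0 : ℂ × ℂ))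
    (convex_univ.starConvex (mem_univ _))
    (g := fun q => (h q.1 - h (q.1 - Complex.exp q.2)) / Complex.exp q.2)
    (Continuous.div (by fun_prop) (by fun_prop) fun q => Complex.exp_ne_zero _).continuousOn
    (fun q _ => div_ne_zero (sub_ne_zero.2 fun e => Complex.exp_ne_zero q.2 <| by
      linear_combination hi e) (Complex.exp_ne_zero _))
  exact ⟨L, continuousOn_univ.1 hL, fun z ζ => hexp (z, ζ) (mem_univ _)⟩

lemma complex_exp_add_pi_mul_I (ζ : ℂ) :
    Complex.exp (ζ + Real.pi * Complex.I) = -Complex.exp ζ := by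
  rw [Complex.exp_add, Complex.exp_pi_mul_I, mul_neg_one]

namespace IsLogDifferenceQuotient

variable {h : ℂ → ℂ} {L : ℂ × ℂ → ℂ} (hL : IsLogDifferenceQuotient h L)
include hL

lemma exp_reverse (z ζ : ℂ) :
    Complex.exp (L (z - Complex.exp ζ, ζ + Real.pi * Complex.I)) = Complex.exp (L (z, ζ)) := by
  rw [hL.exp_eq, hL.exp_eq, complex_exp_add_pi_mul_I, sub_neg_eq_add, sub_add_cancel, div_neg,
    ← neg_div, neg_sub]

/-- For long chords the quotient is close to `1`, so `L` differs from its principal logarithm by a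
constant, and the principal logarithm does not see the orientation of the chord. -/
lemma exists_reverse_eq {M : ℝ} (hM : ∀ z, ‖h z - z‖ ≤ M) :
    ∃ ζ : ℂ, L (0 - Complex.exp ζ, ζ + Real.pi * Complex.I) = L (0, ζ) := by
  set R : ℝ := Real.log (2 * |M| + 1)
  have hlong {q : ℂ × ℂ} (hq : q ∈ (univ : Set ℂ) ×ˢ {ζ : ℂ | R < ζ.re}) :
      Complex.exp (L q) ∈ Complex.slitPlane := by
    rw [hL.exp_eq]
    refine Complex.mem_slitPlane_iff.2 (Or.inl (differenceQuotient_re_pos hM _ ?_))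
    have : 2 * |M| + 1 < ‖Complex.exp q.2‖ := by
      rw [Complex.norm_exp, ← Real.exp_log (show (0 : ℝ) < 2 * |M| + 1 by positivity)]
      exact Real.exp_lt_exp.2 hq.2
    linarith [le_abs_self M]
  have hconst := sub_eq_sub_of_exp_eq
    (isPreconnected_univ.prod (convex_halfSpace_re_gt R).isPreconnected)
    hL.continuous.continuousOn
    (ContinuousOn.clog (Complex.continuous_exp.comp hL.continuous).continuousOn fun q => hlong)
    (fun q _ => (Complex.exp_log (Complex.exp_ne_zero _)).symm)
    (x := (0 - Complex.exp (R + 1), R + 1 + Real.pi * Complex.I)) (y := (0, R + 1))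
    ⟨mem_univ _, by simp⟩ ⟨mem_univ _, by simp⟩
  simp only [Function.comp_apply, hL.exp_reverse] at hconst
  exact ⟨R + 1, sub_left_injective hconst⟩

lemma reverse_eq {M : ℝ} (hM : ∀ z, ‖h z - z‖ ≤ M) (z ζ : ℂ) :
    L (z - Complex.exp ζ, ζ + Real.pi * Complex.I) = L (z, ζ) := by
  obtain ⟨ζ₀, hζ₀⟩ := hL.exists_reverse_eq hM
  have hcont := hL.continuous
  have hconst := sub_eq_sub_of_exp_eq (isPreconnected_univ (α := ℂ × ℂ))
    (f := fun q => L (q.1 - Complex.exp q.2, q.2 + Real.pi * Complex.I))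
    (Continuous.continuousOn (by fun_prop)) hcont.continuousOn
    (fun q _ => hL.exp_reverse q.1 q.2) (mem_univ (z, ζ)) (mem_univ (0, ζ₀))
  rwa [hζ₀, sub_self, sub_eq_zero] at hconst

lemma eq_of_exp_eq {M : ℝ} (hM : ∀ z, ‖h z - z‖ ≤ M) (z : ℂ) {ζ ζ' : ℂ}
    (hexp : Complex.exp ζ = Complex.exp ζ') : L (z, ζ) = L (z, ζ') := by
  have hper : Function.Periodic (fun ζ => L (z, ζ)) (2 * Real.pi * Complex.I) := fun ζ => by
    change L (z, _) = L (z, ζ)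
    rw [← hL.reverse_eq hM z ζ, ← hL.reverse_eq hM (z - _), complex_exp_add_pi_mul_I]
    congr 2 <;> ring
  obtain ⟨n, hn⟩ := Complex.exp_eq_exp_iff_exists_int.1 hexp
  simpa [hn] using hper.int_mul n ζ'

lemma cocycle_const {X : Type*} [TopologicalSpace X] {S : Set X} (hS : IsPreconnected S)
    {u v P Q : X → ℂ} (hu : ContinuousOn u S) (hP : ContinuousOn P S) (hQ : ContinuousOn Q S)
    (hPexp : ∀ x ∈ S, Complex.exp (P x) = u x - v x)
    (hQexp : ∀ x ∈ S, Complex.exp (Q x) = h (u x) - h (v x)) {x y : X} (hx : x ∈ S) (hy : y ∈ S) :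
    Q x - (P x + L (u x, P x)) = Q y - (P y + L (u y, P y)) := by
  refine sub_eq_sub_of_exp_eq hS hQ
    (hP.add (hL.continuous.comp_continuousOn (hu.prodMk hP))) (fun z hz => ?_) hx hy
  simp only [Pi.add_apply, Function.comp_apply]
  have hne : u z - v z ≠ 0 := hPexp z hz ▸ Complex.exp_ne_zero _
  rw [Complex.exp_add, hL.exp_eq, hPexp z hz, hQexp z hz, sub_sub_cancel, mul_div_cancel₀ _ hne]

end IsLogDifferenceQuotient

/-- The forward images of a translation arc of `h`, parametrised by `[0, ∞)` so that `h` acts as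
`t ↦ t + 1`. -/
structure IsTranslationRay (h : ℂ → ℂ) (σ : ℝ → ℂ) : Prop where
  continuousOn : ContinuousOn σ (Ici 0)
  map_add_one {t : ℝ} (ht : 0 ≤ t) : σ (t + 1) = h (σ t)
  injOn_Ico : InjOn σ (Ico 0 2)

/-- `(s, s')` is the first self-intersection of the ray `σ`: the restriction of `σ` to `[s, s']` is
a simple closed curve. -/
structure IsFirstReturn (σ : ℝ → ℂ) (s s' : ℝ) : Prop where
  nonneg : 0 ≤ s
  lt_one : s < 1
  add_one_lt : s + 1 < s'
  two_le : 2 ≤ s'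
  eq : σ s = σ s'
  ne {a b : ℝ} (ha : 0 ≤ a) (hab : a < b) (hb : b ≤ s') (hne : (a, b) ≠ (s, s')) : σ a ≠ σ b

namespace IsTranslationRay

variable {h : ℂ → ℂ} {σ : ℝ → ℂ} (hσ : IsTranslationRay h σ) (hi : Function.Injective h)
include hσ hi

lemma eq_of_add_nat_eq (n : ℕ) {a b : ℝ} (ha : 0 ≤ a) (hb : 0 ≤ b)
    (hab : σ (a + n) = σ (b + n)) : σ a = σ b := by
  induction n with
  | zero => simpa using hab
  | succ n ih =>
    refine ih (hi ?_)
    rw [← hσ.map_add_one (by positivity), ← hσ.map_add_one (by positivity)]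
    simpa [add_assoc] using hab

lemma add_one_lt_of_eq {a b : ℝ} (ha : 0 ≤ a) (hab : a < b) (heq : σ a = σ b) :
    a + 1 < b ∧ 2 ≤ b := by
  have hfloor : (⌊a⌋₊ : ℝ) ≤ a := Nat.floor_le ha
  have hlt : a < ⌊a⌋₊ + 1 := Nat.lt_floor_add_one a
  have heq' : σ (a - ⌊a⌋₊) = σ (b - ⌊a⌋₊) :=
    hσ.eq_of_add_nat_eq hi ⌊a⌋₊ (by linarith) (by linarith) (by simpa using heq)
  have htwo : 2 ≤ b - ⌊a⌋₊ := by
    by_contra! hb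
    have := hσ.injOn_Ico ⟨by linarith, by linarith⟩ ⟨by linarith, by linarith⟩ heq'
    linarith
  have : (0 : ℝ) ≤ ⌊a⌋₊ := by positivity
  constructor <;> linarith

lemma exists_minimal_return (hnot : ¬ InjOn σ (Ici 0)) :
    ∃ s s' : ℝ, 0 ≤ s ∧ s < s' ∧ σ s = σ s' ∧
      ∀ {a b : ℝ}, 0 ≤ a → a < b → σ a = σ b → s' ≤ b := by
  obtain ⟨a₀, b₀, ha₀, hab₀, heq₀⟩ : ∃ a b : ℝ, 0 ≤ a ∧ a < b ∧ σ a = σ b := by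
    simp only [InjOn, not_forall] at hnot
    obtain ⟨a, ha, b, hb, heq, hne⟩ := hnot
    rcases lt_or_gt_of_ne hne with hlt | hlt
    · exact ⟨a, b, ha, hlt, heq⟩
    · exact ⟨b, a, hb, hlt, heq.symm⟩
  let B : Set (ℝ × ℝ) := (Icc 0 b₀ ×ˢ Icc 0 b₀) ∩ {q | q.1 + 1 ≤ q.2}
  have hB : IsCompact B := (isCompact_Icc.prod isCompact_Icc).inter_right
    (isClosed_le (by fun_prop) (by fun_prop))
  have hcont : ContinuousOn (fun q : ℝ × ℝ => σ q.1 - σ q.2) B :=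
    (hσ.continuousOn.comp continuousOn_fst fun q hq => hq.1.1.1).sub
      (hσ.continuousOn.comp continuousOn_snd fun q hq => hq.1.2.1)
  let P : Set (ℝ × ℝ) := B ∩ (fun q : ℝ × ℝ => σ q.1 - σ q.2) ⁻¹' {0}
  have hP : IsCompact P := hB.of_isClosed_subset
    (hcont.preimage_isClosed_of_isClosed hB.isClosed isClosed_singleton) inter_subset_left
  have hmem {a b : ℝ} (ha : 0 ≤ a) (hab : a < b) (hb : b ≤ b₀) (heq : σ a = σ b) : (a, b) ∈ P :=
    ⟨⟨⟨⟨ha, by linarith⟩, ⟨by linarith, hb⟩⟩, (hσ.add_one_lt_of_eq hi ha hab heq).1.le⟩,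
      sub_eq_zero.2 heq⟩
  obtain ⟨⟨s, s'⟩, hs, hmin⟩ :=
    hP.exists_isMinOn ⟨_, hmem ha₀ hab₀ le_rfl heq₀⟩ continuous_snd.continuousOn
  have hss' : s + 1 ≤ s' := hs.1.2
  refine ⟨s, s', hs.1.1.1.1, by linarith, sub_eq_zero.1 hs.2, fun {a b} ha hab heq => ?_⟩
  rcases le_total b b₀ with hb | hb
  · exact hmin (hmem ha hab hb heq)
  · exact hs.1.1.2.2.trans hb

lemma exists_isFirstReturn (hnot : ¬ InjOn σ (Ici 0)) : ∃ s s', IsFirstReturn σ s s' := by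
  obtain ⟨s, s', hs, hss', heq, hmin⟩ := hσ.exists_minimal_return hi hnot
  obtain ⟨hgap, htwo⟩ := hσ.add_one_lt_of_eq hi hs hss' heq
  refine ⟨s, s', hs, ?_, hgap, htwo, heq, fun {a b} ha hab hb hne heq' => ?_⟩
  · by_contra! hs1
    have := hmin (a := s - 1) (b := s' - 1) (by linarith) (by linarith)
      (hσ.eq_of_add_nat_eq hi 1 (by linarith) (by linarith) (by simpa using heq))
    linarith
  · obtain rfl : b = s' := le_antisymm hb (hmin ha hab heq')
    rcases lt_trichotomy a s with hlt | rfl | hlt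
    · linarith [hmin ha hlt (heq'.trans heq.symm)]
    · exact hne rfl
    · linarith [hmin hs hlt (heq.trans heq'.symm)]

end IsTranslationRay

/-- The parameter pairs `a < b ≤ s'` other than the first return `(s, s')`, on which
`σ a - σ b` does not vanish. -/
def returnTriangle (s s' : ℝ) : Set (ℝ × ℝ) := {q | 0 ≤ q.1 ∧ q.1 < q.2 ∧ q.2 ≤ s' ∧ q ≠ (s, s')}

lemma mem_returnTriangle {s s' a b : ℝ} :
    (a, b) ∈ returnTriangle s s' ↔ 0 ≤ a ∧ a < b ∧ b ≤ s' ∧ (a = s → b ≠ s') := by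
  simp [returnTriangle]

lemma starConvex_returnTriangle {s s' : ℝ} (hs' : 1 < s') :
    StarConvex ℝ ((0 : ℝ), (1 : ℝ)) (returnTriangle s s') := by
  rintro ⟨x, y⟩ hxy a b ha hb hab
  obtain ⟨hx, hlt, hy, hne⟩ := mem_returnTriangle.1 hxy
  rw [show a • ((0 : ℝ), (1 : ℝ)) + b • (x, y) = (b * x, a + b * y) by simp, mem_returnTriangle]
  rcases ha.eq_or_lt with rfl | ha
  · obtain rfl : b = 1 := by linarith
    simpa using ⟨hx, hlt, hy, hne⟩
  · have hlt' : a + b * y < s' := by nlinarith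
    exact ⟨by positivity, by nlinarith, hlt'.le, fun _ => hlt'.ne⟩

namespace IsFirstReturn

variable {σ : ℝ → ℂ} {s s' : ℝ} (hs : IsFirstReturn σ s s')
include hs

lemma exists_log_chord (hσ : ContinuousOn σ (Ici 0)) :
    ∃ T : ℝ × ℝ → ℂ, ContinuousOn T (returnTriangle s s') ∧
      ∀ q ∈ returnTriangle s s', Complex.exp (T q) = σ q.1 - σ q.2 := by
  have hs' : 1 < s' := by linarith [hs.two_le]
  refine exists_continuousOn_exp_eq_of_starConvex (p := (0, 1)) ?_ (starConvex_returnTriangle hs')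
    ((hσ.comp continuousOn_fst fun q hq => hq.1).sub
      (hσ.comp continuousOn_snd fun q hq => hq.1.trans hq.2.1.le))
    (fun q hq => sub_ne_zero.2 (hs.ne hq.1 hq.2.1 hq.2.2.1 hq.2.2.2))
  exact mem_returnTriangle.2 ⟨le_rfl, by norm_num, hs'.le, fun _ => hs'.ne⟩

lemma left_mem {t : ℝ} (ht : t ∈ Ioo s s') : (s, t) ∈ returnTriangle s s' :=
  mem_returnTriangle.2 ⟨hs.nonneg, ht.1, ht.2.le, fun _ => ht.2.ne⟩

lemma right_mem {t : ℝ} (ht : t ∈ Ioo s s') : (t, s') ∈ returnTriangle s s' :=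
  mem_returnTriangle.2 ⟨hs.nonneg.trans ht.1.le, ht.2, le_rfl, fun h => absurd h ht.1.ne'⟩

lemma diagonal_mem {t : ℝ} (ht : t ∈ Icc 0 (s' - 1)) : (t, t + 1) ∈ returnTriangle s s' :=
  mem_returnTriangle.2 ⟨ht.1, by linarith, by linarith [ht.2],
    fun h => by linarith [hs.add_one_lt]⟩

variable {T : ℝ × ℝ → ℂ} (hT : ContinuousOn T (returnTriangle s s'))
  (hTexp : ∀ q ∈ returnTriangle s s', Complex.exp (T q) = σ q.1 - σ q.2)
include hTexp

lemma exp_log_chord_right {t : ℝ} (ht : t ∈ Ioo s s') :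
    Complex.exp (T (t, s')) = Complex.exp (T (s, t) + Real.pi * Complex.I) := by
  rw [complex_exp_add_pi_mul_I, hTexp _ (hs.right_mem ht), hTexp _ (hs.left_mem ht), hs.eq, neg_sub]

include hT

/-- A simple closed curve turns by an odd multiple of a half turn, seen from `σ s`. -/
lemma log_chord_add_ne : T (s + 1, s') + T (s' - 1, s') ≠ T (s, s + 1) + T (s, s' - 1) := by
  intro hzero
  have ht₁ : s + 1 ∈ Ioo s s' := ⟨by linarith, hs.add_one_lt⟩
  have ht₂ : s' - 1 ∈ Ioo s s' := ⟨by linarith [hs.add_one_lt], by linarith⟩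
  have hconst := sub_eq_sub_of_exp_eq (isPreconnected_Ioo (a := s) (b := s'))
    (f := fun t => T (t, s')) (g := fun t => T (s, t) + Real.pi * Complex.I)
    (hT.comp (Continuous.continuousOn (by fun_prop)) fun t => hs.right_mem)
    ((hT.comp (Continuous.continuousOn (by fun_prop)) fun t => hs.left_mem).add
      continuousOn_const) (fun t => hs.exp_log_chord_right hTexp) ht₁ ht₂
  obtain ⟨k, hk⟩ := Complex.exp_eq_exp_iff_exists_int.1 (hs.exp_log_chord_right hTexp ht₁)
  have hodd : ((2 * k + 1 : ℤ) : ℂ) * (2 * Real.pi * Complex.I) = 0 := by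
    push_cast
    linear_combination -2 * hk + hconst + hzero
  have hk0 : 2 * k + 1 = 0 := by
    simpa [Real.pi_ne_zero, -Int.cast_add, -Int.cast_mul] using hodd
  omega

variable {h : ℂ → ℂ} (hσ : IsTranslationRay h σ)
include hσ

lemma log_displacement_sub_log_chord_const {D : Set ℂ} (hσD : MapsTo σ (Ici 0) D) {A : ℂ → ℂ}
    (hA : ContinuousOn A D) (hAexp : ∀ z ∈ D, Complex.exp (A z) = z - h z) {t u : ℝ}
    (ht : t ∈ Icc 0 (s' - 1)) (hu : u ∈ Icc 0 (s' - 1)) :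
    A (σ t) - T (t, t + 1) = A (σ u) - T (u, u + 1) :=
  sub_eq_sub_of_exp_eq (f := fun t => A (σ t)) (g := fun t => T (t, t + 1)) isPreconnected_Icc
    (hA.comp (hσ.continuousOn.mono fun _ ht => ht.1) fun _ ht => hσD ht.1)
    (hT.comp (Continuous.continuousOn (by fun_prop)) fun _ => hs.diagonal_mem)
    (fun t ht => by
      rw [hAexp _ (hσD ht.1), hTexp _ (hs.diagonal_mem ht), ← hσ.map_add_one ht.1]) ht hu

lemma log_chord_cocycle {L : ℂ × ℂ → ℂ} (hL : IsLogDifferenceQuotient h L) :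
    T (1, 2) - (T (0, 1) + L (σ 0, T (0, 1))) =
      T (s + 1, s') - (T (s, s' - 1) + L (σ s, T (s, s' - 1))) := by
  let S : Set (ℝ × ℝ) := {q | 0 ≤ q.1} ∩ {q | q.1 - q.2 < 0} ∩ {q | q.2 ≤ s' - 1}
  have hS : Convex ℝ S :=
    ((convex_halfSpace_ge (LinearMap.fst ℝ ℝ ℝ).isLinear 0).inter
      (convex_halfSpace_lt (LinearMap.fst ℝ ℝ ℝ - LinearMap.snd ℝ ℝ ℝ).isLinear 0)).inter
      (convex_halfSpace_le (LinearMap.snd ℝ ℝ ℝ).isLinear (s' - 1))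
  have hsub : S ⊆ returnTriangle s s' := fun q hq =>
    mem_returnTriangle.2 ⟨hq.1.1, sub_neg.1 hq.1.2, by linarith [hq.2.out],
      fun _ => by linarith [hq.2.out]⟩
  have hshift {q : ℝ × ℝ} (hq : q ∈ S) : (q.1 + 1, q.2 + 1) ∈ returnTriangle s s' :=
    mem_returnTriangle.2 ⟨by linarith [hq.1.1.out], by linarith [hq.1.2.out],
      by linarith [hq.2.out], fun _ => by linarith [hs.lt_one, hq.1.1.out]⟩
  have := hL.cocycle_const hS.isPreconnected
    (u := fun q => σ q.1) (v := fun q => σ q.2) (P := T) (Q := fun q => T (q.1 + 1, q.2 + 1))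
    (hσ.continuousOn.comp continuousOn_fst fun q hq => hq.1.1) (hT.mono hsub)
    (hT.comp (Continuous.continuousOn (by fun_prop)) fun q => hshift)
    (fun q hq => hTexp q (hsub hq))
    (fun q hq => by
      rw [hTexp _ (hshift hq), hσ.map_add_one hq.1.1,
        hσ.map_add_one (hq.1.1.trans (sub_neg.1 hq.1.2).le)])
    (x := (0, 1)) (y := (s, s' - 1))
    ⟨⟨le_refl (0 : ℝ), by norm_num⟩,
      show (1 : ℝ) ≤ s' - 1 by linarith [hs.two_le]⟩
    ⟨⟨hs.nonneg, show s - (s' - 1) < 0 by linarith [hs.add_one_lt]⟩,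
      le_refl (s' - 1)⟩
  simpa [one_add_one_eq_two] using this

/-- The curve `σ` on `[s, s']` closes up, so the logarithm `A` of the displacement returns to its
value, whereas the chord logarithm records the turning of a simple closed curve. -/
lemma log_chord_add_eq (hi : Function.Injective h) (hc : Continuous h) {M : ℝ}
    (hM : ∀ z, ‖h z - z‖ ≤ M) {D : Set ℂ} (hDc : IsPreconnected D) (hD : MapsTo h D D)
    (hσD : MapsTo σ (Ici 0) D) {A : ℂ → ℂ} (hA : ContinuousOn A D)
    (hAexp : ∀ z ∈ D, Complex.exp (A z) = z - h z) :
    T (s + 1, s') + T (s' - 1, s') = T (s, s + 1) + T (s, s' - 1) := by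
  obtain ⟨L, hL⟩ := exists_isLogDifferenceQuotient hc hi
  have hend : s' - 1 ∈ Ioo s s' := ⟨by linarith [hs.add_one_lt], by linarith⟩
  have h0 : (0 : ℝ) ∈ Icc 0 (s' - 1) := ⟨le_rfl, by linarith [hs.two_le]⟩
  have h1 : (1 : ℝ) ∈ Icc 0 (s' - 1) := ⟨one_pos.le, by linarith [hs.two_le]⟩
  have hmem_s : s ∈ Icc 0 (s' - 1) := ⟨hs.nonneg, by linarith [hs.add_one_lt]⟩
  have hmem_end : s' - 1 ∈ Icc 0 (s' - 1) := ⟨h0.2, le_rfl⟩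
  have hstep_end : h (σ (s' - 1)) = σ s := by
    rw [hs.eq, ← hσ.map_add_one h0.2, sub_add_cancel]
  have diag {t u : ℝ} (ht : t ∈ Icc 0 (s' - 1)) (hu : u ∈ Icc 0 (s' - 1)) :=
    hs.log_displacement_sub_log_chord_const hT hTexp hσ hσD hA hAexp ht hu
  have diag_one := diag h0 h1
  have diag_s := diag h0 hmem_s
  have diag_end := diag h0 hmem_end
  have chord := hs.log_chord_cocycle hT hTexp hσ hL
  have displacement := hL.cocycle_const hDc (u := id) (v := h) (P := A) (Q := A ∘ h)
    continuousOn_id hA (hA.comp hc.continuousOn hD) hAexp (fun z hz => hAexp _ (hD hz))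
    (hσD (le_refl (0 : ℝ))) (hσD h0.2)
  have hL_start : L (σ 0, A (σ 0)) = L (σ 0, T (0, 1)) := hL.eq_of_exp_eq hM _ <| by
    have := hTexp _ (hs.diagonal_mem h0)
    rw [zero_add] at this
    rw [hAexp _ (hσD h0.1), this, ← hσ.map_add_one le_rfl, zero_add]
  have hL_end : L (σ (s' - 1), A (σ (s' - 1))) = L (σ s, T (s, s' - 1)) := by
    rw [← hL.reverse_eq hM (σ s), hTexp _ (hs.left_mem hend), sub_sub_cancel]
    refine hL.eq_of_exp_eq hM _ ?_
    rw [← hs.exp_log_chord_right hTexp hend, hAexp _ (hσD h0.2), hTexp _ (hs.right_mem hend),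
      hstep_end, hs.eq]
  have hstart : h (σ 0) = σ 1 := by rw [← hσ.map_add_one le_rfl, zero_add]
  simp only [zero_add, sub_add_cancel, one_add_one_eq_two, Function.comp_apply, id_eq, hstep_end,
    hstart, hL_start, hL_end] at diag_one diag_s diag_end displacement
  linear_combination displacement - chord + diag_one - diag_s + diag_end

end IsFirstReturn

/-- **Brouwer's lemma on translation arcs**, in a forward-invariant simply connected domain. -/
theorem IsTranslationRay.injOn_Ici {h : ℂ → ℂ} {σ : ℝ → ℂ} (hσ : IsTranslationRay h σ)
    (hc : Continuous h) (hi : Function.Injective h) {M : ℝ} (hM : ∀ z, ‖h z - z‖ ≤ M) {D : Set ℂ}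
    (hDs : IsSimplyConnected D) (hDo : IsOpen D) (hD : MapsTo h D D) (hfix : ∀ z ∈ D, h z ≠ z)
    (hσD : MapsTo σ (Ici 0) D) : InjOn σ (Ici 0) := by
  by_contra hnot
  obtain ⟨s, s', hs⟩ := hσ.exists_isFirstReturn hi hnot
  obtain ⟨T, hT, hTexp⟩ := hs.exists_log_chord hσ.continuousOn
  obtain ⟨A, hA, hAexp⟩ := Complex.exists_continuousOn_eqOn_exp_comp hDs hDo
    (g := fun z => z - h z) (continuous_id.sub hc).continuousOn
    (by rintro ⟨z, hz, he⟩; exact hfix z hz (sub_eq_zero.1 he).symm)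
  exact hs.log_chord_add_ne hT hTexp (hs.log_chord_add_eq hT hTexp hσ hi hc hM
    hDs.isPathConnected.isConnected.isPreconnected hD hσD hA fun z hz => hAexp hz)

/-! ### Simple arcs, translation arcs and fixed points -/

/-- `a` restricted to `[0, T]` is a simple arc in `W`. -/
structure IsSimpleArc {X : Type*} [TopologicalSpace X] (a : ℝ → X) (T : ℝ) (W : Set X) :
    Prop where
  nonneg : 0 ≤ T
  continuousOn : ContinuousOn a (Icc 0 T)
  injOn : InjOn a (Icc 0 T)
  mapsTo : MapsTo a (Icc 0 T) W

namespace IsSimpleArc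

lemma mono {X : Type*} [TopologicalSpace X] {a : ℝ → X} {T : ℝ} {W : Set X}
    (ha : IsSimpleArc a T W) {t : ℝ} (ht : t ∈ Icc 0 T) : IsSimpleArc a t W where
  nonneg := ht.1
  continuousOn := ha.continuousOn.mono (Icc_subset_Icc_right ht.2)
  injOn := ha.injOn.mono (Icc_subset_Icc_right ht.2)
  mapsTo := ha.mapsTo.mono_left (Icc_subset_Icc_right ht.2)

lemma exists_first_mem {X : Type*} [TopologicalSpace X] {a : ℝ → X} {T : ℝ} {W K : Set X}
    (ha : IsSimpleArc a T W) (hK : IsClosed K) (hT : a T ∈ K) :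
    ∃ t ∈ Icc 0 T, a t ∈ K ∧ ∀ s ∈ Ico 0 t, a s ∉ K := by
  have hcompact : IsCompact (Icc 0 T ∩ a ⁻¹' K) := isCompact_Icc.of_isClosed_subset
    (ha.continuousOn.preimage_isClosed_of_isClosed isClosed_Icc hK) inter_subset_left
  obtain ⟨t, ht, hmin⟩ := hcompact.exists_isMinOn ⟨T, ⟨ha.nonneg, le_rfl⟩, hT⟩ continuousOn_id
  exact ⟨t, ht.1, ht.2, fun s hs hsK =>
    hs.2.not_ge (hmin ⟨⟨hs.1, hs.2.le.trans ht.1.2⟩, hsK⟩)⟩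

variable {V : Type*} [NormedAddCommGroup V] [NormedSpace ℝ V] {a : ℝ → V} {T : ℝ} {W : Set V}

lemma exists_append_segment (ha : IsSimpleArc a T W) {y : V} (hy : a T ≠ y)
    (hW : closedBall y (dist (a T) y) ⊆ W)
    (hfar : ∀ s ∈ Ico 0 T, a s ∉ closedBall y (dist (a T) y)) :
    ∃ b, IsSimpleArc b (T + 1) W ∧ b 0 = a 0 ∧ b (T + 1) = y := by
  let ℓ : ℝ → V := fun s => AffineMap.lineMap (a T) y (s - T)
  have hℓ {s : ℝ} (hs : s ∈ Icc T (T + 1)) : ℓ s ∈ closedBall y (dist (a T) y) := by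
    rw [mem_closedBall, dist_lineMap_right, Real.norm_of_nonneg (by linarith [hs.2])]
    exact mul_le_of_le_one_left dist_nonneg (by linarith [hs.1])
  let b : ℝ → V := fun s => if s ≤ T then a s else ℓ s
  have hba : EqOn b a (Icc 0 T) := fun s hs => if_pos hs.2
  have hbℓ : EqOn b ℓ (Icc T (T + 1)) := fun s hs => by
    rcases hs.1.eq_or_lt with rfl | hlt
    · simp [b, ℓ]
    · exact if_neg hlt.not_ge
  have hunion : Icc 0 T ∪ Icc T (T + 1) = Icc 0 (T + 1) :=
    Icc_union_Icc_eq_Icc ha.nonneg (by linarith)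
  have hsplit : Ico 0 T ∪ Icc T (T + 1) = Icc 0 (T + 1) :=
    Ico_union_Icc_eq_Icc ha.nonneg (by linarith)
  refine ⟨b, ⟨by linarith [ha.nonneg], ?_, ?_, ?_⟩, hba ⟨le_rfl, ha.nonneg⟩, ?_⟩
  · rw [← hunion]
    refine (ha.continuousOn.congr hba).union_of_isClosed (ContinuousOn.congr ?_ hbℓ)
      isClosed_Icc isClosed_Icc
    exact (AffineMap.lineMap_continuous.comp (by fun_prop)).continuousOn
  · rw [← hsplit, injOn_union (Set.disjoint_left.2 fun s hs hs' => hs.2.not_ge hs'.1)]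
    refine ⟨(ha.injOn.congr hba.symm).mono Ico_subset_Icc_self, InjOn.congr ?_ hbℓ.symm,
      fun s hs s' hs' heq => hfar s hs ?_⟩
    · exact ((AffineMap.lineMap_injective ℝ hy).comp (sub_left_injective (b := T))).injOn
    · rw [← hba (Ico_subset_Icc_self hs), heq, hbℓ hs']
      exact hℓ hs'
  · rw [← hunion]
    exact (ha.mapsTo.congr hba.symm).union (MapsTo.congr (fun s hs => hW (hℓ hs)) hbℓ.symm)
  · rw [hbℓ ⟨by linarith, le_rfl⟩]
    simp [ℓ]

lemma exists_extend (ha : IsSimpleArc a T W) {y : V} (hy : closedBall y (dist (a T) y) ⊆ W) :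
    ∃ S b, IsSimpleArc b S W ∧ b 0 = a 0 ∧ b S = y := by
  obtain ⟨t, ht, htmem, hfirst⟩ := ha.exists_first_mem isClosed_closedBall
    (mem_closedBall.2 (le_refl (dist (a T) y)))
  by_cases hty : a t = y
  · exact ⟨t, a, ha.mono ht, rfl, hty⟩
  · have hsub : closedBall y (dist (a t) y) ⊆ closedBall y (dist (a T) y) :=
      closedBall_subset_closedBall htmem
    exact ⟨t + 1, (ha.mono ht).exists_append_segment hty (hsub.trans hy)
      fun s hs hmem => hfirst s hs (hsub hmem)⟩

end IsSimpleArc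

lemma exists_isSimpleArc {V : Type*} [NormedAddCommGroup V] [NormedSpace ℝ V] {W : Set V}
    (hWo : IsOpen W) (hWc : IsPreconnected W) {x y : V} (hx : x ∈ W) (hy : y ∈ W) :
    ∃ T a, IsSimpleArc a T W ∧ a 0 = x ∧ a T = y := by
  let Reach (z : V) : Prop := ∃ T a, IsSimpleArc a T W ∧ a 0 = x ∧ a T = z
  have hextend {z w : V} (hzw : closedBall w (dist z w) ⊆ W) : Reach z → Reach w := by
    rintro ⟨T, a, ha, rfl, rfl⟩
    exact ha.exists_extend hzw
  refine hWc.induction₂' (fun z w => Reach z → Reach w) (fun z hz => ?_)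
    (fun _ _ _ _ _ _ hzw hwv hz => hwv (hzw hz)) hx hy
    ⟨0, fun _ => x, ⟨le_rfl, continuousOn_const, by simp, fun _ _ => hx⟩, rfl, rfl⟩
  obtain ⟨r, hr, hrW⟩ := Metric.isOpen_iff.1 hWo z hz
  filter_upwards [mem_nhdsWithin_of_mem_nhds (ball_mem_nhds z (half_pos hr))] with w hw
  rw [mem_ball] at hw
  refine ⟨hextend fun v hv => hrW ?_, hextend fun v hv => hrW ?_⟩
  · rw [mem_closedBall, dist_comm z] at hv
    rw [mem_ball]
    linarith [dist_triangle v w z]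
  · rw [mem_closedBall] at hv
    rw [mem_ball]
    linarith

/-- `σ` restricted to `[0, 1]` is a translation arc of `h`: a simple arc from a point to its image
that meets its own image only at the latter. -/
structure IsTranslationArc {X : Type*} [TopologicalSpace X] (h : X → X) (σ : ℝ → X) : Prop where
  continuousOn : ContinuousOn σ (Icc 0 1)
  injOn : InjOn σ (Icc 0 1)
  map_zero : h (σ 0) = σ 1
  eq_one {t u : ℝ} (ht : t ∈ Icc 0 1) (hu : u ∈ Ico 0 1) (heq : σ t = h (σ u)) : t = 1

/-- Among all parameter pairs `(p, q)` with `a p = h (a q)` one minimising `|p - q|` bounds a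
translation arc. -/
lemma IsSimpleArc.exists_isTranslationArc {X : Type*} [TopologicalSpace X] [T2Space X] {h : X → X}
    (hc : Continuous h) {a : ℝ → X} {T : ℝ} {W : Set X} (ha : IsSimpleArc a T W)
    (hfix : ∀ z ∈ W, h z ≠ z) (hT : a T = h (a 0)) :
    ∃ σ, IsTranslationArc h σ ∧ MapsTo σ (Icc 0 1) W := by
  let P : Set (ℝ × ℝ) := {q ∈ Icc 0 T ×ˢ Icc 0 T | (a q.1, h (a q.2)) ∈ diagonal X}
  have hP : IsCompact P := (isCompact_Icc.prod isCompact_Icc).of_isClosed_subset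
    (((ha.continuousOn.comp continuousOn_fst fun q hq => hq.1).prodMk
      (hc.comp_continuousOn (ha.continuousOn.comp continuousOn_snd fun q hq => hq.2))
      ).preimage_isClosed_of_isClosed (isClosed_Icc.prod isClosed_Icc) isClosed_diagonal)
    fun _ hq => hq.1
  obtain ⟨⟨u, v⟩, ⟨⟨hu, hv⟩, huv⟩, hmin⟩ := hP.exists_isMinOn (f := fun q => |q.1 - q.2|)
    ⟨(T, 0), ⟨⟨ha.nonneg, le_rfl⟩, ⟨le_rfl, ha.nonneg⟩⟩, hT⟩ (by fun_prop)
  have huv : a u = h (a v) := huv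
  have hne : u - v ≠ 0 := fun h0 =>
    hfix _ (ha.mapsTo hv) (by rw [← huv, sub_eq_zero.1 h0])
  let τ : ℝ → ℝ := AffineMap.lineMap v u
  have hτ : MapsTo τ (Icc 0 1) (Icc 0 T) := fun t ht =>
    (convex_Icc 0 T).lineMap_mem hv hu ht
  have hτi : Function.Injective τ := AffineMap.lineMap_injective ℝ (sub_ne_zero.1 hne).symm
  refine ⟨a ∘ τ, ⟨?_, ha.injOn.comp hτi.injOn hτ, ?_, fun {t r} ht hr heq => ?_⟩,
    ha.mapsTo.comp hτ⟩
  · exact ha.continuousOn.comp AffineMap.lineMap_continuous.continuousOn hτ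
  · simpa [τ] using huv.symm
  · have hle : |u - v| ≤ |τ t - τ r| :=
      hmin (a := (τ t, τ r)) ⟨⟨hτ ht, hτ (Ico_subset_Icc_self hr)⟩, heq⟩
    rw [show τ t - τ r = (t - r) * (u - v) by simp [τ, AffineMap.lineMap_apply]; ring, abs_mul,
      le_mul_iff_one_le_left (abs_pos.2 hne), le_abs] at hle
    rcases hle with hle | hle <;> linarith [ht.1, ht.2, hr.1, hr.2]

/-- The extension to `[0, ∞)` of an arc `σ` from a point to its image under `h` that conjugates `h`
to the unit translation. -/
def dynamicExtension {X : Type*} (h : X → X) (σ : ℝ → X) (t : ℝ) : X :=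
  h^[⌊t⌋₊] (σ (t - ⌊t⌋₊))

section DynamicExtension

variable {X : Type*} {h : X → X} {σ : ℝ → X}

lemma dynamicExtension_add_nat (n : ℕ) {t : ℝ} (ht : 0 ≤ t) :
    dynamicExtension h σ (t + n) = h^[n] (dynamicExtension h σ t) := by
  rw [dynamicExtension, dynamicExtension, Nat.floor_add_natCast ht, add_comm ⌊t⌋₊,
    Function.iterate_add_apply]
  push_cast
  rw [add_comm (n : ℝ), add_sub_add_right_eq_sub]

lemma dynamicExtension_add_one {t : ℝ} (ht : 0 ≤ t) :
    dynamicExtension h σ (t + 1) = h (dynamicExtension h σ t) := by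
  simpa using dynamicExtension_add_nat 1 ht

lemma dynamicExtension_eq_iterate (h1 : h (σ 0) = σ 1) (n : ℕ) {t : ℝ}
    (ht : t ∈ Icc (n : ℝ) (n + 1)) : dynamicExtension h σ t = h^[n] (σ (t - n)) := by
  rcases ht.2.lt_or_eq with hlt | rfl
  · rw [dynamicExtension, (Nat.floor_eq_iff (n.cast_nonneg.trans ht.1)).2 ⟨ht.1, hlt⟩]
  · rw [dynamicExtension_add_one n.cast_nonneg, dynamicExtension, Nat.floor_natCast, sub_self,
      ← Function.iterate_succ_apply' h, Function.iterate_succ_apply, h1, add_sub_cancel_left]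

lemma dynamicExtension_eqOn (h1 : h (σ 0) = σ 1) : EqOn (dynamicExtension h σ) σ (Icc 0 1) :=
  fun t ht => by simpa using dynamicExtension_eq_iterate h1 0 (by simpa using ht)

lemma mapsTo_dynamicExtension {D : Set X} (hD : MapsTo h D D)
    (hσ : MapsTo σ (Icc 0 1) D) : MapsTo (dynamicExtension h σ) (Ici 0) D := fun t ht => by
  have hfloor := Nat.floor_le (mem_Ici.1 ht)
  have hlt := Nat.lt_floor_add_one t
  exact hD.iterate _ (hσ ⟨by linarith, by linarith⟩)

lemma continuousOn_dynamicExtension [TopologicalSpace X] (hc : Continuous h)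
    (hσ : ContinuousOn σ (Icc 0 1)) (h1 : h (σ 0) = σ 1) :
    ContinuousOn (dynamicExtension h σ) (Ici 0) := by
  have hpiece (n : ℕ) : ContinuousOn (dynamicExtension h σ) (Icc n (n + 1)) := by
    refine ContinuousOn.congr ?_ fun t => dynamicExtension_eq_iterate h1 n
    refine (hc.iterate n).comp_continuousOn (hσ.comp (Continuous.continuousOn (by fun_prop)) ?_)
    exact fun t ht => ⟨by linarith [ht.1], by linarith [ht.2]⟩
  have hinit (n : ℕ) : ContinuousOn (dynamicExtension h σ) (Icc 0 n) := by
    induction n with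
    | zero => simp
    | succ n ih =>
      have := ih.union_of_isClosed (hpiece n) isClosed_Icc isClosed_Icc
      rw [Icc_union_Icc_eq_Icc n.cast_nonneg (by linarith)] at this
      exact_mod_cast this
  intro t ht
  obtain ⟨n, hn⟩ := exists_nat_gt t
  refine (hinit n t ⟨ht, hn.le⟩).mono_of_mem_nhdsWithin ?_
  filter_upwards [self_mem_nhdsWithin, mem_nhdsWithin_of_mem_nhds (Iio_mem_nhds hn)] with u hu hun
  exact ⟨hu, le_of_lt hun⟩

end DynamicExtension

lemma IsTranslationArc.isTranslationRay {h : ℂ → ℂ} {σ : ℝ → ℂ} (hσ : IsTranslationArc h σ)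
    (hc : Continuous h) (hi : Function.Injective h) :
    IsTranslationRay h (dynamicExtension h σ) where
  continuousOn := continuousOn_dynamicExtension hc hσ.continuousOn hσ.map_zero
  map_add_one := dynamicExtension_add_one
  injOn_Ico := by
    have hfst {t : ℝ} (ht : t ∈ Ico (0 : ℝ) 1) : dynamicExtension h σ t = σ t :=
      dynamicExtension_eqOn hσ.map_zero (Ico_subset_Icc_self ht)
    have hsnd {t : ℝ} (ht : t ∈ Ico (1 : ℝ) 2) : dynamicExtension h σ t = h (σ (t - 1)) := by
      simpa using dynamicExtension_eq_iterate hσ.map_zero 1 (t := t)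
        ⟨by simpa using ht.1, by norm_num; exact ht.2.le⟩
    have hshift {t : ℝ} (ht : t ∈ Ico (1 : ℝ) 2) : t - 1 ∈ Ico (0 : ℝ) 1 :=
      ⟨by linarith [ht.1], by linarith [ht.2]⟩
    rw [← Ico_union_Ico_eq_Ico zero_le_one one_le_two,
      injOn_union (Set.disjoint_left.2 fun s hs hs' => hs.2.not_ge hs'.1)]
    refine ⟨fun t ht u hu heq => ?_, fun t ht u hu heq => ?_, fun t ht u hu heq => ?_⟩
    · rw [hfst ht, hfst hu] at heq
      exact hσ.injOn (Ico_subset_Icc_self ht) (Ico_subset_Icc_self hu) heq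
    · rw [hsnd ht, hsnd hu] at heq
      exact sub_left_injective <| hσ.injOn (Ico_subset_Icc_self (hshift ht))
        (Ico_subset_Icc_self (hshift hu)) (hi heq)
    · rw [hfst ht, hsnd hu] at heq
      exact ht.2.ne (hσ.eq_one (Ico_subset_Icc_self ht) (hshift hu) heq)

/-- `φ` is the identity outside `B`. -/
def IsSupportedIn {X : Type*} [TopologicalSpace X] (φ : X ≃ₜ X) (B : Set X) : Prop :=
  ∀ z ∉ B, φ z = z

namespace IsSupportedIn

variable {X : Type*} [TopologicalSpace X] {φ : X ≃ₜ X} {B : Set X}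

lemma symm (hφ : IsSupportedIn φ B) : IsSupportedIn φ.symm B := fun z hz => by
  rw [Homeomorph.symm_apply_eq, hφ z hz]

lemma mapsTo (hφ : IsSupportedIn φ B) : MapsTo φ B B := fun z hz => by
  by_contra hcon
  exact hcon (by rwa [φ.injective (hφ _ hcon)])

lemma mapsTo_of_subset (hφ : IsSupportedIn φ B) {D : Set X} (hBD : B ⊆ D) : MapsTo φ D D :=
  fun z hz => by
    by_cases hzB : z ∈ B
    · exact hBD (hφ.mapsTo hzB)
    · rwa [hφ z hzB]

lemma dist_le {X : Type*} [PseudoMetricSpace X] {φ : X ≃ₜ X} {c : X} {r : ℝ}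
    (hφ : IsSupportedIn φ (ball c r)) (hr : 0 ≤ r) (z : X) : dist (φ z) z ≤ 2 * r := by
  by_cases hz : z ∈ ball c r
  · linarith [dist_triangle_right (φ z) z c, mem_ball.1 hz, mem_ball.1 (hφ.mapsTo hz)]
  · rw [hφ z hz, dist_self]
    positivity

end IsSupportedIn

lemma exists_isSupportedIn_ball {V : Type*} [NormedAddCommGroup V] [NormedSpace ℝ V]
    [CompleteSpace V] {b c : V} {r : ℝ} (hb : b ∈ ball c r) :
    ∃ φ : V ≃ₜ V, φ c = b ∧ IsSupportedIn φ (ball c r) := by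
  have hr : 0 < r := pos_of_mem_ball hb
  let bump : V → ℝ := fun z => max 0 (1 - ‖z - c‖ / r)
  have hbump (x y : V) : |bump x - bump y| ≤ ‖x - y‖ / r := calc
    |bump x - bump y| ≤ |(1 - ‖x - c‖ / r) - (1 - ‖y - c‖ / r)| :=
      (abs_max_sub_max_le_max _ _ _ _).trans (by simp)
    _ = |‖y - c‖ - ‖x - c‖| / r := by rw [← abs_of_pos hr, ← abs_div, abs_of_pos hr]; ring_nf
    _ ≤ ‖x - y‖ / r := by
      gcongr
      simpa [norm_sub_rev] using abs_norm_sub_norm_le (y - c) (x - c)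
  have hbr : ‖b - c‖₊ / ⟨r, hr.le⟩ < 1 := by
    rw [div_lt_one (show (0 : NNReal) < ⟨r, hr.le⟩ from hr)]
    exact mem_ball_iff_norm.1 hb
  let f : V → V := fun z => z + bump z • (b - c)
  have happrox : ApproximatesLinearOn f ((ContinuousLinearEquiv.refl ℝ V : V ≃L[ℝ] V) : V →L[ℝ] V)
      univ (‖b - c‖₊ / ⟨r, hr.le⟩) := fun x _ y _ => by
    have : f x - f y - (x - y) = (bump x - bump y) • (b - c) := by
      simp only [f, sub_smul]; abel
    simp only [ContinuousLinearEquiv.coe_coe, ContinuousLinearEquiv.coe_refl', id_eq, this,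
      norm_smul, Real.norm_eq_abs]
    calc |bump x - bump y| * ‖b - c‖ ≤ ‖x - y‖ / r * ‖b - c‖ := by gcongr; exact hbump x y
      _ = ‖b - c‖ / r * ‖x - y‖ := by ring
  refine ⟨happrox.toHomeomorph f ?_, ?_, fun z hz => ?_⟩
  · refine (subsingleton_or_nontrivial V).imp id fun (_ : Nontrivial V) => ?_
    have : NontrivialTopology V := inferInstance
    rwa [show ‖((ContinuousLinearEquiv.refl ℝ V).symm : V →L[ℝ] V)‖₊ = 1 from
      ContinuousLinearMap.nnnorm_id, inv_one]
  · change f c = b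
    simp [f, bump]
  · have : 1 - ‖z - c‖ / r ≤ 0 := by
      rw [sub_nonpos, one_le_div hr]
      rwa [mem_ball, dist_eq_norm, not_lt] at hz
    change f z = z
    simp [f, bump, this]

/-- The set `B` can be used to perturb `h` without affecting the translation arc `σ`. -/
structure IsFreeFor {X : Type*} (h : X → X) (σ : ℝ → X) (B : Set X) : Prop where
  map_arc_notMem {t : ℝ} (ht : t ∈ Icc 0 1) : h (σ t) ∉ B
  map_ne_arc {z : X} (hz : z ∈ B) {t : ℝ} (ht : t ∈ Icc 0 1) : h z ≠ σ t
  map_notMem {z : X} (hz : z ∈ B) : h z ∉ B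

namespace IsTranslationArc

lemma exists_mem_Ioo_ne {X : Type*} [TopologicalSpace X] {h : X → X} {σ : ℝ → X}
    (hσ : IsTranslationArc h σ) (w : X) : ∃ u ∈ Ioo (0 : ℝ) 1, σ u ≠ w := by
  by_cases hw : σ (1 / 2) = w
  · refine ⟨1 / 3, by norm_num, fun heq => ?_⟩
    have := hσ.injOn (by norm_num) (by norm_num) (hw.trans heq.symm)
    norm_num at this
  · exact ⟨1 / 2, by norm_num, hw⟩

lemma exists_isFreeFor_ball {X : Type*} [MetricSpace X] {h : X → X} {σ : ℝ → X}
    (hσ : IsTranslationArc h σ) (hc : Continuous h) (hi : Function.Injective h) {W : Set X}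
    (hWo : IsOpen W) (hσW : MapsTo σ (Icc 0 1) W) (hfix : ∀ z ∈ W, h z ≠ z) :
    ∃ u ∈ Ioo (0 : ℝ) 1, ∃ r > 0, ball (σ u) r ⊆ W ∧ IsFreeFor h σ (ball (σ u) r) := by
  obtain ⟨u, hu, hne⟩ := hσ.exists_mem_Ioo_ne (h (σ 1))
  have huI := Ioo_subset_Icc_self hu
  have harc : IsCompact (σ '' Icc 0 1) := isCompact_Icc.image_of_continuousOn hσ.continuousOn
  have hmap_arc : σ u ∉ h '' (σ '' Icc 0 1) := by
    rintro ⟨_, ⟨t, ht, rfl⟩, heq⟩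
    rcases ht.2.lt_or_eq with hlt | rfl
    · exact hu.2.ne (hσ.eq_one huI ⟨ht.1, hlt⟩ heq.symm)
    · exact hne heq.symm
  have hne_arc : h (σ u) ∉ σ '' Icc 0 1 := by
    rintro ⟨t, ht, heq⟩
    obtain rfl := hσ.eq_one ht (Ioo_subset_Ico_self hu) heq
    rw [← hσ.map_zero] at heq
    exact hu.1.ne (hσ.injOn ⟨le_rfl, zero_le_one⟩ huI (hi heq))
  obtain ⟨U, V, hU, hV, hcU, hcV, hUV⟩ := t2_separation (hfix _ (hσW huI)).symm
  obtain ⟨r, hr, hball⟩ := Metric.eventually_nhds_iff_ball.1 <|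
    (hWo.eventually_mem (hσW huI)).and <|
    ((harc.image hc).isClosed.isOpen_compl.eventually_mem hmap_arc).and <|
    ((harc.isClosed.isOpen_compl.preimage hc).eventually_mem hne_arc).and <|
    (hU.inter (hV.preimage hc)).eventually_mem ⟨hcU, hcV⟩
  refine ⟨u, hu, r, hr, fun z hz => (hball z hz).1, ⟨fun ht hmem => ?_, fun hz t ht heq => ?_,
    fun hz hmem => ?_⟩⟩
  · exact (hball _ hmem).2.1 (mem_image_of_mem h (mem_image_of_mem σ ht))
  · exact (hball _ hz).2.2.1 ⟨t, ht, heq.symm⟩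
  · exact Set.disjoint_left.1 hUV (hball _ hmem).2.2.2.1 (hball _ hz).2.2.2.2

lemma perturb {X : Type*} [TopologicalSpace X] {h : X → X} {σ : ℝ → X}
    (hσ : IsTranslationArc h σ) {B : Set X} (hB : IsFreeFor h σ B) {φ ψ : X ≃ₜ X}
    (hφ : IsSupportedIn φ B) (hψ : IsSupportedIn ψ B) : IsTranslationArc (φ ∘ h ∘ ψ) σ := by
  have h0I : (0 : ℝ) ∈ Icc (0 : ℝ) 1 := ⟨le_rfl, zero_le_one⟩
  have h0B : σ 0 ∉ B := fun hmem => hB.map_ne_arc hmem ⟨zero_le_one, le_rfl⟩ hσ.map_zero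
  refine ⟨hσ.continuousOn, hσ.injOn, ?_, fun {t u} ht hu heq => ?_⟩
  · rw [Function.comp_apply, Function.comp_apply, hψ _ h0B, hφ _ (hB.map_arc_notMem h0I),
      hσ.map_zero]
  · by_cases huB : σ u ∈ B
    · have hmem := hψ.mapsTo huB
      rw [Function.comp_apply, Function.comp_apply, hφ _ (hB.map_notMem hmem)] at heq
      exact absurd heq.symm (hB.map_ne_arc hmem ht)
    · rw [Function.comp_apply, Function.comp_apply, hψ _ huB,
        hφ _ (hB.map_arc_notMem (Ico_subset_Icc_self hu))] at heq
      exact hσ.eq_one ht hu heq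

end IsTranslationArc

lemma perturbation_ne_self {X : Type*} [TopologicalSpace X] {h : X → X} {B D : Set X}
    (hB : ∀ z ∈ B, h z ∉ B) (hfix : ∀ z ∈ D, h z ≠ z) {φ ψ : X ≃ₜ X}
    (hφ : IsSupportedIn φ B) (hψ : IsSupportedIn ψ B) {z : X} (hz : z ∈ D) :
    (φ ∘ h ∘ ψ) z ≠ z := by
  intro heq
  have heq' : h (ψ z) = φ.symm z := (φ.symm_apply_eq.2 heq.symm).symm
  by_cases hzB : z ∈ B
  · exact hB _ (hψ.mapsTo hzB) (heq' ▸ hφ.symm.mapsTo hzB)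
  · rw [hψ z hzB, hφ.symm z hzB] at heq'
    exact hfix z hz heq'

/-- Moving `c` to `b` before and `h^n(b)` back to `c` after applying `h` closes up the orbit of `b`,
provided that orbit stays out of the supports in between. -/
lemma isPeriodicPt_perturbation {X : Type*} [TopologicalSpace X] {h : X → X} {B : Set X}
    {φ ψ : X ≃ₜ X} (hφ : IsSupportedIn φ B) (hψ : IsSupportedIn ψ B) {b c : X} {n : ℕ}
    (hn : 1 ≤ n) (hψc : ψ c = b) (hφb : φ (h^[n] b) = c)
    (hout : ∀ j, 1 ≤ j → j < n → h^[j] b ∉ B) : Function.IsPeriodicPt (φ ∘ h ∘ ψ) n c := by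
  have hiter (j : ℕ) (hj : j < n) : ψ ((φ ∘ h ∘ ψ)^[j] c) = h^[j] b := by
    induction j with
    | zero => simpa using hψc
    | succ j ih =>
      have hj' := hout (j + 1) (by omega) hj
      rw [Function.iterate_succ_apply', Function.comp_apply, Function.comp_apply, ih (by omega),
        ← Function.iterate_succ_apply' h, hφ _ hj', hψ _ hj']
  obtain ⟨m, rfl⟩ := Nat.exists_eq_add_of_le' hn
  rw [Function.IsPeriodicPt, Function.IsFixedPt, Function.iterate_succ_apply', Function.comp_apply,
    Function.comp_apply, hiter m (by omega), ← Function.iterate_succ_apply' h, hφb]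

lemma exists_first_return_to {X : Type*} {h : X → X} {B : Set X}
    (hB : ∃ n : ℕ, 1 ≤ n ∧ ∃ b ∈ B, h^[n] b ∈ B) :
    ∃ n : ℕ, 1 ≤ n ∧ ∃ b ∈ B, h^[n] b ∈ B ∧ ∀ j, 1 ≤ j → j < n → h^[j] b ∉ B := by
  classical
  obtain ⟨hn, b, hb, hnb⟩ := Nat.find_spec hB
  exact ⟨_, hn, b, hb, hnb, fun j hj hjn hmem => Nat.find_min hB hjn ⟨hj, b, hb, hmem⟩⟩

/-- Without fixed points there is a translation arc in `W`; a small perturbation of `h` makes one of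
its points periodic, which Brouwer's lemma forbids. -/
theorem exists_fixedPoint_of_nonwandering {h : ℂ → ℂ} (hc : Continuous h)
    (hi : Function.Injective h) {M : ℝ} (hM : ∀ z, ‖h z - z‖ ≤ M) {D : Set ℂ}
    (hDs : IsSimplyConnected D) (hDo : IsOpen D) (hD : MapsTo h D D) {W : Set ℂ} (hWD : W ⊆ D)
    (hWo : IsOpen W) (hWc : IsConnected W) (hW : MapsTo h W W)
    (hnw : ∀ V ⊆ W, IsOpen V → V.Nonempty → ∃ n : ℕ, 1 ≤ n ∧ ∃ b ∈ V, h^[n] b ∈ V) :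
    ∃ z ∈ D, h z = z := by
  by_contra! hfix
  have hfixW (z : ℂ) (hz : z ∈ W) : h z ≠ z := hfix z (hWD hz)
  obtain ⟨x, hx⟩ := hWc.nonempty
  obtain ⟨T, a, ha, rfl, haT⟩ := exists_isSimpleArc hWo hWc.isPreconnected hx (hW hx)
  obtain ⟨σ, hσ, hσW⟩ := ha.exists_isTranslationArc hc hfixW haT
  obtain ⟨u, hu, r, hr, hrW, hfree⟩ := hσ.exists_isFreeFor_ball hc hi hWo hσW hfixW
  obtain ⟨n, hn, b, hb, hnb, hout⟩ :=
    exists_first_return_to (hnw _ hrW isOpen_ball ⟨_, mem_ball_self hr⟩)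
  obtain ⟨ψ, hψb, hψ⟩ := exists_isSupportedIn_ball hb
  obtain ⟨φ, hφb, hφ⟩ := exists_isSupportedIn_ball hnb
  let g : ℂ → ℂ := φ.symm ∘ h ∘ ψ
  have hgc : Continuous g := φ.symm.continuous.comp (hc.comp ψ.continuous)
  have hgi : Function.Injective g := φ.symm.injective.comp (hi.comp ψ.injective)
  have hgM (z : ℂ) : ‖g z - z‖ ≤ 2 * r + M + 2 * r := by
    have hφM := dist_eq_norm (φ.symm (h (ψ z))) _ ▸ hφ.symm.dist_le hr.le (h (ψ z))
    have hψM := dist_eq_norm (ψ z) _ ▸ hψ.dist_le hr.le z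
    calc ‖g z - z‖ = ‖φ.symm (h (ψ z)) - h (ψ z) + (h (ψ z) - ψ z) + (ψ z - z)‖ := by
          simp [g]
      _ ≤ 2 * r + M + 2 * r := norm_add₃_le.trans (by gcongr; exact hM _)
  have hgD : MapsTo g D D := (hφ.symm.mapsTo_of_subset (hrW.trans hWD)).comp
    (hD.comp (hψ.mapsTo_of_subset (hrW.trans hWD)))
  have hgσ : IsTranslationArc g σ := hσ.perturb hfree hφ.symm hψ
  have hinj := (hgσ.isTranslationRay hgc hgi).injOn_Ici hgc hgi hgM hDs hDo hgD
    (fun z hz => perturbation_ne_self (fun w hw => hfree.map_notMem hw) hfix hφ.symm hψ hz)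
    (mapsTo_dynamicExtension hgD fun t ht => hWD (hσW ht))
  have hper : Function.IsPeriodicPt g n (σ u) := isPeriodicPt_perturbation hφ.symm hψ hn hψb
    (φ.symm_apply_eq.2 hφb.symm) hout
  have hun := dynamicExtension_add_nat (h := g) (σ := σ) n hu.1.le
  rw [dynamicExtension_eqOn hgσ.map_zero (Ioo_subset_Icc_self hu), hper.eq,
    ← dynamicExtension_eqOn hgσ.map_zero (Ioo_subset_Icc_self hu)] at hun
  have : u + n = u := hinj (by simp only [mem_Ici]; linarith [hu.1, n.cast_nonneg (α := ℝ)])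
    (mem_Ici.2 hu.1.le) hun
  simp at this
  omega

/-! ### Simple connectivity of plane domains without holes -/

/-- Cells and edges are abstract here: an edge in `B` may be assigned a new value, and
prescribing its value suitably makes any one incident cell flat. -/
theorem exists_modification_flat {Edge Cell Γ : Type*} [DecidableEq Edge]
    {Incident : Edge → Cell → Prop} {Flat : (Edge → Γ) → Cell → Prop}
    (hupdate : ∀ c e x q, ¬ Incident e q → Flat c q → Flat (Function.update c e x) q)
    (hfill : ∀ c e q, Incident e q → ∃ x, Flat (Function.update c e x) q)
    {B : Set Edge} {G : Set Cell} {c : Edge → Γ} (hc : ∀ q ∈ G, Flat c q)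
    (hBG : ∀ e ∈ B, ∀ q ∈ G, ¬ Incident e q) (S : Finset Cell)
    (hS : ∀ S' ⊆ S, S'.Nonempty →
      ∃ e ∈ B, ∃ q ∈ S', Incident e q ∧ ∀ q' ∈ S', Incident e q' → q' = q) :
    ∃ c' : Edge → Γ, (∀ e ∉ B, c' e = c e) ∧ ∀ q, q ∈ G ∨ q ∈ S → Flat c' q := by
  classical
  induction S using Finset.strongInduction with
  | H S ih =>
    rcases S.eq_empty_or_nonempty with rfl | hne
    · exact ⟨c, fun _ _ => rfl, fun q hq => hc q (by simpa using hq)⟩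
    obtain ⟨e, he, q, hq, heq, huniq⟩ := hS S subset_rfl hne
    obtain ⟨c', hc', hflat⟩ := ih _ (Finset.erase_ssubset hq)
      fun S' hS' => hS S' (hS'.trans (Finset.erase_subset _ _))
    obtain ⟨x, hx⟩ := hfill c' e q heq
    refine ⟨Function.update c' e x, fun e' he' => ?_, fun q' hq' => ?_⟩
    · rw [Function.update_of_ne (ne_of_mem_of_not_mem he he').symm, hc' e' he']
    · rcases eq_or_ne q' q with rfl | hne
      · exact hx
      · exact hupdate c' e x q'
          (fun h => hq'.elim (fun hG => hBG e he q' hG h) fun hS => hne (huniq q' hS h))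
          (hflat q' (hq'.imp_right (Finset.mem_erase.2 ⟨hne, ·⟩)))

theorem exists_potential_of_flat {Γ : Type*} [Group Γ] {H V : ℕ → ℕ → Γ} {N : ℕ}
    (hflat : ∀ i < N, ∀ j < N, H i j * V (i + 1) j = V i j * H i (j + 1)) :
    ∃ φ : ℕ → ℕ → Γ, (∀ i < N, ∀ j < N, φ i j * H i j = φ (i + 1) j) ∧
      ∀ i j, φ i j * V i j = φ i (j + 1) := by
  let φ : ℕ → ℕ → Γ := fun i j =>
    ((List.range i).map fun k => H k 0).prod * ((List.range j).map (V i)).prod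
  have hV (i j) : φ i j * V i j = φ i (j + 1) := by
    simp only [φ, List.prod_range_succ, mul_assoc]
  refine ⟨φ, fun i hi j hj => ?_, hV⟩
  induction j with
  | zero => simp [φ, List.prod_range_succ]
  | succ j ih =>
    rw [← hV, mul_assoc, ← hflat i hi j (by lia), ← mul_assoc, ih (by lia), hV]

/-- The closed unit square of the integer grid with lower left corner `q`. -/
def gridSquare (q : ℤ × ℤ) : Set ℂ := Icc (q.1 : ℝ) (q.1 + 1) ×ℂ Icc (q.2 : ℝ) (q.2 + 1)

theorem mem_gridSquare {q : ℤ × ℤ} {z : ℂ} : z ∈ gridSquare q ↔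
    ((q.1 : ℝ) ≤ z.re ∧ z.re ≤ q.1 + 1) ∧ (q.2 : ℝ) ≤ z.im ∧ z.im ≤ q.2 + 1 :=
  Iff.rfl

theorem convex_gridSquare (q : ℤ × ℤ) : Convex ℝ (gridSquare q) :=
  ((convex_Icc _ _).linear_preimage Complex.reLm).inter
    ((convex_Icc _ _).linear_preimage Complex.imLm)

theorem isCompact_gridSquare (q : ℤ × ℤ) : IsCompact (gridSquare q) :=
  isCompact_Icc.reProdIm isCompact_Icc

theorem mem_gridSquare_floor (z : ℂ) : z ∈ gridSquare (⌊z.re⌋, ⌊z.im⌋) :=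
  ⟨⟨Int.floor_le _, (Int.lt_floor_add_one _).le⟩, Int.floor_le _, (Int.lt_floor_add_one _).le⟩

theorem locallyFinite_gridSquare : LocallyFinite gridSquare := fun z => by
  refine ⟨ball z 1, ball_mem_nhds z one_pos,
    ((finite_Icc ⌈z.re - 2⌉ ⌊z.re + 1⌋).prod (finite_Icc ⌈z.im - 2⌉ ⌊z.im + 1⌋)).subset ?_⟩
  rintro ⟨i, j⟩ ⟨w, ⟨⟨hi, hi'⟩, hj, hj'⟩, hw⟩
  rw [mem_ball, dist_eq_norm] at hw
  have hre := abs_lt.1 ((Complex.abs_re_le_norm (w - z)).trans_lt hw)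
  have him := abs_lt.1 ((Complex.abs_im_le_norm (w - z)).trans_lt hw)
  simp only [Complex.sub_re, Complex.sub_im] at hre him hi hi' hj hj'
  refine ⟨⟨Int.ceil_le.2 ?_, Int.le_floor.2 ?_⟩, Int.ceil_le.2 ?_, Int.le_floor.2 ?_⟩ <;>
    simp only <;> linarith

theorem isClosed_biUnion_gridSquare (A : Set (ℤ × ℤ)) : IsClosed (⋃ q ∈ A, gridSquare q) := by
  rw [biUnion_eq_iUnion]
  exact (locallyFinite_gridSquare.comp_injective Subtype.val_injective).isClosed_iUnion
    fun q => (isCompact_gridSquare q).isClosed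

/-- The point `i + j I`, a vertex of the integer grid. -/
def gridVertex (i j : ℤ) : ℂ := ⟨i, j⟩

theorem gridVertex_mem_gridSquare {i j : ℤ} {q : ℤ × ℤ} :
    gridVertex i j ∈ gridSquare q ↔ (q.1 ≤ i ∧ i ≤ q.1 + 1) ∧ q.2 ≤ j ∧ j ≤ q.2 + 1 := by
  simp only [mem_gridSquare, gridVertex]
  norm_cast

/-- A unit edge of the integer grid, named by its left or lower endpoint. -/
inductive GridEdge
  | horizontal (i j : ℤ)
  | vertical (i j : ℤ)

namespace GridEdge

/-- The left or lower endpoint of an edge. -/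
def source : GridEdge → ℂ
  | horizontal i j => gridVertex i j
  | vertical i j => gridVertex i j

/-- The right or upper endpoint of an edge. -/
def target : GridEdge → ℂ
  | horizontal i j => gridVertex (i + 1) j
  | vertical i j => gridVertex i (j + 1)

/-- The edge `e` is one of the four sides of the grid square with lower left corner `q`. -/
def Incident : GridEdge → ℤ × ℤ → Prop
  | horizontal i j, q => q.1 = i ∧ (q.2 = j ∨ q.2 + 1 = j)
  | vertical i j, q => q.2 = j ∧ (q.1 = i ∨ q.1 + 1 = i)

theorem Incident.segment_subset {e : GridEdge} {q : ℤ × ℤ} (h : e.Incident q) :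
    segment ℝ e.source e.target ⊆ gridSquare q := by
  apply (convex_gridSquare q).segment_subset <;> cases e <;>
    simp only [Incident, source, target, gridVertex_mem_gridSquare] at h ⊢ <;> lia

theorem mem_segment_horizontal {i j : ℤ} {z : ℂ} (hre : z.re ∈ Icc (i : ℝ) (i + 1))
    (him : z.im = j) :
    z ∈ segment ℝ (horizontal i j).source (horizontal i j).target := by
  refine ⟨i + 1 - z.re, z.re - i, by linarith [hre.2], by linarith [hre.1], by ring, ?_⟩
  apply Complex.ext <;> simp [source, target, gridVertex, him] <;> ring

theorem mem_segment_vertical {i j : ℤ} {z : ℂ} (hre : z.re = i)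
    (him : z.im ∈ Icc (j : ℝ) (j + 1)) :
    z ∈ segment ℝ (vertical i j).source (vertical i j).target := by
  refine ⟨j + 1 - z.im, z.im - j, by linarith [him.2], by linarith [him.1], by ring, ?_⟩
  apply Complex.ext <;> simp [source, target, gridVertex, hre] <;> ring

theorem exists_mem_segment_of_mem_gridSquare_inter {q q' : ℤ × ℤ} (hne : q ≠ q')
    (hadj : q.1 = q'.1 ∨ q.2 = q'.2) {z : ℂ} (hz : z ∈ gridSquare q) (hz' : z ∈ gridSquare q') :
    ∃ e : GridEdge, z ∈ segment ℝ e.source e.target ∧ e.Incident q ∧ e.Incident q' ∧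
      ∀ p, e.Incident p → p = q ∨ p = q' := by
  wlog hlt : q.1 < q'.1 ∨ q.2 < q'.2 generalizing q q'
  · obtain ⟨e, hze, hq', hq, hp⟩ := this hne.symm (hadj.imp Eq.symm Eq.symm) hz' hz
      (by rw [Ne, Prod.ext_iff] at hne; lia)
    exact ⟨e, hze, hq, hq', fun p h => (hp p h).symm⟩
  obtain ⟨i, j⟩ := q
  obtain ⟨i', j'⟩ := q'
  obtain ⟨⟨-, hi⟩, -, hj⟩ := mem_gridSquare.1 hz
  obtain ⟨⟨hi', -⟩, hj', -⟩ := mem_gridSquare.1 hz'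
  have hle : i' ≤ i + 1 := by exact_mod_cast hi'.trans hi
  have hle' : j' ≤ j + 1 := by exact_mod_cast hj'.trans hj
  rcases hadj with rfl | rfl
  · obtain rfl : j' = j + 1 := by lia
    refine ⟨horizontal i (j + 1), mem_segment_horizontal hz.1 ?_, ?_⟩
    · exact le_antisymm (by exact_mod_cast hj) hj'
    · simp only [Incident, Prod.ext_iff, Prod.forall]; lia
  · obtain rfl : i' = i + 1 := by lia
    refine ⟨vertical (i + 1) j, mem_segment_vertical ?_ hz.2, ?_⟩
    · exact le_antisymm (by exact_mod_cast hi) hi'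
    · simp only [Incident, Prod.ext_iff, Prod.forall]; lia

/-- The oriented product of `c` around the grid square `q` is trivial. -/
def IsFlatAt {Γ : Type*} [Mul Γ] (c : GridEdge → Γ) (q : ℤ × ℤ) : Prop :=
  c (horizontal q.1 q.2) * c (vertical (q.1 + 1) q.2) =
    c (vertical q.1 q.2) * c (horizontal q.1 (q.2 + 1))

section Flat

variable {Γ : Type*} [Group Γ] [DecidableEq GridEdge] {c : GridEdge → Γ} {e : GridEdge}
  {q : ℤ × ℤ}

theorem IsFlatAt.update (hc : IsFlatAt c q) (he : ¬ e.Incident q) (x : Γ) :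
    IsFlatAt (Function.update c e x) q := by
  have hne {e'} (he' : e'.Incident q) : Function.update c e x e' = c e' :=
    Function.update_of_ne (by rintro rfl; exact he he') _ _
  simpa only [IsFlatAt, hne (e' := horizontal q.1 q.2) ⟨rfl, .inl rfl⟩,
    hne (e' := vertical (q.1 + 1) q.2) ⟨rfl, .inr rfl⟩,
    hne (e' := vertical q.1 q.2) ⟨rfl, .inl rfl⟩,
    hne (e' := horizontal q.1 (q.2 + 1)) ⟨rfl, .inr rfl⟩] using hc

theorem Incident.exists_isFlatAt_update (he : e.Incident q) (c : GridEdge → Γ) :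
    ∃ x, IsFlatAt (Function.update c e x) q := by
  obtain ⟨i, j⟩ := q
  simp only [IsFlatAt]
  rcases e with ⟨k, l⟩ | ⟨k, l⟩ <;> obtain ⟨rfl, rfl | rfl⟩ := he
  · exact ⟨c (vertical i j) * c (horizontal i (j + 1)) * (c (vertical (i + 1) j))⁻¹,
      by simp [Function.update]⟩
  · exact ⟨(c (vertical i j))⁻¹ * (c (horizontal i j) * c (vertical (i + 1) j)),
      by simp [Function.update]⟩
  · exact ⟨c (horizontal i j) * c (vertical (i + 1) j) * (c (horizontal i (j + 1)))⁻¹,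
      by simp [Function.update]⟩
  · exact ⟨(c (horizontal i j))⁻¹ * (c (vertical i j) * c (horizontal i (j + 1))),
      by simp [Function.update]⟩

end Flat

end GridEdge

/-- Every point of the complement of `D` lies in an unbounded connected subset of the complement.
A connected open subset of the plane with this property is simply connected. -/
def HasNoHoles {X : Type*} [PseudoMetricSpace X] (D : Set X) : Prop :=
  ∀ z ∉ D, ∃ Z ⊆ Dᶜ, z ∈ Z ∧ IsPreconnected Z ∧ ¬ Bornology.IsBounded Z

theorem HasNoHoles.preimage {X Y : Type*} [PseudoMetricSpace X] [PseudoMetricSpace Y] {D : Set Y}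
    (hD : HasNoHoles D) {T : X → Y} {S : Y → X} {C : NNReal} (hT : LipschitzWith C T)
    (hS : Continuous S) (hTS : ∀ y, T (S y) = y) (hST : ∀ x, S (T x) = x) :
    HasNoHoles (T ⁻¹' D) := fun x hx => by
  obtain ⟨Z, hZD, hxZ, hZc, hZ⟩ := hD (T x) hx
  refine ⟨S '' Z, ?_, ⟨_, hxZ, hST x⟩, hZc.image S hS.continuousOn, fun h => hZ ?_⟩
  · rintro _ ⟨z, hz, rfl⟩ hzD
    exact hZD hz (hTS z ▸ hzD)
  · simpa [image_image, hTS] using hT.isBounded_image h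

/-- An unbounded connected subset of `Dᶜ` through a square of `S` must leave the union of `S`. -/
theorem HasNoHoles.exists_separating_gridEdge {D : Set ℂ} (hD : HasNoHoles D)
    {S : Finset (ℤ × ℤ)} (hne : S.Nonempty)
    (hS : ∀ q ∈ S, ¬ gridSquare q ⊆ D) :
    ∃ e : GridEdge, ¬ segment ℝ e.source e.target ⊆ D ∧
      ∃ q ∈ S, e.Incident q ∧ ∀ q' ∈ S, e.Incident q' → q' = q := by
  obtain ⟨q₀, hq₀⟩ := hne
  obtain ⟨z, hz, hzD⟩ := not_subset.1 (hS q₀ hq₀)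
  obtain ⟨Z, hZD, hzZ, hZc, hZu⟩ := hD z hzD
  set A : Set ℂ := ⋃ q ∈ (S : Set (ℤ × ℤ)), gridSquare q
  set B : Set ℂ := ⋃ q ∈ (S : Set (ℤ × ℤ))ᶜ, gridSquare q
  have hcov : Z ⊆ A ∪ B := fun w _ => by
    rw [← biUnion_union, union_compl_self]
    exact mem_biUnion (mem_univ _) (mem_gridSquare_floor w)
  have hAb : Bornology.IsBounded A :=
    (Bornology.isBounded_biUnion S.finite_toSet).2 fun q _ => (isCompact_gridSquare q).isBounded
  obtain ⟨w, hw, hwB⟩ := not_subset.1 fun h : Z ⊆ A => hZu (hAb.subset h)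
  obtain ⟨w, hwZ, hwA, hwB⟩ := isPreconnected_closed_iff.1 hZc A B (isClosed_biUnion_gridSquare _)
    (isClosed_biUnion_gridSquare _) hcov ⟨z, hzZ, mem_biUnion hq₀ hz⟩
    ⟨w, hw, (hcov hw).resolve_left hwB⟩
  obtain ⟨q, hq, hwq⟩ := mem_iUnion₂.1 hwA
  obtain ⟨q', hq', hwq'⟩ := mem_iUnion₂.1 hwB
  suffices ∃ p ∈ S, ∃ p' ∉ S, (p.1 = p'.1 ∨ p.2 = p'.2) ∧ w ∈ gridSquare p ∧ w ∈ gridSquare p' by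
    obtain ⟨p, hp, p', hp', hadj, hwp, hwp'⟩ := this
    obtain ⟨e, hwe, hep, -, huniq⟩ := GridEdge.exists_mem_segment_of_mem_gridSquare_inter
      (ne_of_mem_of_not_mem hp hp') hadj hwp hwp'
    exact ⟨e, fun h => hZD hwZ (h hwe), p, hp, hep, fun r hr her =>
      (huniq r her).resolve_right (ne_of_mem_of_not_mem hr hp')⟩
  -- The corner square `(q.1, q'.2)` also contains `w` and is adjacent to both `q` and `q'`.
  by_cases h : (q.1, q'.2) ∈ S
  · exact ⟨_, h, q', hq', .inr rfl, ⟨hwq.1, hwq'.2⟩, hwq'⟩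
  · exact ⟨q, hq, _, h, .inl rfl, hwq, ⟨hwq.1, hwq'.2⟩⟩

/-- The multiplicative cocycle identity for `g`, required on convex subsets of `D` only: `g a b`
is thought of as the increment along the segment from `a` to `b`. -/
def IsLocalCocycle {V Γ : Type*} [AddCommGroup V] [Module ℝ V] [Mul Γ] (D : Set V)
    (g : V → V → Γ) : Prop :=
  ∀ ⦃K⦄, K ⊆ D → Convex ℝ K → ∀ a ∈ K, ∀ b ∈ K, ∀ c ∈ K, g a b * g b c = g a c

/-- `Φ` is a primitive of `g` between `a` and `b`. -/
def IsPotentialAt {V Γ : Type*} [Mul Γ] (g : V → V → Γ) (Φ : V → Γ) (a b : V) : Prop :=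
  Φ a * g a b = Φ b

section Cocycle

variable {V Γ : Type*} [AddCommGroup V] [Module ℝ V] [Group Γ] {D K : Set V} {g : V → V → Γ}
  {Φ : V → Γ} {a b c : V}

theorem IsLocalCocycle.self_eq_one (hg : IsLocalCocycle D g) (ha : a ∈ D) : g a a = 1 :=
  mul_eq_left.1 (hg (singleton_subset_iff.2 ha) (convex_singleton a) a rfl a rfl a rfl)

theorem IsPotentialAt.trans (hg : IsLocalCocycle D g) (hKD : K ⊆ D) (hK : Convex ℝ K)
    (ha : a ∈ K) (hb : b ∈ K) (hc : c ∈ K) (hab : IsPotentialAt g Φ a b)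
    (hbc : IsPotentialAt g Φ b c) : IsPotentialAt g Φ a c := by
  rw [IsPotentialAt, ← hg hKD hK a ha b hb c hc, ← mul_assoc, hab, hbc]

theorem IsPotentialAt.symm (hg : IsLocalCocycle D g) (hKD : K ⊆ D) (hK : Convex ℝ K)
    (ha : a ∈ K) (hb : b ∈ K) (hab : IsPotentialAt g Φ a b) : IsPotentialAt g Φ b a := by
  rw [IsPotentialAt, ← hab, mul_assoc, hg hKD hK a ha b hb a ha, hg.self_eq_one (hKD ha), mul_one]

end Cocycle

section Potential

variable {D : Set ℂ} {Γ : Type*} [Group Γ] {g : ℂ → ℂ → Γ}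

theorem IsLocalCocycle.isFlatAt (hg : IsLocalCocycle D g) {q : ℤ × ℤ} (hq : gridSquare q ⊆ D) :
    GridEdge.IsFlatAt (fun e => g e.source e.target) q := by
  have hmem {i j} := gridVertex_mem_gridSquare (i := i) (j := j) (q := q)
  have h := hg hq (convex_gridSquare q)
  exact (h _ (hmem.2 (by lia)) _ (hmem.2 (by lia)) _ (hmem.2 (by lia))).trans
    (h _ (hmem.2 (by lia)) _ (hmem.2 (by lia)) _ (hmem.2 (by lia))).symm

/-- Two integers at distance at most one are joined by at most one step. -/
theorem IsPotentialAt.of_step {V : Type*} [AddCommGroup V] [Module ℝ V] {D B : Set V}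
    {g : V → V → Γ} {Φ : V → Γ} (hg : IsLocalCocycle D g) (hBD : B ⊆ D) (hB : Convex ℝ B)
    {v : ℕ → V} {N : ℕ} (hstep : ∀ i < N, segment ℝ (v i) (v (i + 1)) ⊆ D →
      IsPotentialAt g Φ (v i) (v (i + 1)))
    {i i' : ℕ} (hi : i < N) (hi' : i' < N) (hle : i ≤ i' + 1) (hle' : i' ≤ i + 1)
    (hvi : v i ∈ B) (hvi' : v i' ∈ B) : IsPotentialAt g Φ (v i) (v i') := by
  wlog hlt : i ≤ i' generalizing i i'
  · exact (this hi' hi hle' hle hvi' hvi (by lia)).symm hg hBD hB hvi' hvi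
  obtain rfl | rfl : i' = i ∨ i' = i + 1 := by lia
  · rw [IsPotentialAt, hg.self_eq_one (hBD hvi), mul_one]
  · exact hstep i hi ((hB.segment_subset hvi hvi').trans hBD)

theorem abs_floor_sub_le_two {x y : ℝ} (hx : 0 ≤ x) (hy : 0 ≤ y) (hxy : |x - y| < 1) :
    |(⌊x⌋₊ : ℝ) - x| ≤ 2 ∧ |(⌊y⌋₊ : ℝ) - x| ≤ 2 ∧ ⌊x⌋₊ ≤ ⌊y⌋₊ + 1 ∧ ⌊y⌋₊ ≤ ⌊x⌋₊ + 1 := by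
  rw [abs_lt] at hxy
  have h₁ := Nat.floor_le hx
  have h₂ := Nat.lt_floor_add_one x
  have h₃ := Nat.floor_le hy
  have h₄ := Nat.lt_floor_add_one y
  refine ⟨abs_le.2 ⟨?_, ?_⟩, abs_le.2 ⟨?_, ?_⟩, ?_, ?_⟩ <;> try linarith
  · exact Nat.lt_succ_iff.1 (by exact_mod_cast (by linarith : (⌊x⌋₊ : ℝ) < ⌊y⌋₊ + 1 + 1))
  · exact Nat.lt_succ_iff.1 (by exact_mod_cast (by linarith : (⌊y⌋₊ : ℝ) < ⌊x⌋₊ + 1 + 1))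

theorem IsLocalCocycle.exists_potential_on_vertices (hg : IsLocalCocycle D g) (hD : HasNoHoles D)
    (N : ℕ) :
    ∃ φ : ℕ → ℕ → Γ, ∀ i < N, ∀ j < N,
      (segment ℝ (gridVertex i j) (gridVertex (i + 1) j) ⊆ D →
        φ i j * g (gridVertex i j) (gridVertex (i + 1) j) = φ (i + 1) j) ∧
      (segment ℝ (gridVertex i j) (gridVertex i (j + 1)) ⊆ D →
        φ i j * g (gridVertex i j) (gridVertex i (j + 1)) = φ i (j + 1)) := by
  classical
  let S : Finset (ℤ × ℤ) :=
    {q ∈ Finset.Ico (0 : ℤ) N ×ˢ Finset.Ico (0 : ℤ) N | ¬ gridSquare q ⊆ D}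
  obtain ⟨c, hc, hflat⟩ := exists_modification_flat (Flat := GridEdge.IsFlatAt)
    (c := fun e => g e.source e.target) (B := {e | ¬ segment ℝ e.source e.target ⊆ D})
    (G := {q | gridSquare q ⊆ D}) (fun c e x q he hc => hc.update he x)
    (fun c e q he => he.exists_isFlatAt_update c) (fun q hq => hg.isFlatAt hq)
    (fun e he q hq h => he (h.segment_subset.trans hq)) S
    fun S' hS' hne => hD.exists_separating_gridEdge hne fun q hq =>
      (Finset.mem_filter.1 (hS' hq)).2
  obtain ⟨φ, hH, hV⟩ := exists_potential_of_flat (N := N)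
    (H := fun i j => c (.horizontal i j)) (V := fun i j => c (.vertical i j)) fun i hi j hj => by
      have hq : ((i : ℤ), (j : ℤ)) ∈ {q | gridSquare q ⊆ D} ∨ ((i : ℤ), (j : ℤ)) ∈ S := by
        by_cases h : gridSquare (i, j) ⊆ D
        · exact .inl h
        · exact .inr (by simp [S, h, hi, hj])
      exact_mod_cast hflat _ hq
  refine ⟨φ, fun i hi j hj => ⟨fun h => ?_, fun h => ?_⟩⟩
  · rw [← hH i hi j hj, hc (.horizontal i j) (not_not.2 h)]; rfl
  · rw [← hV i j, hc (.vertical i j) (not_not.2 h)]; rfl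

theorem IsLocalCocycle.exists_isPotentialAt_of_grid (hg : IsLocalCocycle D g) (hD : HasNoHoles D)
    (N : ℕ) :
    ∃ Φ : ℂ → Γ, (∀ z : ℂ, gridVertex ⌊z.re⌋₊ ⌊z.im⌋₊ ∈ D →
        IsPotentialAt g Φ (gridVertex ⌊z.re⌋₊ ⌊z.im⌋₊) z) ∧
      ∀ i < N, ∀ j < N,
        (segment ℝ (gridVertex i j) (gridVertex (i + 1) j) ⊆ D →
          IsPotentialAt g Φ (gridVertex i j) (gridVertex (i + 1) j)) ∧
        (segment ℝ (gridVertex i j) (gridVertex i (j + 1)) ⊆ D →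
          IsPotentialAt g Φ (gridVertex i j) (gridVertex i (j + 1))) := by
  obtain ⟨φ, hφ⟩ := hg.exists_potential_on_vertices hD N
  let Φ : ℂ → Γ := fun z => φ ⌊z.re⌋₊ ⌊z.im⌋₊ * g (gridVertex ⌊z.re⌋₊ ⌊z.im⌋₊) z
  have hvertex {i j : ℕ} (h : gridVertex i j ∈ D) : Φ (gridVertex i j) = φ i j := by
    have hi : ⌊(gridVertex i j).re⌋₊ = i := by simp [gridVertex]
    have hj : ⌊(gridVertex i j).im⌋₊ = j := by simp [gridVertex]
    simp only [Φ, hi, hj, hg.self_eq_one h, mul_one]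
  refine ⟨Φ, fun z hz => by rw [IsPotentialAt, hvertex hz], fun i hi j hj =>
    ⟨fun h => ?_, fun h => ?_⟩⟩
  · have := hvertex (i := i + 1) (j := j) (by exact_mod_cast h (right_mem_segment ℝ _ _))
    rw [IsPotentialAt, hvertex (h (left_mem_segment ℝ _ _)), (hφ i hi j hj).1 h, ← this]
    norm_cast
  · have := hvertex (i := i) (j := j + 1) (by exact_mod_cast h (right_mem_segment ℝ _ _))
    rw [IsPotentialAt, hvertex (h (left_mem_segment ℝ _ _)), (hφ i hi j hj).2 h, ← this]
    norm_cast

theorem IsLocalCocycle.exists_potential_of_ball_subset (hg : IsLocalCocycle D g)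
    (hD : HasNoHoles D) {K : Set ℂ} {N : ℕ} (hKN : K ⊆ Ico (0 : ℝ) N ×ℂ Ico (0 : ℝ) N)
    (hK : ∀ a ∈ K, ball a 5 ⊆ D) :
    ∃ Φ : ℂ → Γ, ∀ a ∈ K, ∀ b ∈ K, dist a b < 1 → IsPotentialAt g Φ a b := by
  obtain ⟨Φ, hΦ, hstep⟩ := hg.exists_isPotentialAt_of_grid hD N
  refine ⟨Φ, fun a ha b hb hab => ?_⟩
  obtain ⟨⟨hre₀, hreN⟩, him₀, himN⟩ := hKN ha
  obtain ⟨⟨hre₀', hreN'⟩, him₀', himN'⟩ := hKN hb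
  obtain ⟨hi, hi', hle, hle'⟩ := abs_floor_sub_le_two hre₀ hre₀'
    ((Complex.abs_re_le_norm (a - b)).trans_lt (dist_eq_norm a b ▸ hab))
  obtain ⟨hj, hj', hlej, hlej'⟩ := abs_floor_sub_le_two him₀ him₀'
    ((Complex.abs_im_le_norm (a - b)).trans_lt (dist_eq_norm a b ▸ hab))
  have hB {i j : ℕ} (hre : |(i : ℝ) - a.re| ≤ 2) (him : |(j : ℝ) - a.im| ≤ 2) :
      gridVertex i j ∈ ball a 5 := by
    have := Complex.norm_le_abs_re_add_abs_im (gridVertex i j - a)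
    simp only [gridVertex, Int.cast_natCast, Complex.sub_re, Complex.sub_im] at this
    simp only [mem_ball, dist_eq_norm, gridVertex, Int.cast_natCast]
    linarith
  have haB : a ∈ ball a 5 := mem_ball_self (by norm_num)
  have hbB : b ∈ ball a 5 := mem_ball'.2 (hab.trans (by norm_num))
  have hlt {x : ℝ} (h₀ : 0 ≤ x) (hN : x < N) : ⌊x⌋₊ < N := (Nat.floor_lt h₀).2 hN
  have hconvex := convex_ball a 5
  have hhor := IsPotentialAt.of_step (v := fun i : ℕ => gridVertex i ⌊a.im⌋₊) hg (hK a ha) hconvex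
    (fun i h => by exact_mod_cast (hstep i h _ (hlt him₀ himN)).1) (hlt hre₀ hreN)
    (hlt hre₀' hreN') hle hle' (hB hi hj) (hB hi' hj)
  have hver := IsPotentialAt.of_step (v := fun j : ℕ => gridVertex ⌊b.re⌋₊ j) hg (hK a ha) hconvex
    (fun j h => by exact_mod_cast (hstep _ (hlt hre₀' hreN') j h).2) (hlt him₀ himN)
    (hlt him₀' himN') hlej hlej' (hB hi' hj) (hB hi' hj')
  have ha' := (hΦ a (hK a ha (hB hi hj))).symm hg (hK a ha) hconvex (hB hi hj) haB
  exact ((ha'.trans hg (hK a ha) hconvex haB (hB hi hj) (hB hi' hj) hhor).trans hg (hK a ha)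
    hconvex haB (hB hi' hj) (hB hi' hj') hver).trans hg (hK a ha) hconvex haB (hB hi' hj') hbB
    (hΦ b (hK a ha (hB hi' hj')))

theorem IsLocalCocycle.exists_potential (hg : IsLocalCocycle D g) (hDo : IsOpen D)
    (hD : HasNoHoles D) {K : Set ℂ} (hK : IsCompact K) (hKD : K ⊆ D) :
    ∃ ε > 0, ∃ Φ : ℂ → Γ, ∀ a ∈ K, ∀ b ∈ K, dist a b < ε → IsPotentialAt g Φ a b := by
  obtain ⟨δ, hδ, hthick⟩ := hK.exists_thickening_subset_open hDo hKD
  obtain ⟨R, hR⟩ := hK.isBounded.subset_closedBall 0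
  set s := δ / 5 with hsδ
  have hs : 0 < s := by positivity
  obtain ⟨N, hN⟩ := exists_nat_gt (2 * R / s)
  rw [div_lt_iff₀ hs] at hN
  -- In the coordinate `w` with `z = T w`, unit squares are small compared with `δ`.
  let T : ℂ → ℂ := fun w => -(R + R * Complex.I) + s • w
  let S : ℂ → ℂ := fun z => s⁻¹ • (z + (R + R * Complex.I))
  have hTS (z) : T (S z) = z := by
    simp only [T, S, smul_inv_smul₀ hs.ne', neg_add_cancel_comm_assoc]
  have hST (w) : S (T w) = w := by
    simp only [T, S, neg_add_cancel_comm, inv_smul_smul₀ hs.ne']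
  have hdist (a b) : dist (T a) (T b) = s * dist a b := by
    simp only [T, dist_add_left, dist_smul₀, Real.norm_of_nonneg hs.le]
  have hD' : HasNoHoles (T ⁻¹' D) :=
    hD.preimage (.of_dist_le' fun a b => (hdist a b).le) (by fun_prop) hTS hST
  have hg' : IsLocalCocycle (T ⁻¹' D) fun a b => g (T a) (T b) := fun L hL hLc a ha b hb c hc =>
    hg (image_subset_iff.2 hL) (hLc.affinity _ _) _ (mem_image_of_mem T ha) _
      (mem_image_of_mem T hb) _ (mem_image_of_mem T hc)
  have hKN : T ⁻¹' K ⊆ Ico (0 : ℝ) N ×ℂ Ico (0 : ℝ) N := fun w hw => by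
    have hnorm : ‖T w‖ ≤ R := by simpa using hR hw
    have hre := abs_le.1 ((Complex.abs_re_le_norm (T w)).trans hnorm)
    have him := abs_le.1 ((Complex.abs_im_le_norm (T w)).trans hnorm)
    simp only [neg_add_rev, Complex.real_smul, Complex.add_re, Complex.neg_re, Complex.mul_re,
      Complex.ofReal_re, Complex.I_re, mul_zero, Complex.ofReal_im, Complex.I_im, mul_one, sub_self,
      neg_zero, zero_add, zero_mul, sub_zero, le_add_iff_nonneg_right, neg_add_le_iff_le_add,
      Complex.add_im, Complex.neg_im, Complex.mul_im, add_zero, T] at hre him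
    refine ⟨⟨?_, ?_⟩, ?_, ?_⟩ <;> nlinarith
  have hball : ∀ w ∈ T ⁻¹' K, ball w 5 ⊆ T ⁻¹' D := fun w hw v hv => by
    refine hthick (mem_thickening_iff.2 ⟨T w, hw, ?_⟩)
    rw [hdist]
    linarith [mul_lt_mul_of_pos_left (mem_ball.1 hv) hs]
  obtain ⟨Φ, hΦ⟩ := hg'.exists_potential_of_ball_subset hD' hKN hball
  refine ⟨s, hs, Φ ∘ S, fun a ha b hb hab => ?_⟩
  have := hΦ (S a) (by rwa [mem_preimage, hTS]) (S b) (by rwa [mem_preimage, hTS])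
    (by rwa [← mul_lt_mul_iff_right₀ hs, ← hdist, hTS, hTS, mul_one])
  rwa [IsPotentialAt, hTS, hTS] at this

end Potential

section Homotopy

theorem homotopic_of_forall_mem_convex {V : Type*} [AddCommGroup V] [Module ℝ V]
    [TopologicalSpace V] [IsTopologicalAddGroup V] [ContinuousSMul ℝ V] {D K : Set V} {a b : D}
    (hKD : K ⊆ D) (hK : Convex ℝ K) {p q : Path a b} (hp : ∀ t, (p t : V) ∈ K)
    (hq : ∀ t, (q t : V) ∈ K) : p.Homotopic q := by
  refine ⟨⟨⟨⟨fun x => ⟨AffineMap.lineMap (p x.2 : V) (q x.2 : V) (x.1 : ℝ),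
    hKD (hK.lineMap_mem (hp _) (hq _) x.1.2)⟩, ?_⟩, fun t => ?_, fun t => ?_⟩, fun t x hx => ?_⟩⟩
  · refine Continuous.subtype_mk ?_ _
    simp only [AffineMap.lineMap_apply_module]
    fun_prop
  · ext; simp
  · ext; simp
  · rcases hx with rfl | rfl <;> ext <;> simp

open Path

theorem exists_path_mem_convex {V : Type*} [AddCommGroup V] [Module ℝ V] [TopologicalSpace V]
    [ContinuousAdd V] [ContinuousSMul ℝ V] {D K : Set V} {a b : D} (hKD : K ⊆ D)
    (hK : Convex ℝ K) (ha : (a : V) ∈ K) (hb : (b : V) ∈ K) :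
    ∃ p : Path a b, ∀ t, (p t : V) ∈ K := by
  have h (t) : Path.segment (a : V) b t ∈ K := hK.lineMap_mem ha hb t.2
  exact ⟨⟨⟨fun t => ⟨Path.segment (a : V) b t, hKD (h t)⟩, by fun_prop⟩, by ext; simp,
    by ext; simp⟩, h⟩

theorem exists_homotopy_class_of_convex {V : Type*} [AddCommGroup V] [Module ℝ V]
    [TopologicalSpace V] [IsTopologicalAddGroup V] [ContinuousSMul ℝ V] (D : Set V)
    [PathConnectedSpace D] :
    ∃ e : ∀ a b : D, Homotopic.Quotient a b, ∀ K ⊆ D, Convex ℝ K →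
      (∀ (a b : D) (p : Path a b), (∀ t, (p t : V) ∈ K) → Homotopic.Quotient.mk p = e a b) ∧
      ∀ a b c : D, (a : V) ∈ K → (b : V) ∈ K → (c : V) ∈ K → (e a b).trans (e b c) = e a c := by
  have hclass (a b : D) : ∃ e : Homotopic.Quotient a b, ∀ K ⊆ D, Convex ℝ K →
      ∀ p : Path a b, (∀ t, (p t : V) ∈ K) → Homotopic.Quotient.mk p = e := by
    by_cases h : segment ℝ (a : V) b ⊆ D
    · obtain ⟨s, hs⟩ := exists_path_mem_convex h (convex_segment (a : V) b)
        (left_mem_segment ..) (right_mem_segment ..)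
      refine ⟨.mk s, fun K hKD hK p hp => Homotopic.Quotient.eq.2
        (homotopic_of_forall_mem_convex hKD hK hp fun t => hK.segment_subset ?_ ?_ (hs t))⟩
      · simpa using hp 0
      · simpa using hp 1
    · refine ⟨.mk (PathConnectedSpace.somePath a b), fun K hKD hK p hp => (h ?_).elim⟩
      refine (hK.segment_subset ?_ ?_).trans hKD
      · simpa using hp 0
      · simpa using hp 1
  choose e he using hclass
  refine ⟨e, fun K hKD hK => ⟨fun a b => he a b K hKD hK, fun a b c ha hb hc => ?_⟩⟩
  obtain ⟨p, hp⟩ := exists_path_mem_convex hKD hK ha hb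
  obtain ⟨q, hq⟩ := exists_path_mem_convex hKD hK hb hc
  rw [← he _ _ K hKD hK p hp, ← he _ _ K hKD hK q hq, ← Homotopic.Quotient.mk_trans]
  refine he _ _ K hKD hK (p.trans q) fun t => ?_
  rw [Path.trans_apply]
  split_ifs
  exacts [hp _, hq _]

theorem trans_eq_of_eventually_subpath {X : Type*} [TopologicalSpace X] {a b c : X} (γ : Path a b)
    (Ψ : ∀ y : X, Homotopic.Quotient y c)
    (h : ∀ t, ∀ᶠ t' in 𝓝 t, (Homotopic.Quotient.mk (γ.subpath t t')).trans (Ψ (γ t')) = Ψ (γ t)) :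
    (Homotopic.Quotient.mk γ).trans (Ψ b) = Ψ a := by
  have hconst :
      IsLocallyConstant fun t => (Homotopic.Quotient.mk (γ.subpath 0 t)).trans (Ψ (γ t)) := by
    refine (IsLocallyConstant.iff_eventually_eq _).2 fun t => (h t).mono fun t' ht' => ?_
    rw [← ht', ← Homotopic.Quotient.trans_assoc, ← Homotopic.Quotient.mk_trans,
      Homotopic.Quotient.eq.2 ⟨Path.Homotopy.subpathTransSubpath γ 0 t t'⟩]
  have h₀₁ := hconst.apply_eq_of_isPreconnected isPreconnected_univ (mem_univ 1) (mem_univ 0)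
  have hcast (a' b' : X) (ha : a' = a) (hb : b' = b)
      (h : (Homotopic.Quotient.mk (γ.cast ha hb)).trans (Ψ b') = Ψ a') :
      (Homotopic.Quotient.mk γ).trans (Ψ b) = Ψ a := by
    subst ha hb; exact h
  refine hcast _ _ γ.source γ.target ?_
  simpa [Path.subpath_zero_one, Path.subpath_self] using h₀₁

theorem eventually_forall_subpath_mem {X : Type*} [TopologicalSpace X] {a b : X} (γ : Path a b)
    {V : Set X} (hV : IsOpen V) {t : unitInterval} (ht : γ t ∈ V) :
    ∀ᶠ t' in 𝓝 t, ∀ s, γ.subpath t t' s ∈ V := by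
  have hlim : Tendsto (fun t' => uIcc t t') (𝓝 t) (𝓝 t).smallSets :=
    tendsto_const_nhds.uIcc tendsto_id
  filter_upwards [hlim.eventually (eventually_smallSets_subset.2
    (γ.continuous.continuousAt.preimage_mem_nhds (hV.mem_nhds ht)))] with t' ht' s
  obtain ⟨u, hu, hus⟩ := γ.range_subpath t t' ▸ mem_range_self s
  exact hus ▸ ht' hu

open CategoryTheory in
theorem HasNoHoles.isSimplyConnected {D : Set ℂ} (hD : HasNoHoles D) (hDo : IsOpen D)
    (hDc : IsConnected D) : IsSimplyConnected D := by
  have hpath : PathConnectedSpace D :=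
    isPathConnected_iff_pathConnectedSpace.1 (hDo.isConnected_iff_isPathConnected.1 hDc)
  refine simply_connected_iff_loops_nullhomotopic.2 ⟨hpath, fun x γ => ?_⟩
  obtain ⟨e, he⟩ := exists_homotopy_class_of_convex D
  let X (a : D) : FundamentalGroupoid D := ⟨a⟩
  let C (a : D) : X x ⟶ X a := Homotopic.Quotient.mk (PathConnectedSpace.somePath x a)
  let A (a b : D) : X a ⟶ X b := e a b
  let g : ℂ → ℂ → End (X x) := fun a b =>
    open Classical in
    if h : a ∈ D ∧ b ∈ D then C ⟨b, h.2⟩ ≫ A ⟨b, h.2⟩ ⟨a, h.1⟩ ≫ inv (C ⟨a, h.1⟩) else 1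
  have hgD (a b : D) : g a b = C b ≫ A b a ≫ inv (C a) := by
    simp only [g, a.2, b.2, and_self, dite_true]
  have hg : IsLocalCocycle D g := fun K hKD hK a ha b hb c hc => by
    lift a to D using hKD ha
    lift b to D using hKD hb
    lift c to D using hKD hc
    have hA : A c b ≫ A b a = A c a := (he K hKD hK).2 c b a hc hb ha
    rw [hgD, hgD, hgD, End.mul_def]
    simp [reassoc_of% hA]
  obtain ⟨ε, hε, Φ, hΦ⟩ := hg.exists_potential hDo hD (K := range fun t => (γ t : ℂ))
    (isCompact_range (by fun_prop)) (range_subset_iff.2 fun t => (γ t).2)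
  let Ψ (a : D) : X a ⟶ X x := inv (C a) ≫ Φ a
  have hΨ : (Homotopic.Quotient.mk γ).trans (Ψ x) = Ψ x := by
    refine trans_eq_of_eventually_subpath γ Ψ fun t => ?_
    obtain ⟨r, hr, hrD⟩ := Metric.isOpen_iff.1 hDo _ (γ t).2
    let V : Set D := Subtype.val ⁻¹' ball (γ t : ℂ) (min r ε)
    have hVo : IsOpen V := isOpen_ball.preimage continuous_subtype_val
    have hV : γ t ∈ V := mem_ball_self (lt_min hr hε)
    filter_upwards [eventually_forall_subpath_mem γ hVo hV] with t' ht'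
    have hdist : dist (γ t' : ℂ) (γ t) < ε :=
      (show γ t' ∈ V by simpa using ht' 1).trans_le (min_le_right r ε)
    have hpot := hΦ _ (mem_range_self t') _ (mem_range_self t) hdist
    rw [(he _ ((ball_subset_ball (min_le_left r ε)).trans hrD) (convex_ball _ _)).1 _ _ _ ht']
    rw [IsPotentialAt, hgD, End.mul_def] at hpot
    change A (γ t) (γ t') ≫ Ψ (γ t') = Ψ (γ t)
    simp [Ψ, ← hpot]
  have hone : Homotopic.Quotient.mk γ = .refl x :=
    (cancel_mono (X := X x) (Y := X x) (Ψ x)).1 (hΨ.trans (Category.id_comp (Ψ x)).symm)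
  exact Homotopic.Quotient.eq.1 hone

end Homotopy

/-! ### Filling the holes of a domain -/

section Filling

variable {X : Type*}

/-- The Šura–Bura lemma: a compact component of `C` has arbitrarily small neighbourhoods that are
compact and relatively open in `C`. -/
theorem exists_isCompact_inter_of_connectedComponentIn_subset [TopologicalSpace X] [T2Space X]
    {C G : Set X} {x : X} (hC : IsClosed C) (hx : x ∈ C) (hG : IsOpen G)
    (hGc : IsCompact (closure G)) (hsub : connectedComponentIn C x ⊆ G) :
    ∃ V, IsOpen V ∧ x ∈ V ∧ IsCompact (V ∩ C) ∧ V ⊆ G := by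
  have hxG : x ∈ G := hsub (mem_connectedComponentIn hx)
  let K : Set X := C ∩ closure G
  have : CompactSpace K := isCompact_iff_compactSpace.1 (hGc.inter_left hC)
  let y : K := ⟨x, hx, subset_closure hxG⟩
  let G' : Set K := Subtype.val ⁻¹' G
  have hcomp : connectedComponent y ⊆ G' := image_subset_iff.1 <| Subset.trans
    ((isPreconnected_connectedComponent.image _ continuous_subtype_val.continuousOn)
      |>.subset_connectedComponentIn ⟨y, mem_connectedComponent, rfl⟩
      (image_subset_iff.2 fun z _ => z.2.1)) hsub
  rw [connectedComponent_eq_iInter_isClopen] at hcomp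
  have : Nonempty {s : Set K // IsClopen s ∧ y ∈ s} := ⟨⟨univ, isClopen_univ, mem_univ y⟩⟩
  obtain ⟨⟨s, hs, hys⟩, hsG⟩ := exists_subset_nhds_of_isCompact
    (V := fun s : {s : Set K // IsClopen s ∧ y ∈ s} => s.1)
    (fun a b => ⟨⟨a.1 ∩ b.1, a.2.1.inter b.2.1, a.2.2, b.2.2⟩, inter_subset_left,
      inter_subset_right⟩)
    (fun s => s.2.1.isClosed.isCompact)
    fun z hz => (hG.preimage continuous_subtype_val).mem_nhds (hcomp hz)
  obtain ⟨V, hV, rfl⟩ := isOpen_induced_iff.1 hs.isOpen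
  refine ⟨V ∩ G, hV.inter hG, ⟨hys, hxG⟩, ?_, inter_subset_right⟩
  convert hs.isClosed.isCompact.image continuous_subtype_val using 1
  ext z
  exact ⟨fun h => ⟨⟨z, h.2, subset_closure h.1.2⟩, h.1.1, rfl⟩,
    by rintro ⟨w, hw, rfl⟩; exact ⟨⟨hw, hsG hw⟩, w.2.1⟩⟩

/-- The filling of `W`: the union of `W` and of the bounded components of its complement. -/
def filling [PseudoMetricSpace X] (W : Set X) : Set X :=
  {x | ∀ Z ⊆ Wᶜ, x ∈ Z → IsPreconnected Z → Bornology.IsBounded Z}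

section PseudoMetricSpace

variable [PseudoMetricSpace X] {W A : Set X} {x : X}

theorem subset_filling : W ⊆ filling W := fun _ hx _ hZ hxZ _ => absurd hx (hZ hxZ)

theorem hasNoHoles_filling : HasNoHoles (filling W) := fun x hx => by
  simp only [filling, mem_ofPred_eq] at hx
  push Not at hx
  obtain ⟨Z, hZ, hxZ, hZc, hZb⟩ := hx
  exact ⟨Z, fun y hy hyW => hZb (hyW Z hZ hy hZc), hxZ, hZc, hZb⟩

theorem subset_filling_of_isPreconnected (hA : IsPreconnected A) (hAW : A ⊆ Wᶜ) (hxA : x ∈ A)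
    (hx : x ∈ filling W) : A ⊆ filling W := fun y hy Z hZ hyZ hZc =>
  (hx (A ∪ Z) (union_subset hAW hZ) (.inl hxA) (hA.union y hy hyZ hZc)).subset subset_union_right

theorem isBounded_connectedComponentIn_compl (hx : x ∈ filling W) (hxW : x ∉ W) :
    Bornology.IsBounded (connectedComponentIn Wᶜ x) :=
  hx _ (connectedComponentIn_subset _ _) (mem_connectedComponentIn hxW)
    isPreconnected_connectedComponentIn

theorem isBounded_image_iff_of_dist_le {h : X → X} {M : ℝ} (hM : ∀ x, dist (h x) x ≤ M)
    {Z : Set X} : Bornology.IsBounded (h '' Z) ↔ Bornology.IsBounded Z := by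
  refine ⟨fun hb => (hb.cthickening (δ := M)).subset fun x hx =>
    mem_cthickening_of_dist_le x (h x) M _ (mem_image_of_mem h hx) (dist_comm x _ ▸ hM x),
    fun hb => (hb.cthickening (δ := M)).subset ?_⟩
  rintro _ ⟨x, hx, rfl⟩
  exact mem_cthickening_of_dist_le _ x M _ hx (hM x)

theorem image_filling (h : X ≃ₜ X) {M : ℝ} (hM : ∀ x, dist (h x) x ≤ M) (W : Set X) :
    h '' filling W = filling (h '' W) := by
  ext y
  obtain ⟨x, rfl⟩ := h.surjective y
  rw [h.injective.mem_set_image]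
  simp only [filling, mem_ofPred_eq, ← image_compl_eq h.bijective]
  refine ⟨fun hx Z hZ hxZ hZc => ?_, fun hx Z hZ hxZ hZc => ?_⟩
  · rw [← h.image_preimage Z, isBounded_image_iff_of_dist_le hM]
    exact hx _ (preimage_subset hZ h.injective.injOn) hxZ (h.isPreconnected_preimage.2 hZc)
  · exact (isBounded_image_iff_of_dist_le hM).1 <|
      hx _ (image_mono hZ) (mem_image_of_mem h hxZ) (hZc.image h h.continuous.continuousOn)

end PseudoMetricSpace

section ProperSpace

variable [MetricSpace X] [ProperSpace X] {W W₁ W₂ : Set X} {x : X}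

theorem isOpen_filling (hW : IsOpen W) : IsOpen (filling W) := by
  refine isOpen_iff_mem_nhds.2 fun x hx => ?_
  by_cases hxW : x ∈ W
  · exact mem_of_superset (hW.mem_nhds hxW) subset_filling
  obtain ⟨R, hR⟩ := (isBounded_connectedComponentIn_compl hx hxW).subset_ball x
  obtain ⟨V, hV, hxV, hVW, -⟩ := exists_isCompact_inter_of_connectedComponentIn_subset
    hW.isClosed_compl hxW isOpen_ball isBounded_ball.isCompact_closure hR
  refine mem_of_superset (hV.mem_nhds hxV) fun y hy Z hZ hyZ hZc => ?_
  have hcover : Z ⊆ V ∪ (V ∩ Wᶜ)ᶜ := fun z _ => by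
    by_cases hz : z ∈ V
    exacts [.inl hz, .inr fun h => hz h.1]
  have hZV : Z ⊆ V := fun z hz => by
    by_contra hzV
    obtain ⟨u, huZ, huV, hu⟩ := hZc V (V ∩ Wᶜ)ᶜ hV hVW.isClosed.isOpen_compl hcover ⟨y, hyZ, hy⟩
      ⟨z, hz, fun h => hzV h.1⟩
    exact hu ⟨huV, hZ huZ⟩
  exact hVW.isBounded.subset (subset_inter hZV hZ)

variable [PreconnectedSpace X] [NoncompactSpace X]

theorem connectedComponentIn_compl_inter_closure_nonempty (hW : IsOpen W) (hx : x ∈ filling W)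
    (hxW : x ∉ W) : (connectedComponentIn Wᶜ x ∩ closure W).Nonempty := by
  by_contra hempty
  obtain ⟨R, hR⟩ := (isBounded_connectedComponentIn_compl hx hxW).subset_ball x
  obtain ⟨V, hV, hxV, hVW, hVG⟩ := exists_isCompact_inter_of_connectedComponentIn_subset
    hW.isClosed_compl hxW (isOpen_ball.inter isClosed_closure.isOpen_compl)
    (isBounded_ball.subset inter_subset_left).isCompact_closure
    (subset_inter hR (not_nonempty_iff_eq_empty.1 hempty |> disjoint_iff_inter_eq_empty.2
      |>.subset_compl_right))
  have hVW' : V ∩ Wᶜ = V :=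
    inter_eq_left.2 fun y hy hyW => (hVG hy).2 (subset_closure hyW)
  rw [hVW'] at hVW
  obtain rfl | rfl := isClopen_iff.1 ⟨hVW.isClosed, hV⟩
  · exact hxV
  · exact noncompact_univ X hVW

theorem isPreconnected_union_connectedComponentIn_compl (hW : IsOpen W) (hWc : IsPreconnected W)
    (hx : x ∈ filling W) (hxW : x ∉ W) :
    IsPreconnected (W ∪ connectedComponentIn Wᶜ x) := by
  obtain ⟨y, hy, hyW⟩ := connectedComponentIn_compl_inter_closure_nonempty hW hx hxW
  have hinsert : IsPreconnected (insert y W) :=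
    hWc.subset_closure (subset_insert _ _) (insert_subset hyW subset_closure)
  have hunion := hinsert.union y (mem_insert _ _) hy isPreconnected_connectedComponentIn
  rwa [insert_union, insert_eq_of_mem (.inr hy)] at hunion

theorem isConnected_filling (hW : IsOpen W) (hWc : IsConnected W) : IsConnected (filling W) := by
  obtain ⟨w, hw⟩ := hWc.nonempty
  refine ⟨⟨w, subset_filling hw⟩, isPreconnected_of_forall w fun x hx => ?_⟩
  by_cases hxW : x ∈ W
  · exact ⟨W, subset_filling, hw, hxW, hWc.isPreconnected⟩
  have hxC : x ∈ connectedComponentIn Wᶜ x := mem_connectedComponentIn hxW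
  exact ⟨_, union_subset subset_filling (subset_filling_of_isPreconnected
      isPreconnected_connectedComponentIn (connectedComponentIn_subset _ _) hxC hx),
    .inl hw, .inr hxC, isPreconnected_union_connectedComponentIn_compl hW hWc.isPreconnected hx hxW⟩

theorem subset_filling_or_subset_filling (hW₁ : IsOpen W₁) (hc₁ : IsPreconnected W₁)
    (hc₂ : IsPreconnected W₂) (hd : Disjoint W₁ W₂) (hx₁ : x ∈ filling W₁)
    (hx₂ : x ∈ filling W₂) : W₁ ⊆ filling W₂ ∨ W₂ ⊆ filling W₁ := by
  have h₁₂ : W₁ ⊆ W₂ᶜ := hd.subset_compl_right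
  have h₂₁ : W₂ ⊆ W₁ᶜ := hd.subset_compl_left
  by_cases hxW₁ : x ∈ W₁
  · exact .inl (subset_filling_of_isPreconnected hc₁ h₁₂ hxW₁ hx₂)
  have hxC := mem_connectedComponentIn (F := W₁ᶜ) hxW₁
  by_cases hmeet : (connectedComponentIn W₁ᶜ x ∩ W₂).Nonempty
  · obtain ⟨y, hyC, hyW₂⟩ := hmeet
    exact .inr <| subset_union_right.trans <| subset_filling_of_isPreconnected
      (isPreconnected_connectedComponentIn.union y hyC hyW₂ hc₂)
      (union_subset (connectedComponentIn_subset _ _) h₂₁) (.inl hxC) hx₁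
  · exact .inl <| subset_union_left.trans <| subset_filling_of_isPreconnected
      (isPreconnected_union_connectedComponentIn_compl hW₁ hc₁ hx₁ hxW₁)
      (union_subset h₁₂ fun y hyC hyW₂ => hmeet ⟨y, hyC, hyW₂⟩) (.inr hxC) hx₂

end ProperSpace

section Translate

variable {V : Type*} [NormedAddCommGroup V] [InnerProductSpace ℝ V] {W : Set V} {v : V}

/-- The ray in direction `-v` from a point of `W` with almost minimal inner product against `v`
escapes to infinity without meeting `W + v`. -/
theorem not_subset_filling_translate (hWc : IsConnected W) (hv : v ≠ 0)
    (hd : Disjoint W ((· + v) '' W)) : ¬ W ⊆ filling ((· + v) '' W) := by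
  intro hsub
  obtain ⟨w₀, hw₀⟩ := hWc.nonempty
  have hb : Bornology.IsBounded W :=
    hsub hw₀ W hd.subset_compl_right hw₀ hWc.isPreconnected
  let l : V → ℝ := fun z => inner ℝ v z
  have hvv : 0 < ‖v‖ ^ 2 := by positivity
  have hbelow : BddBelow (l '' W) :=
    ((innerSL ℝ v).lipschitz.isBounded_image hb).bddBelow
  obtain ⟨_, ⟨w, hw, rfl⟩, hlt⟩ := exists_lt_of_csInf_lt (hWc.nonempty.image l)
    (lt_add_of_pos_right (sInf (l '' W)) hvv)
  let r : ℝ → V := fun t => w - t • v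
  have havoid : r '' Ici 0 ⊆ ((· + v) '' W)ᶜ := by
    rintro _ ⟨t, ht, rfl⟩ ⟨y, hy, hyt⟩
    have hly : sInf (l '' W) ≤ l y := csInf_le hbelow (mem_image_of_mem l hy)
    have heq : l y + ‖v‖ ^ 2 = l w - t * ‖v‖ ^ 2 := by
      simpa [l, r, inner_add_right, inner_sub_right, real_inner_smul_right] using congrArg l hyt
    linarith [mul_nonneg (mem_Ici.1 ht) hvv.le]
  have hray := hsub hw (r '' Ici 0) havoid ⟨0, self_mem_Ici, by simp [r]⟩
    (isPreconnected_Ici.image _ (by fun_prop))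
  obtain ⟨R, hR⟩ := hray.subset_closedBall w
  have hmem := hR (mem_image_of_mem r (mem_Ici.2 (by positivity : 0 ≤ (|R| + 1) / ‖v‖)))
  simp only [r, mem_closedBall, dist_eq_norm, sub_sub_cancel_left, norm_neg, norm_smul, norm_div,
    norm_norm, div_mul_cancel₀ _ (norm_ne_zero_iff.2 hv)] at hmem
  linarith [le_abs_self R, Real.le_norm_self (|R| + 1)]

variable [FiniteDimensional ℝ V]

theorem disjoint_filling_translate (hW : IsOpen W) (hWc : IsConnected W) (hv : v ≠ 0)
    (hd : Disjoint W ((· + v) '' W)) : Disjoint (filling W) ((· + v) '' filling W) := by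
  have : Nontrivial V := ⟨v, 0, hv⟩
  have : NoncompactSpace V := NormedSpace.noncompactSpace ℝ V
  have himage (u : V) : (· + u) '' filling W = filling ((· + u) '' W) :=
    image_filling (Homeomorph.addRight u) (M := ‖u‖) (fun z => by simp) W
  have hd' : Disjoint W ((· + -v) '' W) := by
    simpa only [image_image, add_neg_cancel_right, image_id'] using
      (disjoint_image_iff (add_left_injective (-v))).2 hd.symm
  by_contra hmeet
  obtain ⟨z, hz, hzv⟩ := not_disjoint_iff.1 hmeet
  rw [himage] at hzv
  obtain h | h := subset_filling_or_subset_filling hW hWc.isPreconnected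
    (hWc.isPreconnected.image _ (by fun_prop)) hd hz hzv
  · exact not_subset_filling_translate hWc hv hd h
  · refine not_subset_filling_translate hWc (neg_ne_zero.2 hv) hd' ?_
    simpa only [← himage, image_image, add_neg_cancel_right, image_id'] using
      image_mono (f := (· + -v)) h

end Translate

end Filling

/-! ### Rotation sets and their uniform estimates -/

section DisplacementBounds

variable {V : Type*} [NormedAddCommGroup V] {F : V → V} {Λ : AddSubgroup V} {c : ℝ}

theorem norm_iterate_sub_le (hc : ∀ z, ‖F z - z‖ ≤ c) (n : ℕ) (z : V) :
    ‖F^[n] z - z‖ ≤ n * c := by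
  have h := dist_le_range_sum_of_dist_le (f := fun i => F^[i] z) (d := fun _ => c) n
    fun {i} _ => by
      rw [dist_comm, dist_eq_norm, Function.iterate_succ_apply']
      exact hc _
  simpa [← dist_eq_norm, dist_comm] using h

theorem norm_iterate_sub_iterate_le (hc : ∀ z, ‖F z - z‖ ≤ c) {i j : ℕ} {x y : V}
    (hxy : F^[i] x = F^[j] y) (n : ℕ) : ‖F^[n] x - F^[n] y‖ ≤ (i + j) * c := by
  have hmeet : F^[i] (F^[n] x) = F^[j] (F^[n] y) := by
    rw [(Function.Commute.iterate_iterate_self F i n).eq, hxy,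
      (Function.Commute.iterate_iterate_self F j n).eq]
  calc ‖F^[n] x - F^[n] y‖
      = ‖(F^[j] (F^[n] y) - F^[n] y) - (F^[i] (F^[n] x) - F^[n] x)‖ := by rw [hmeet]; abel_nf
    _ ≤ j * c + i * c := (norm_sub_le _ _).trans
      (add_le_add (norm_iterate_sub_le hc _ _) (norm_iterate_sub_le hc _ _))
    _ = (i + j) * c := by ring

theorem exists_norm_sub_le_of_commute [ProperSpace V] {R : NNReal}
    (hΛ : IsCover R univ (Λ : Set V)) (hFc : Continuous F)
    (hF : ∀ m ∈ Λ, Function.Commute F (· + m)) : ∃ c, ∀ z, ‖F z - z‖ ≤ c := by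
  obtain ⟨c, hc⟩ := (isCompact_closedBall (0 : V) R).exists_bound_of_continuousOn
    (f := fun z => F z - z) (by fun_prop)
  refine ⟨c, fun z => ?_⟩
  obtain ⟨m, hm, hzm⟩ := hΛ (mem_univ z)
  have hper : F z = F (z - m) + m := by simpa using hF m hm (z - m)
  have hball : z - m ∈ closedBall (0 : V) R := by
    rw [mem_closedBall_zero_iff, ← dist_eq_norm]
    exact edist_le_coe.1 hzm
  rw [hper, add_sub_assoc, ← neg_sub z m, ← sub_eq_add_neg]
  exact hc _ hball

theorem iterate_iterate_sub {m : V} (hF : Function.Commute F (· + m)) (p q : ℕ) (z : V) :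
    (fun x => F^[p] x - m)^[q] z = F^[p * q] z - q • m := by
  induction q generalizing z with
  | zero => simp
  | succ q ih =>
    have hper := hF.iterate_left (p * q) (F^[p] z - m)
    simp only [sub_add_cancel] at hper
    rw [Function.iterate_succ_apply, ih, mul_add_one, Function.iterate_add_apply, hper, succ_nsmul]
    abel

end DisplacementBounds

section RotationSet

variable {V V' : Type*} [NormedAddCommGroup V] [NormedSpace ℝ V] [NormedAddCommGroup V']
  [NormedSpace ℝ V'] {F : V → V} {W W' : Set V} {c : ℝ} {ρ : V}

/-- The rotation vectors of orbit segments starting in `W`, for a self-map of any normed space;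
`rotRel` is the case of Euclidean space. -/
def rotationSetOn (F : V → V) (W : Set V) : Set V :=
  {ρ | ∃ (n : ℕ → ℕ) (z : ℕ → V), Tendsto n atTop atTop ∧ (∀ i, z i ∈ W) ∧
    Tendsto (fun i => (n i : ℝ)⁻¹ • (F^[n i] (z i) - z i)) atTop (𝓝 ρ)}

theorem rotationSetOn_mono (h : W ⊆ W') : rotationSetOn F W ⊆ rotationSetOn F W' :=
  fun _ ⟨n, z, hn, hz, hlim⟩ => ⟨n, z, hn, fun i => h (hz i), hlim⟩

theorem rotationSetOn_empty : rotationSetOn F ∅ = ∅ :=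
  eq_empty_of_forall_notMem fun _ ⟨_, _, _, hz, _⟩ => hz 0

theorem rotationSetOn_union :
    rotationSetOn F (W ∪ W') = rotationSetOn F W ∪ rotationSetOn F W' := by
  refine Subset.antisymm ?_ (union_subset (rotationSetOn_mono subset_union_left)
    (rotationSetOn_mono subset_union_right))
  rintro ρ ⟨n, z, hn, hz, hlim⟩
  have hfreq : (∃ᶠ i in atTop, z i ∈ W) ∨ ∃ᶠ i in atTop, z i ∈ W' :=
    frequently_or_distrib.1 (Eventually.of_forall hz).frequently
  rcases hfreq with h | h <;> obtain ⟨φ, hφ, hzφ⟩ := extraction_of_frequently_atTop h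
  · exact Or.inl ⟨n ∘ φ, z ∘ φ, hn.comp hφ.tendsto_atTop, hzφ, hlim.comp hφ.tendsto_atTop⟩
  · exact Or.inr ⟨n ∘ φ, z ∘ φ, hn.comp hφ.tendsto_atTop, hzφ, hlim.comp hφ.tendsto_atTop⟩

theorem tendsto_inv_smul_of_norm_sub_le {n : ℕ → ℕ} {x y : ℕ → V} {C : ℝ}
    (hn : Tendsto n atTop atTop) (hxy : ∀ i, ‖y i - x i‖ ≤ C)
    (hx : Tendsto (fun i => (n i : ℝ)⁻¹ • x i) atTop (𝓝 ρ)) :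
    Tendsto (fun i => (n i : ℝ)⁻¹ • y i) atTop (𝓝 ρ) := by
  have hinv : Tendsto (fun i => (n i : ℝ)⁻¹) atTop (𝓝 0) :=
    tendsto_inv_atTop_zero.comp (tendsto_natCast_atTop_atTop.comp hn)
  have hdiff : Tendsto (fun i => (n i : ℝ)⁻¹ • (y i - x i)) atTop (𝓝 0) :=
    hinv.zero_smul_isBoundedUnder_le (isBoundedUnder_of ⟨C, hxy⟩)
  simpa [← smul_add] using hx.add hdiff

theorem rotationSetOn_subset_of_iterate_mem (hc : ∀ z, ‖F z - z‖ ≤ c) {i j : ℕ}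
    (h : ∀ x ∈ W', F^[i] x ∈ F^[j] '' W) : rotationSetOn F W' ⊆ rotationSetOn F W := by
  rintro ρ ⟨n, z, hn, hz, hlim⟩
  choose u hu huz using fun k => h _ (hz k)
  refine ⟨n, u, hn, hu, tendsto_inv_smul_of_norm_sub_le (C := 2 * ((j + i) * c)) hn (fun k => ?_)
    hlim⟩
  have hsplit : F^[n k] (u k) - u k - (F^[n k] (z k) - z k)
      = (F^[n k] (u k) - F^[n k] (z k)) - (F^[0] (u k) - F^[0] (z k)) := by
    simp only [Function.iterate_zero, id]
    abel
  rw [hsplit, two_mul]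
  exact (norm_sub_le _ _).trans (add_le_add (norm_iterate_sub_iterate_le hc (huz k) _)
    (norm_iterate_sub_iterate_le hc (huz k) _))

theorem image_rotationSetOn_subset (hc : ∀ z, ‖F z - z‖ ≤ c) {p : ℕ} (hp : 1 ≤ p) {G : V → V}
    {m : V} (hG : ∀ q z, G^[q] z = F^[p * q] z - q • m) :
    (fun ρ => p • ρ - m) '' rotationSetOn F W ⊆ rotationSetOn G W := by
  rintro _ ⟨ρ, ⟨n, z, hn, hz, hlim⟩, rfl⟩
  have hc0 : 0 ≤ c := (norm_nonneg _).trans (hc 0)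
  have hq : Tendsto (fun i => n i / p) atTop atTop :=
    (Nat.tendsto_div_const_atTop (by omega)).comp hn
  have hlim' : Tendsto (fun i => (n i : ℝ)⁻¹ • (F^[p * (n i / p)] (z i) - z i)) atTop (𝓝 ρ) := by
    refine tendsto_inv_smul_of_norm_sub_le (C := p * c) hn (fun i => ?_) hlim
    rw [sub_sub_sub_cancel_right, norm_sub_rev]
    nth_rewrite 1 [← Nat.mod_add_div (n i) p]
    rw [Function.iterate_add_apply]
    refine (norm_iterate_sub_le hc _ _).trans (mul_le_mul_of_nonneg_right ?_ hc0)
    exact_mod_cast (Nat.mod_lt _ hp).le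
  have hratio : Tendsto (fun i => ((n i / p : ℕ) : ℝ)⁻¹ * n i) atTop (𝓝 p) := by
    have hp0 : (0 : ℝ) < p := by exact_mod_cast hp
    have hfloor := ((tendsto_nat_floor_div_atTop (R := ℝ)).comp
      ((tendsto_natCast_atTop_atTop.comp hn).atTop_div_const hp0)).inv₀ one_ne_zero
    refine ((inv_one (G := ℝ) ▸ hfloor).const_mul (p : ℝ)).congr' ?_ |>.trans_eq (by simp)
    refine .of_forall fun i => ?_
    simp only [Function.comp_apply, Nat.floor_div_eq_div, inv_div]
    field_simp
  refine ⟨fun i => n i / p, z, hq, hz, ?_⟩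
  beta_reduce
  rw [← Nat.cast_smul_eq_nsmul ℝ]
  refine ((hratio.smul hlim').sub_const m).congr' ?_
  filter_upwards [hq.eventually_ge_atTop 1, hn.eventually_ge_atTop 1] with i hqi hni
  have hq0 : ((n i / p : ℕ) : ℝ) ≠ 0 := by positivity
  have hn0 : (n i : ℝ) ≠ 0 := by positivity
  rw [hG, mul_smul, smul_inv_smul₀ hn0, sub_right_comm, smul_sub _ _ (_ • m),
    ← Nat.cast_smul_eq_nsmul ℝ, inv_smul_smul₀ hq0]

theorem exists_le_map_iterate_sub (hc : ∀ z, ‖F z - z‖ ≤ c) (ℓ : V →L[ℝ] ℝ)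
    (hρ : ρ ∈ rotationSetOn F W) {μ : ℝ} (hμ : μ < ℓ ρ) {n : ℕ} (hn : 1 ≤ n) :
    ∃ z, n * μ ≤ ℓ (F^[n] z - z) := by
  by_contra! hslow
  have hc0 : 0 ≤ c := (norm_nonneg _).trans (hc 0)
  set K := n * (‖ℓ‖ * c + |μ|) with hK
  have hbound (m : ℕ) : ∀ z, ℓ (F^[m] z - z) ≤ m * μ + K := by
    induction m using Nat.strong_induction_on with
    | _ m ih =>
      intro z
      rcases lt_or_ge m n with hmn | hmn
      · have hmn' : (m : ℝ) ≤ n := by exact_mod_cast hmn.le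
        calc ℓ (F^[m] z - z) ≤ ‖ℓ‖ * (m * c) := (le_abs_self _).trans
              (ℓ.le_opNorm_of_le (norm_iterate_sub_le hc m z))
          _ ≤ m * μ + m * (‖ℓ‖ * c + |μ|) := by
            nlinarith [neg_abs_le μ, (Nat.cast_nonneg m : (0 : ℝ) ≤ m)]
          _ ≤ m * μ + K := by rw [hK]; gcongr
      · obtain ⟨k, rfl⟩ := Nat.exists_eq_add_of_le' hmn
        have hk := ih k (by omega) (F^[n] z)
        have hn' := hslow z
        rw [Function.iterate_add_apply, ← sub_add_sub_cancel _ (F^[n] z), map_add]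
        push_cast
        linarith
  obtain ⟨m, z, hm, -, hlim⟩ := hρ
  have hinv : Tendsto (fun i => μ + (m i : ℝ)⁻¹ * K) atTop (𝓝 (μ + 0 * K)) :=
    ((tendsto_inv_atTop_zero.comp (tendsto_natCast_atTop_atTop.comp hm)).mul_const _).const_add _
  refine hμ.not_ge ?_
  rw [zero_mul, add_zero] at hinv
  refine le_of_tendsto_of_tendsto ((ℓ.continuous.tendsto _).comp hlim) hinv ?_
  filter_upwards [hm.eventually_ge_atTop 1] with i hi
  have hpos : (0 : ℝ) < m i := by exact_mod_cast hi
  rw [Function.comp_apply, map_smul, smul_eq_mul, inv_mul_le_iff₀ hpos, mul_add,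
    mul_inv_cancel_left₀ hpos.ne']
  exact hbound _ _

section Proper

variable [ProperSpace V]

theorem exists_tendsto_rotationSetOn (hc : ∀ z, ‖F z - z‖ ≤ c) {n : ℕ → ℕ} {z : ℕ → V}
    (hn : Tendsto n atTop atTop) (hz : ∀ i, z i ∈ W) :
    ∃ ρ ∈ rotationSetOn F W, ∃ φ : ℕ → ℕ, StrictMono φ ∧
      Tendsto (fun i => (n (φ i) : ℝ)⁻¹ • (F^[n (φ i)] (z (φ i)) - z (φ i))) atTop (𝓝 ρ) := by
  have hc0 : 0 ≤ c := (norm_nonneg _).trans (hc 0)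
  have hmem (i : ℕ) : (n i : ℝ)⁻¹ • (F^[n i] (z i) - z i) ∈ closedBall (0 : V) c := by
    rw [mem_closedBall_zero_iff, norm_smul, norm_inv, Real.norm_natCast]
    exact inv_mul_le_of_le_mul₀ (Nat.cast_nonneg _) hc0 (norm_iterate_sub_le hc _ _)
  obtain ⟨ρ, -, φ, hφ, hlim⟩ := (isCompact_closedBall (0 : V) c).tendsto_subseq hmem
  exact ⟨ρ, ⟨n ∘ φ, z ∘ φ, hn.comp hφ.tendsto_atTop, fun i => hz _, hlim⟩, φ, hφ, hlim⟩

theorem rotationSetOn_nonempty (hc : ∀ z, ‖F z - z‖ ≤ c) (hW : W.Nonempty) :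
    (rotationSetOn F W).Nonempty :=
  let ⟨z, hz⟩ := hW
  let ⟨ρ, hρ, _⟩ := exists_tendsto_rotationSetOn hc (z := fun _ => z) tendsto_id fun _ => hz
  ⟨ρ, hρ⟩

theorem exists_norm_map_iterate_sub_le (hc : ∀ z, ‖F z - z‖ ≤ c) (L : V →L[ℝ] V') {w : V'}
    (h : ∀ ρ ∈ rotationSetOn F W, L ρ = w) {ε : ℝ} (hε : 0 < ε) :
    ∃ A, 0 ≤ A ∧ ∀ n : ℕ, ∀ u ∈ W, ‖L (F^[n] u - u) - (n : ℝ) • w‖ ≤ ε * n + A := by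
  by_contra! hbad
  choose n u hu hbad using fun i : ℕ => hbad i i.cast_nonneg
  have hle (i : ℕ) : (i : ℝ) ≤ n i * (‖L‖ * c + ‖w‖) := by
    have hbound : ‖L (F^[n i] (u i) - u i) - (n i : ℝ) • w‖ ≤ ‖L‖ * (n i * c) + n i * ‖w‖ :=
      (norm_sub_le _ _).trans (add_le_add (L.le_opNorm_of_le (norm_iterate_sub_le hc _ _))
        (by rw [norm_smul, Real.norm_natCast]))
    linarith [hbad i, mul_nonneg hε.le (n i).cast_nonneg]
  have hn : Tendsto n atTop atTop := by
    have hc0 : 0 ≤ c := (norm_nonneg _).trans (hc 0)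
    have hC : 0 < ‖L‖ * c + ‖w‖ + 1 := by positivity
    refine tendsto_natCast_atTop_iff.1 (tendsto_atTop_mono (fun i => ?_)
      (tendsto_natCast_atTop_atTop.atTop_div_const hC))
    rw [div_le_iff₀ hC]
    linarith [hle i, (n i).cast_nonneg (α := ℝ)]
  obtain ⟨ρ, hρ, φ, hφ, hlim⟩ := exists_tendsto_rotationSetOn hc hn hu
  have hLlim := (((L.continuous.tendsto ρ).comp hlim).sub_const w).norm
  rw [h ρ hρ, sub_self, norm_zero] at hLlim
  refine hε.not_ge (ge_of_tendsto hLlim ?_)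
  filter_upwards [(hn.comp hφ.tendsto_atTop).eventually_ge_atTop 1] with i hi
  have hpos : (0 : ℝ) < n (φ i) := by exact_mod_cast hi
  have hscale : L (F^[n (φ i)] (u (φ i)) - u (φ i)) - (n (φ i) : ℝ) • w = (n (φ i) : ℝ) •
      (L ((n (φ i) : ℝ)⁻¹ • (F^[n (φ i)] (u (φ i)) - u (φ i))) - w) := by
    rw [smul_sub, map_smul, smul_inv_smul₀ hpos.ne']
  have hi' := hbad (φ i)
  rw [hscale, norm_smul, Real.norm_natCast] at hi'
  rw [Function.comp_apply]
  exact le_of_mul_le_mul_left (by linarith [(φ i).cast_nonneg (α := ℝ)]) hpos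

end Proper

open scoped Pointwise in
theorem rotationSetOn_add_addSubgroup {Λ : AddSubgroup V}
    (hF : ∀ m ∈ Λ, Function.Commute F (· + m)) (W : Set V) :
    rotationSetOn F (W + (Λ : Set V)) = rotationSetOn F W := by
  refine Subset.antisymm ?_ (rotationSetOn_mono fun w hw => ⟨w, hw, 0, Λ.zero_mem, add_zero w⟩)
  rintro ρ ⟨n, z, hn, hz, hlim⟩
  choose u hu k hk huk using hz
  refine ⟨n, u, hn, hu, hlim.congr fun i => ?_⟩
  have hper : F^[n i] (z i) = F^[n i] (u i) + k i := by
    rw [← huk]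
    exact (hF _ (hk i)).iterate_left _ _
  rw [hper, ← huk, add_sub_add_right_eq_sub]

end RotationSet

/-! ### Long curves that drift coherently -/

theorem exists_re_le_re_of_path {G : ℂ → ℂ} (hG : Continuous G) (hGi : Function.Injective G)
    {d : ℝ} (hd : ∀ z, ‖G z - z‖ ≤ d) {x y Y : ℂ} (γ : Path x y) (hbot : x.im + 2 * d < Y.im)
    (htop : Y.im + 2 * d < y.im) (hleft : ∀ t, Y.re < (γ t).re) :
    ∃ t, (G Y).re ≤ (G (γ t)).re := by
  by_contra! hovertake
  have hd0 : 0 ≤ d := (norm_nonneg _).trans (hd 0)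
  have hre (z : ℂ) : |(G z).re - z.re| ≤ d := (Complex.abs_re_le_norm (G z - z)).trans (hd z)
  have him (z : ℂ) : |(G z).im - z.im| ≤ d := (Complex.abs_im_le_norm (G z - z)).trans (hd z)
  -- The horizontal segment of length `2 * d` ending at `Y` starts so far to the left that its
  -- image has to cross the image of `γ`.
  let ray (s : ℝ) : ℂ := ⟨Y.re - 2 * d * (1 - s), Y.im⟩
  have hray : Continuous ray := by
    simp only [ray, Complex.mk_eq_add_mul_I]
    fun_prop
  obtain ⟨s, hs, t, ht, hst⟩ := exists_eq_of_crossing (γ := G ∘ ray) (δ := G ∘ γ.extend)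
    (hG.comp hray).continuousOn (hG.comp γ.continuous_extend).continuousOn
    (fun t ht => by
      have h₀ := (abs_le.1 (hre (ray 0))).2
      have h₁ := (abs_le.1 (hre (γ.extend t))).1
      have h₂ := hleft ⟨t, ht⟩
      rw [← γ.extend_apply ht] at h₂
      simp only [ray, Function.comp_apply] at h₀ ⊢
      linarith)
    (fun t ht => by simpa [ray, γ.extend_apply ht] using hovertake ⟨t, ht⟩)
    (fun s _ => by
      have h₀ := (abs_le.1 (him x)).2
      have h₁ := (abs_le.1 (him (ray s))).1
      simp only [ray, Function.comp_apply, Path.extend_zero] at h₁ ⊢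
      linarith)
    (fun s _ => by
      have h₀ := (abs_le.1 (him y)).1
      have h₁ := (abs_le.1 (him (ray s))).2
      simp only [ray, Function.comp_apply, Path.extend_one] at h₁ ⊢
      linarith)
  have hlt := hleft ⟨t, ht⟩
  rw [← γ.extend_apply ht, ← hGi hst] at hlt
  nlinarith [hs.2]

/-- `F` has arbitrarily long curves drifting at speed `lam` in the direction of the coordinate
`re ∘ L`: curves whose height `N` in the coordinate `im ∘ L` is arbitrarily large, and whose
images up to time `N` stay, up to an error small compared to `N`, above a single moving point of
the `re ∘ L` axis. -/
def HasDriftingCurves (F : ℂ → ℂ) (L : ℂ ≃ₗᵢ[ℝ] ℂ) (lam : ℝ) : Prop :=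
  ∀ δ > 0, ∀ N₀ : ℝ, ∃ N ≥ N₀, ∃ (x y : ℂ) (γ : Path x y) (b : ℝ), (L x).im + N ≤ (L y).im ∧
    ∀ t, ∀ n : ℕ, n ≤ N → |(L (F^[n] (γ t))).re - b - n * lam| ≤ δ * N

namespace HasDriftingCurves

variable {F : ℂ → ℂ} {L : ℂ ≃ₗᵢ[ℝ] ℂ} {lam c : ℝ} {R : NNReal} {Λ : AddSubgroup ℂ} {w : ℂ}

theorem neg (h : HasDriftingCurves F L lam) :
    HasDriftingCurves F (L.trans (.neg ℝ)) (-lam) := by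
  intro δ hδ N₀
  obtain ⟨N, hN, x, y, γ, b, hxy, hγ⟩ := h δ hδ N₀
  refine ⟨N, hN, y, x, γ.symm, -b, ?_, fun t n hn => ?_⟩
  · simp only [LinearIsometryEquiv.trans_apply, LinearIsometryEquiv.coe_neg, Complex.neg_im]
    linarith
  · rw [← abs_neg]
    convert hγ (unitInterval.symm t) n hn using 2
    simp only [LinearIsometryEquiv.trans_apply, LinearIsometryEquiv.coe_neg, Complex.neg_re,
      Path.symm_apply, Function.comp_apply]
    ring

/-- No lattice translate of `z` placed just left of the curve `γ` overtakes it. -/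
theorem re_map_iterate_sub_le (hFc : Continuous F) (hFi : Function.Injective F)
    (hΛ : IsCover R univ (Λ : Set ℂ)) (hF : ∀ m ∈ Λ, Function.Commute F (· + m))
    (hc : ∀ z, ‖F z - z‖ ≤ c) {x y : ℂ} (γ : Path x y) {N b e : ℝ} {n : ℕ}
    (hxy : (L x).im + N ≤ (L y).im) (hN : 2 * R + 4 * (n * c) < N)
    (h₀ : ∀ t, b - e ≤ (L (γ t)).re) (hn : ∀ t, (L (F^[n] (γ t))).re ≤ b + n * lam + e) (z : ℂ) :
    (L (F^[n] z - z)).re ≤ n * lam + 2 * e + 2 * R + 1 := by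
  let target : ℂ := ⟨b - e - R - 1, (L x).im + N / 2⟩
  obtain ⟨m, hm, hdist⟩ := hΛ (mem_univ (L.symm target - z))
  have hR : ‖L (z + m) - target‖ ≤ R := by
    rw [← L.apply_symm_apply target, ← map_sub, L.norm_map, norm_sub_rev, ← sub_sub, ← dist_eq_norm]
    exact edist_le_coe.1 hdist
  have hre := abs_le.1 ((Complex.abs_re_le_norm _).trans hR)
  have him := abs_le.1 ((Complex.abs_im_le_norm _).trans hR)
  simp only [Complex.sub_re, Complex.sub_im, target] at hre him
  obtain ⟨t, ht⟩ := exists_re_le_re_of_path (G := L ∘ F^[n] ∘ L.symm) (d := n * c)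
    (L.continuous.comp ((hFc.iterate n).comp L.symm.continuous))
    (L.injective.comp ((hFi.iterate n).comp L.symm.injective))
    (fun u => by
      rw [← L.symm.norm_map, map_sub]
      simpa using norm_iterate_sub_le hc n (L.symm u))
    (γ.map L.continuous) (Y := L (z + m)) (by linarith) (by linarith)
    (fun t => by
      have := h₀ t
      simp only [Path.map_coe, Function.comp_apply]
      linarith)
  have hper : F^[n] (z + m) - (z + m) = F^[n] z - z := by
    rw [(hF m hm).iterate_left n z, add_sub_add_right_eq_sub]
  simp only [Function.comp_apply, L.symm_apply_apply, Path.map_coe] at ht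
  rw [← hper, map_sub, Complex.sub_re]
  linarith [hn t]

theorem re_map_le (h : HasDriftingCurves F L lam) (hFc : Continuous F)
    (hFi : Function.Injective F) (hΛ : IsCover R univ (Λ : Set ℂ))
    (hF : ∀ m ∈ Λ, Function.Commute F (· + m)) (hc : ∀ z, ‖F z - z‖ ≤ c)
    (hw : w ∈ rotationSetOn F univ) : (L w).re ≤ lam := by
  by_contra! hlt
  obtain ⟨μ, hμ, hμw⟩ := exists_between hlt
  have hκ : 0 < μ - lam := sub_pos.2 hμ
  have hc0 : 0 ≤ c := (norm_nonneg _).trans (hc 0)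
  have : (0 : ℝ) ≤ R := R.coe_nonneg
  -- `n ≈ N / (8 * (c + 1))` is large compared to the error `δ * N`, but so small that no orbit
  -- leaves the horizontal strip spanned by the curve within time `n`.
  obtain ⟨N, hN, x, y, γ, b, hxy, hγ⟩ := h ((μ - lam) / (32 * (c + 1))) (by positivity)
    ((2 * (μ - lam + 2 * R + 2) / (μ - lam) + 4 * R + 1) * (8 * (c + 1)))
  obtain ⟨q, rfl⟩ : ∃ q, N = q * (8 * (c + 1)) := ⟨N / (8 * (c + 1)), by field_simp⟩
  have hq := le_of_mul_le_mul_right hN (by positivity)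
  have hfrac : 0 ≤ 2 * (μ - lam + 2 * R + 2) / (μ - lam) := by positivity
  have hqκ : 2 * (μ - lam + 2 * R + 2) ≤ q * (μ - lam) := (div_le_iff₀ hκ).1 (by linarith)
  have hδ : (μ - lam) / (32 * (c + 1)) * (q * (8 * (c + 1))) = (μ - lam) * q / 4 := by
    field_simp
    ring
  rw [hδ] at hγ
  have hnq : (⌊q⌋₊ : ℝ) ≤ q := Nat.floor_le (by linarith)
  have hqn : q < ⌊q⌋₊ + 1 := Nat.lt_floor_add_one q
  obtain ⟨z, hz⟩ := exists_le_map_iterate_sub hc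
    (Complex.reCLM.comp (L.toContinuousLinearEquiv : ℂ →L[ℝ] ℂ)) hw hμw
    (Nat.one_le_floor_iff q |>.2 (by linarith))
  have hq0 : 0 ≤ q := by linarith
  have hslow := re_map_iterate_sub_le hFc hFi hΛ hF hc γ (n := ⌊q⌋₊) (lam := lam) (b := b)
    (e := (μ - lam) * q / 4) hxy (by nlinarith)
    (fun t => by
      have h₀ := (abs_le.1 (hγ t 0 (by push_cast; positivity))).1
      rw [Function.iterate_zero_apply, Nat.cast_zero, zero_mul] at h₀
      linarith)
    (fun t => by linarith [(abs_le.1 (hγ t ⌊q⌋₊ (by nlinarith))).2]) z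
  have hgain : ⌊q⌋₊ * μ ≤ ⌊q⌋₊ * lam + 2 * ((μ - lam) * q / 4) + 2 * R + 1 := hz.trans hslow
  nlinarith

theorem interior_rotationSetOn_eq_empty (h : HasDriftingCurves F L lam) (hFc : Continuous F)
    (hFi : Function.Injective F) (hΛ : IsCover R univ (Λ : Set ℂ))
    (hF : ∀ m ∈ Λ, Function.Commute F (· + m)) : interior (rotationSetOn F univ) = ∅ := by
  obtain ⟨c, hc⟩ := exists_norm_sub_le_of_commute hΛ hFc hF
  have hre {w : ℂ} (hw : w ∈ rotationSetOn F univ) : (L w).re = lam := by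
    have hge := h.neg.re_map_le hFc hFi hΛ hF hc hw
    simp only [LinearIsometryEquiv.trans_apply, LinearIsometryEquiv.coe_neg, Complex.neg_re] at hge
    exact le_antisymm (h.re_map_le hFc hFi hΛ hF hc hw) (neg_le_neg_iff.1 hge)
  by_contra! hint
  have hopen := (Complex.isOpenMap_re.comp L.toHomeomorph.isOpenMap) _
    (isOpen_interior (s := rotationSetOn F univ))
  refine not_isOpen_singleton lam ?_
  convert hopen
  refine Subset.antisymm (singleton_subset_iff.2 ?_) ?_
  · obtain ⟨w, hw⟩ := hint
    exact ⟨w, hw, hre (interior_subset hw)⟩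
  · rintro _ ⟨w, hw, rfl⟩
    exact hre (interior_subset hw)

end HasDriftingCurves

/-! ### Bounded sets whose rotation vectors lie on a line -/

/-- The map induced by `F` on the quotient by `Λ` is non-wandering. -/
def IsNonwanderingMod {V : Type*} [TopologicalSpace V] [AddGroup V] (Λ : AddSubgroup V)
    (F : V → V) : Prop :=
  ∀ W : Set V, IsOpen W → W.Nonempty → ∃ n ≥ 1, ∃ b ∈ W, ∃ m ∈ Λ, F^[n] b - m ∈ W

theorem IsNonwanderingMod.exists_ge {V : Type*} [TopologicalSpace V] [AddCommGroup V]
    [ContinuousSub V] {Λ : AddSubgroup V} {F : V → V} (h : IsNonwanderingMod Λ F)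
    (hFc : Continuous F) (hF : ∀ m ∈ Λ, Function.Commute F (· + m)) {W : Set V} (hW : IsOpen W)
    (hne : W.Nonempty) (N : ℕ) : ∃ n ≥ N, ∃ b ∈ W, ∃ m ∈ Λ, F^[n] b - m ∈ W := by
  induction N generalizing W with
  | zero =>
    obtain ⟨n, -, hn⟩ := h W hW hne
    exact ⟨n, n.zero_le, hn⟩
  | succ N ih =>
    obtain ⟨n, hn, b, hb, m, hm, hbm⟩ := h W hW hne
    obtain ⟨k, hk, b', hb', m', hm', hbm'⟩ := ih
      (hW.inter (hW.preimage ((hFc.iterate n).sub continuous_const))) ⟨b, hb, hbm⟩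
    refine ⟨n + k, by omega, b', hb'.1, m + m', Λ.add_mem hm hm', ?_⟩
    have hper := (hF m' hm').iterate_left n (F^[k] b' - m')
    simp only [sub_add_cancel] at hper
    rw [Function.iterate_add_apply, hper, add_sub_add_right_eq_sub]
    exact hbm'.2

theorem isOpenMap_iterate {X : Type*} [TopologicalSpace X] {G : X → X} (hG : IsOpenMap G)
    (n : ℕ) : IsOpenMap G^[n] := by
  induction n with
  | zero => exact IsOpenMap.id
  | succ n ih => exact ih.comp hG

theorem exists_path_iterate {X : Type*} [TopologicalSpace X] [LocallyPathConnectedSpace X]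
    {G : X → X} (hGc : Continuous G) (hGo : IsOpenMap G) {U : Set X} (hUo : IsOpen U)
    (hU : IsConnected U) {b u : X} (hb : b ∈ U) (hGb : G b ∈ U) (hu : u ∈ U) (q : ℕ) :
    ∃ γ : Path u (G^[q] u), ∀ t, ∃ j ≤ q, γ t ∈ G^[j] '' U := by
  let A : Set X := ⋃ j ∈ Iic q, G^[j] '' U
  have hAo : IsOpen A := isOpen_biUnion fun j _ => isOpenMap_iterate hGo j _ hUo
  have hA : IsPreconnected A := IsPreconnected.biUnion_of_chain ordConnected_Iic
    (fun j _ => hU.isPreconnected.image _ (hGc.iterate j).continuousOn)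
    fun j _ _ => ⟨G^[j] (G b), ⟨G b, hGb, rfl⟩, b, hb, Function.iterate_succ_apply G j b⟩
  have hu₀ : u ∈ A := mem_biUnion (mem_Iic.2 q.zero_le) ⟨u, hu, rfl⟩
  have huq : G^[q] u ∈ A := mem_biUnion self_mem_Iic ⟨u, hu, rfl⟩
  obtain ⟨γ, hγ⟩ := (hAo.isConnected_iff_isPathConnected.1 ⟨⟨u, hu₀⟩, hA⟩).joinedIn _ hu₀ _ huq
  exact ⟨γ, fun t => by simpa only [A, mem_iUnion₂, mem_Iic, exists_prop] using hγ t⟩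

section NormedSpace

variable {V V' : Type*} [NormedAddCommGroup V] [NormedSpace ℝ V] [NormedAddCommGroup V']
  [NormedSpace ℝ V'] {F : V → V} {U : Set V} {M : V} {P : ℕ}

theorem norm_map_iterate_iterate_sub_le (L : V →L[ℝ] V') (hM : Function.Commute F (· + M))
    {w : V'} {ε A d : ℝ} (hA : ∀ n : ℕ, ∀ u ∈ U, ‖L (F^[n] u - u) - (n : ℝ) • w‖ ≤ ε * n + A)
    (hd : ∀ u ∈ U, ∀ v ∈ U, ‖L (u - v)‖ ≤ d) {b u v : V} (hb : b ∈ U) (hGb : F^[P] b - M ∈ U)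
    (hu : u ∈ U) (hv : v ∈ U) (j t : ℕ) :
    ‖L (F^[t] ((fun x => F^[P] x - M)^[j] u) - v) - (t : ℝ) • w‖ ≤
      (j + 1) * (d + A) + ε * (t + 2 * P * j) := by
  have hreturn : ‖(P : ℝ) • w - L M‖ ≤ d + (ε * P + A) := by
    calc ‖(P : ℝ) • w - L M‖
        = ‖L (F^[P] b - M - b) - (L (F^[P] b - b) - (P : ℝ) • w)‖ := by
          simp only [map_sub]
          congr 1
          abel
      _ ≤ d + (ε * P + A) := (norm_sub_le _ _).trans (add_le_add (hd _ hGb _ hb) (hA P b hb))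
  have hiter : F^[t] ((fun x => F^[P] x - M)^[j] u) = F^[t + P * j] u - j • M := by
    have hper := ((hM.iterate_right j).iterate_left t) (F^[P * j] u - j • M)
    simp only [add_right_iterate, sub_add_cancel] at hper
    rw [iterate_iterate_sub hM, Function.iterate_add_apply, hper, add_sub_cancel_right]
  calc ‖L (F^[t] ((fun x => F^[P] x - M)^[j] u) - v) - (t : ℝ) • w‖
      = ‖L (u - v) + (L (F^[t + P * j] u - u) - ((t + P * j : ℕ) : ℝ) • w)
          + (j : ℝ) • ((P : ℝ) • w - L M)‖ := by
        rw [hiter, ← Nat.cast_smul_eq_nsmul ℝ]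
        simp only [map_sub, map_smul, Nat.cast_add, Nat.cast_mul]
        congr 1
        module
    _ ≤ d + (ε * (t + P * j : ℕ) + A) + j * (d + (ε * P + A)) := by
        refine norm_add₃_le.trans (add_le_add_three (hd u hu v hv) (hA _ u hu) ?_)
        rw [norm_smul, Real.norm_natCast]
        exact mul_le_mul_of_nonneg_left hreturn j.cast_nonneg
    _ = (j + 1) * (d + A) + ε * (t + 2 * P * j) := by
        push_cast
        ring

theorem exists_le_abs_map_iterate_sub {c : ℝ} (hc : ∀ z, ‖F z - z‖ ≤ c)
    (hM : Function.Commute F (· + M)) (hP : 1 ≤ P) (ℓ : V →L[ℝ] ℝ) {ρ₁ ρ₂ : V}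
    (h₁ : ρ₁ ∈ rotationSetOn F U) (h₂ : ρ₂ ∈ rotationSetOn F U) (hne : ℓ ρ₁ ≠ ℓ ρ₂) (q₀ : ℕ) :
    ∃ q ≥ q₀, ∃ u ∈ U,
      q * (P * |ℓ ρ₁ - ℓ ρ₂| / 4) ≤ |ℓ ((fun x => F^[P] x - M)^[q] u - u)| := by
  have hκ : 0 < P * |ℓ ρ₁ - ℓ ρ₂| := mul_pos (by exact_mod_cast hP) (abs_pos.2 (sub_ne_zero.2 hne))
  obtain ⟨ρ, hρ, hfar⟩ : ∃ ρ ∈ rotationSetOn F U, P * |ℓ ρ₁ - ℓ ρ₂| / 2 ≤ |ℓ (P • ρ - M)| := by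
    by_contra! hnear
    have hdiff : ℓ (P • ρ₁ - M) - ℓ (P • ρ₂ - M) = P * (ℓ ρ₁ - ℓ ρ₂) := by
      rw [← map_sub, sub_sub_sub_cancel_right, ← nsmul_sub, map_nsmul, map_sub, nsmul_eq_mul]
    have hle := abs_sub (ℓ (P • ρ₁ - M)) (ℓ (P • ρ₂ - M))
    rw [hdiff, abs_mul, Nat.abs_cast] at hle
    linarith [hnear ρ₁ h₁, hnear ρ₂ h₂]
  obtain ⟨q, u, hq, hu, hlim⟩ := image_rotationSetOn_subset hc hP (iterate_iterate_sub hM P)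
    (mem_image_of_mem _ hρ)
  have hlim' := ((ℓ.continuous.tendsto _).comp hlim).abs.eventually_const_lt
    (show P * |ℓ ρ₁ - ℓ ρ₂| / 4 < _ from (by linarith : _ < P * |ℓ ρ₁ - ℓ ρ₂| / 2).trans_le hfar)
  obtain ⟨i, hi, hqi, hqi'⟩ :=
    (hlim'.and ((hq.eventually_ge_atTop q₀).and (hq.eventually_ge_atTop 1))).exists
  refine ⟨q i, hqi, u i, hu i, ?_⟩
  rw [Function.comp_apply, map_smul, smul_eq_mul, abs_mul, abs_inv, Nat.abs_cast] at hi
  exact ((lt_inv_mul_iff₀ (by exact_mod_cast hqi')).1 hi).le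

end NormedSpace

section Line

variable {F : ℂ → ℂ} {Λ : AddSubgroup ℂ} {U : Set ℂ} {L : ℂ ≃ₗᵢ[ℝ] ℂ} {lam c : ℝ} {ρ₁ ρ₂ : ℂ}

theorem HasDriftingCurves.of_abs (h : ∀ δ > 0, ∀ N₀ : ℝ, ∃ N ≥ N₀, ∃ (x y : ℂ) (γ : Path x y)
    (b : ℝ), N ≤ |(L (y - x)).im| ∧ ∀ t, ∀ n : ℕ, n ≤ N →
      |(L (F^[n] (γ t))).re - b - n * lam| ≤ δ * N) : HasDriftingCurves F L lam := by
  intro δ hδ N₀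
  obtain ⟨N, hN, x, y, γ, b, hxy, hγ⟩ := h δ hδ N₀
  rw [map_sub, Complex.sub_im] at hxy
  rcases le_abs.1 hxy with hxy | hxy
  · exact ⟨N, hN, x, y, γ, b, by linarith, hγ⟩
  · exact ⟨N, hN, y, x, γ.symm, b, by linarith, fun t => hγ (unitInterval.symm t)⟩

theorem drift_error_le {δ κ D P q j n : ℝ} (hδ : 0 < δ) (hκ : 0 < κ) (hP : 1 ≤ P) (hq : 1 ≤ q)
    (hj : j ≤ q) (hD : 0 ≤ D) (hn : n ≤ q * (P * κ / 4)) (hPD : 16 * D ≤ δ * κ * P) :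
    (j + 1) * D + δ * κ / (2 * (κ + 8)) * (n + 2 * P * j) ≤ δ * (q * (P * κ / 4)) := by
  calc (j + 1) * D + δ * κ / (2 * (κ + 8)) * (n + 2 * P * j)
      ≤ (q + q) * (δ * κ * P / 16) + δ * κ / (2 * (κ + 8)) * (q * (P * κ / 4) + 2 * P * q) := by
        gcongr
        linarith
    _ = δ * (q * (P * κ / 4)) := by
        field_simp
        ring

theorem hasDriftingCurves_of_re_eq (hFc : Continuous F) (hFo : IsOpenMap F)
    (hc : ∀ z, ‖F z - z‖ ≤ c) (hF : ∀ m ∈ Λ, Function.Commute F (· + m))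
    (hnw : IsNonwanderingMod Λ F) (hUo : IsOpen U) (hU : IsConnected U)
    (hUb : Bornology.IsBounded U) (h : ∀ ρ ∈ rotationSetOn F U, (L ρ).re = lam)
    (h₁ : ρ₁ ∈ rotationSetOn F U) (h₂ : ρ₂ ∈ rotationSetOn F U) (hne : ρ₁ ≠ ρ₂) :
    HasDriftingCurves F L lam := by
  refine .of_abs fun δ hδ N₀ => ?_
  let L' : ℂ →L[ℝ] ℂ := L.toContinuousLinearEquiv
  have him : (L ρ₁).im ≠ (L ρ₂).im := fun him =>
    hne (L.injective (Complex.ext ((h _ h₁).trans (h _ h₂).symm) him))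
  set κ := |(L ρ₁).im - (L ρ₂).im|
  have hκ : 0 < κ := abs_pos.2 (sub_ne_zero.2 him)
  obtain ⟨A, hA0, hA⟩ := exists_norm_map_iterate_sub_le hc (Complex.reCLM.comp L') h
    (ε := δ * κ / (2 * (κ + 8))) (by positivity)
  have hd (u) (hu : u ∈ U) (v) (hv : v ∈ U) : ‖Complex.reCLM.comp L' (u - v)‖ ≤ diam U :=
    (Complex.abs_re_le_norm _).trans
      ((L.norm_map _).trans_le (dist_eq_norm u v ▸ dist_le_diam_of_mem hUb hu hv))
  obtain ⟨P, hP, b, hb, M, hM, hbM⟩ := hnw.exists_ge hFc hF hUo hU.nonempty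
    (⌈16 * (diam U + A) / (δ * κ)⌉₊ + 1)
  obtain ⟨q, hq, u, hu, hlong⟩ := exists_le_abs_map_iterate_sub hc (hF M hM) (by omega : 1 ≤ P)
    (Complex.imCLM.comp L') h₁ h₂ him (⌈4 * |N₀| / κ⌉₊ + 1)
  obtain ⟨γ, hγ⟩ := exists_path_iterate (G := fun x => F^[P] x - M)
    ((hFc.iterate P).sub continuous_const)
    ((Homeomorph.subRight M).isOpenMap.comp (isOpenMap_iterate hFo P)) hUo hU hb hbM hu q
  have hPle : 16 * (diam U + A) ≤ δ * κ * P :=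
    (div_le_iff₀' (by positivity)).1 (Nat.ceil_le.1 (by omega))
  have hqle : 4 * |N₀| ≤ q * κ := (div_le_iff₀ hκ).1 (Nat.ceil_le.1 (by omega))
  have hP1 : (1 : ℝ) ≤ P := by exact_mod_cast (by omega : 1 ≤ P)
  have hq1 : (1 : ℝ) ≤ q := by exact_mod_cast (by omega : 1 ≤ q)
  refine ⟨q * (P * κ / 4), ?_, u, _, γ, (L u).re, hlong, fun t n hn => ?_⟩
  · nlinarith [le_abs_self N₀, mul_le_mul_of_nonneg_right hP1 (by positivity : 0 ≤ q * κ)]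
  · obtain ⟨j, hj, v, hv, hjv⟩ := hγ t
    have herr := norm_map_iterate_iterate_sub_le _ (hF M hM) hA hd hb hbM hv hu j n
    rw [hjv, map_sub, smul_eq_mul, Real.norm_eq_abs] at herr
    exact herr.trans (drift_error_le hδ hκ hP1 hq1 (by exact_mod_cast hj) (by positivity) hn hPle)

theorem rotationSetOn_subsingleton_of_re_eq (hFc : Continuous F) (hFi : Function.Injective F)
    (hFo : IsOpenMap F) {R : NNReal} (hΛ : IsCover R univ (Λ : Set ℂ))
    (hF : ∀ m ∈ Λ, Function.Commute F (· + m)) (hnw : IsNonwanderingMod Λ F)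
    (hint : (interior (rotationSetOn F univ)).Nonempty) (hUo : IsOpen U) (hU : IsConnected U)
    (hUb : Bornology.IsBounded U) (h : ∀ ρ ∈ rotationSetOn F U, (L ρ).re = lam) :
    (rotationSetOn F U).Subsingleton := by
  obtain ⟨c, hc⟩ := exists_norm_sub_le_of_commute hΛ hFc hF
  intro ρ₁ h₁ ρ₂ h₂
  by_contra! hne
  have hdrift := hasDriftingCurves_of_re_eq hFc hFo hc hF hnw hUo hU hUb h h₁ h₂ hne
  exact hint.ne_empty (hdrift.interior_rotationSetOn_eq_empty hFc hFi hΛ hF)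

end Line

/-! ### Full orbits contain no essential loop -/

section FullOrbit

open scoped Pointwise

variable {V : Type*} [AddCommGroup V] {Λ : AddSubgroup V} {F : V → V} {U : Set V} {x m : V}

/-- The points whose orbit meets, modulo `Λ`, the orbit of a point of `U`. For invertible `F` this
is the union of the translates by `Λ` of all images `F^n U`, `n ∈ ℤ`. -/
def fullOrbit (Λ : AddSubgroup V) (F : V → V) (U : Set V) : Set V :=
  {x | ∃ i j : ℕ, F^[i] x ∈ F^[j] '' (U + (Λ : Set V))}

theorem subset_fullOrbit : U ⊆ fullOrbit Λ F U :=
  fun u hu => ⟨0, 0, u, ⟨u, hu, 0, Λ.zero_mem, add_zero u⟩, rfl⟩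

theorem map_mem_fullOrbit_iff : F x ∈ fullOrbit Λ F U ↔ x ∈ fullOrbit Λ F U := by
  constructor
  · rintro ⟨i, j, hij⟩
    exact ⟨i + 1, j, hij⟩
  · rintro ⟨i, j, u, hu, hij⟩
    exact ⟨i, j + 1, u, hu, by
      rw [Function.iterate_succ_apply', hij, (Function.Commute.iterate_self F i).eq]⟩

theorem add_mem_fullOrbit (hF : ∀ m ∈ Λ, Function.Commute F (· + m)) (hm : m ∈ Λ)
    (hx : x ∈ fullOrbit Λ F U) : x + m ∈ fullOrbit Λ F U := by
  obtain ⟨i, j, _, ⟨u, hu, k, hk, rfl⟩, hij⟩ := hx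
  refine ⟨i, j, u + (k + m), ⟨u, hu, _, Λ.add_mem hk hm, rfl⟩, ?_⟩
  rw [(hF m hm).iterate_left i x, ← hij, ← add_assoc]
  exact (hF m hm).iterate_left j (u + k)

theorem isOpen_fullOrbit [TopologicalSpace V] [ContinuousAdd V] (hFc : Continuous F)
    (hFo : IsOpenMap F) (hU : IsOpen U) : IsOpen (fullOrbit Λ F U) := by
  have hunion : fullOrbit Λ F U = ⋃ (i : ℕ) (j : ℕ), F^[i] ⁻¹' (F^[j] '' (U + (Λ : Set V))) := by
    ext x
    simp [fullOrbit]
  rw [hunion]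
  exact isOpen_iUnion fun i => isOpen_iUnion fun j =>
    (isOpenMap_iterate hFo j _ hU.add_right).preimage (hFc.iterate i)

end FullOrbit

open scoped Pointwise in
theorem rotationSetOn_subset_of_isCompact {V : Type*} [NormedAddCommGroup V] [NormedSpace ℝ V]
    {Λ : AddSubgroup V} {F : V → V} (hFc : Continuous F) (hFo : IsOpenMap F) {c : ℝ}
    (hc : ∀ z, ‖F z - z‖ ≤ c) (hF : ∀ m ∈ Λ, Function.Commute F (· + m)) {U K : Set V}
    (hU : IsOpen U) (hK : IsCompact K) (hKU : K ⊆ fullOrbit Λ F U) :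
    rotationSetOn F K ⊆ rotationSetOn F U := by
  refine hK.induction_on (p := fun s => rotationSetOn F s ⊆ rotationSetOn F U) ?_
    (fun s t hst ht => (rotationSetOn_mono hst).trans ht)
    (fun s t hs ht => rotationSetOn_union.trans_subset (union_subset hs ht)) fun x hx => ?_
  · exact rotationSetOn_empty.trans_subset (empty_subset _)
  · obtain ⟨i, j, hij⟩ := hKU hx
    refine ⟨F^[i] ⁻¹' (F^[j] '' (U + (Λ : Set V))), mem_nhdsWithin_of_mem_nhds
      (((isOpenMap_iterate hFo j _ hU.add_right).preimage (hFc.iterate i)).mem_nhds hij), ?_⟩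
    exact (rotationSetOn_subset_of_iterate_mem hc fun y hy => hy).trans_eq
      (rotationSetOn_add_addSubgroup hF U)

theorem joinedIn_iUnion_range_add_nsmul {V : Type*} [TopologicalSpace V] [AddCommMonoid V]
    [ContinuousAdd V] {x k : V} (γ : Path x (x + k)) (J : ℕ) :
    JoinedIn (⋃ j : ℕ, range fun t => γ t + j • k) x (x + J • k) := by
  induction J with
  | zero =>
    have hx : x ∈ ⋃ j : ℕ, range fun t => γ t + j • k := mem_iUnion.2 ⟨0, 0, by simp⟩
    simpa using JoinedIn.refl hx
  | succ J ih =>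
    refine ih.trans ?_
    rw [succ_nsmul', ← add_assoc]
    exact ⟨γ.map (f := (· + J • k)) (by fun_prop), fun t => mem_iUnion.2 ⟨J, t, rfl⟩⟩

section EssentialLoop

variable {F : ℂ → ℂ} {L : ℂ ≃ₗᵢ[ℝ] ℂ} {lam c : ℝ} {Λ : AddSubgroup ℂ} {U : Set ℂ} {x k : ℂ}

theorem hasDriftingCurves_of_path (hc : ∀ z, ‖F z - z‖ ≤ c) (hF : Function.Commute F (· + k))
    (γ : Path x (x + k)) (hre : (L k).re = 0) (him : 0 < (L k).im)
    (hrot : ∀ ρ ∈ rotationSetOn F (range γ), (L ρ).re = lam) : HasDriftingCurves F L lam := by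
  intro δ hδ N₀
  have hK : IsCompact (range γ) := isCompact_range γ.continuous
  let L' : ℂ →L[ℝ] ℂ := L.toContinuousLinearEquiv
  obtain ⟨A, hA0, hA⟩ := exists_norm_map_iterate_sub_le hc (Complex.reCLM.comp L') hrot
    (half_pos hδ)
  obtain ⟨J, hJ⟩ := exists_nat_ge ((|N₀| + 2 * (A + diam (range γ)) / δ) / (L k).im)
  rw [div_le_iff₀ him] at hJ
  have herr0 : 0 ≤ 2 * (A + diam (range γ)) / δ := by positivity
  obtain ⟨γ', hγ'⟩ := joinedIn_iUnion_range_add_nsmul γ J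
  refine ⟨J * (L k).im, by linarith [le_abs_self N₀], x, _, γ', (L x).re, ?_, fun t n hn => ?_⟩
  · rw [map_add, map_nsmul, Complex.add_im, Complex.smul_im, nsmul_eq_mul]
  obtain ⟨j, s, hjs⟩ := mem_iUnion.1 (hγ' t)
  have hFn : F^[n] (γ s + j • k) = F^[n] (γ s) + j • k := by
    have := ((hF.iterate_right j).iterate_left n) (γ s)
    rwa [add_right_iterate] at this
  have hdrift : |(L (F^[n] (γ s) - γ s)).re - n * lam| ≤ δ / 2 * n + A := hA n _ ⟨s, rfl⟩
  have hdiam : |(L (γ s - x)).re| ≤ diam (range γ) := (Complex.abs_re_le_norm _).trans <| by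
    rw [L.norm_map, ← dist_eq_norm]
    exact dist_le_diam_of_mem hK.isBounded ⟨s, rfl⟩ ⟨0, γ.source⟩
  calc |(L (F^[n] (γ' t))).re - (L x).re - n * lam|
      = |((L (F^[n] (γ s) - γ s)).re - n * lam) + (L (γ s - x)).re| := by
        rw [← hjs, hFn]
        simp only [map_add, map_sub, map_nsmul, Complex.add_re, Complex.sub_re, Complex.smul_re,
          hre, smul_zero]
        congr 1
        ring
    _ ≤ δ / 2 * n + A + diam (range γ) := (abs_add_le _ _).trans (add_le_add hdrift hdiam)
    _ ≤ δ * (J * (L k).im) := by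
        have herr : 2 * (A + diam (range γ)) / δ ≤ J * (L k).im := by linarith [abs_nonneg N₀]
        rw [div_le_iff₀ hδ] at herr
        nlinarith

theorem eq_zero_of_joinedIn_fullOrbit (hFc : Continuous F) (hFi : Function.Injective F)
    (hFo : IsOpenMap F) {R : NNReal} (hΛ : IsCover R univ (Λ : Set ℂ))
    (hF : ∀ m ∈ Λ, Function.Commute F (· + m))
    (hint : (interior (rotationSetOn F univ)).Nonempty) (hUo : IsOpen U)
    (hU : (rotationSetOn F U).Subsingleton) (hk : k ∈ Λ)
    (hxk : JoinedIn (fullOrbit Λ F U) x (x + k)) : k = 0 := by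
  obtain ⟨c, hc⟩ := exists_norm_sub_le_of_commute hΛ hFc hF
  obtain ⟨γ, hγ⟩ := hxk
  by_contra hk0
  let L : ℂ ≃ₗᵢ[ℝ] ℂ := (ℝ ∙ (k - ‖k‖ * Complex.I))ᗮ.reflection
  have hLk : L k = ‖k‖ * Complex.I := Submodule.reflection_sub (by simp)
  have hγU := rotationSetOn_subset_of_isCompact hFc hFo hc hF hUo (isCompact_range γ.continuous)
    (range_subset_iff.2 hγ)
  obtain ⟨ρ₀, hρ₀⟩ := rotationSetOn_nonempty hc (range_nonempty γ)
  have hdrift : HasDriftingCurves F L (L ρ₀).re := hasDriftingCurves_of_path hc (hF k hk) γ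
    (by simp [hLk]) (by simpa [hLk] using hk0) fun ρ hρ => by rw [hU (hγU hρ) (hγU hρ₀)]
  exact hint.ne_empty (hdrift.interior_rotationSetOn_eq_empty hFc hFi hΛ hF)

end EssentialLoop

/-! ### Periodic disks -/

section Period

variable {V : Type*} [AddCommGroup V] {Λ : AddSubgroup V} {F : V → V} {W : Set V}

theorem image_iterate_mul (hF : ∀ m ∈ Λ, Function.Commute F (· + m)) {p : ℕ} {m : V} (hm : m ∈ Λ)
    (hpm : F^[p] '' W = (· + m) '' W) (q : ℕ) : F^[p * q] '' W = (· + q • m) '' W := by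
  induction q with
  | zero => simp
  | succ q ih =>
    have hcomm : F^[p * q] ∘ (· + m) = (· + m) ∘ F^[p * q] :=
      ((hF m hm).iterate_left (p * q)).comp_eq
    rw [mul_add_one, Function.iterate_add, image_comp, hpm, ← image_comp, hcomm, image_comp, ih,
      image_image, succ_nsmul]
    simp only [add_assoc]

theorem exists_period (hF : ∀ m ∈ Λ, Function.Commute F (· + m))
    (hW : ∀ k ∈ Λ, (· + k) '' W = W → k = 0)
    (hret : ∃ n ≥ 1, ∃ k ∈ Λ, F^[n] '' W = (· + k) '' W) :
    ∃ p ≥ 1, ∃ m ∈ Λ, F^[p] '' W = (· + m) '' W ∧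
      ∀ n : ℕ, ∀ k ∈ Λ, F^[n] '' W = (· + k) '' W → ∃ q, n = p * q ∧ k = q • m := by
  classical
  obtain ⟨hp, m, hm, hpm⟩ := Nat.find_spec hret
  refine ⟨Nat.find hret, hp, m, hm, hpm, fun n k hk hnk => ⟨n / Nat.find hret, ?_⟩⟩
  set p := Nat.find hret
  have hq : (n / p) • m ∈ Λ := Λ.nsmul_mem hm _
  have hrem : F^[n % p] '' W = (· + (k - (n / p) • m)) '' W := by
    have hcomm : F^[n % p] ∘ (· + (n / p) • m) = (· + (n / p) • m) ∘ F^[n % p] :=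
      ((hF _ hq).iterate_left _).comp_eq
    rw [← Nat.mod_add_div n p, Function.iterate_add, image_comp, image_iterate_mul hF hm hpm,
      ← image_comp, hcomm, image_comp] at hnk
    refine (add_left_injective ((n / p) • m)).image_injective ?_
    rw [hnk, image_image]
    simp only [add_assoc, sub_add_cancel]
  have hmod : n % p = 0 := by
    by_contra hmod
    exact Nat.find_min hret (Nat.mod_lt _ hp)
      ⟨Nat.one_le_iff_ne_zero.2 hmod, _, Λ.sub_mem hk hq, hrem⟩
  rw [hmod, Function.iterate_zero, image_id] at hrem
  exact ⟨(Nat.mul_div_cancel' (Nat.dvd_of_mod_eq_zero hmod)).symm,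
    sub_eq_zero.1 (hW _ (Λ.sub_mem hk hq) hrem.symm)⟩

end Period

theorem inv_smul_mem_rotationSetOn {V : Type*} [NormedAddCommGroup V] [NormedSpace ℝ V]
    {F : V → V} {U : Set V} (hU : Bornology.IsBounded U) {p : ℕ} (hp : 1 ≤ p) {m : V}
    (h : ∀ N : ℕ, ∃ q ≥ N, ∃ b ∈ U, F^[p * q] b - q • m ∈ U) :
    (p : ℝ)⁻¹ • m ∈ rotationSetOn F U := by
  choose q hq b hb hqb using h
  have hqtop : Tendsto q atTop atTop := tendsto_atTop_mono hq tendsto_id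
  refine ⟨fun N => p * q N, b, hqtop.const_mul_atTop' hp, hb, ?_⟩
  refine tendsto_inv_smul_of_norm_sub_le (x := fun N => q N • m) (C := diam U)
    (hqtop.const_mul_atTop' hp) (fun N => ?_) ?_
  · rw [sub_right_comm, ← dist_eq_norm]
    exact dist_le_diam_of_mem hU (hqb N) (hb N)
  · refine tendsto_const_nhds.congr' ?_
    filter_upwards [hqtop.eventually_ge_atTop 1] with N hN
    have hN0 : (q N : ℝ) ≠ 0 := by positivity
    rw [← Nat.cast_smul_eq_nsmul ℝ, Nat.cast_mul, mul_inv, mul_smul, inv_smul_smul₀ hN0]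

/-- `D` is a simply connected region, disjoint from its nonzero translates by `Λ`, which `F^p`
maps onto its translate by `m`: the lift of an embedded open disk in `ℂ / Λ` of period `p`. -/
structure IsPeriodicDisk (Λ : AddSubgroup ℂ) (F : ℂ → ℂ) (p : ℕ) (m : ℂ) (D : Set ℂ) : Prop where
  isOpen : IsOpen D
  isSimplyConnected : IsSimplyConnected D
  disjoint_translate : ∀ k ∈ Λ, k ≠ 0 → Disjoint D ((· + k) '' D)
  image_iterate : F^[p] '' D = (· + m) '' D

theorem coe_homeomorph_pow {X : Type*} [TopologicalSpace X] (F : X ≃ₜ X) (n : ℕ) :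
    ⇑(F ^ n) = F^[n] :=
  hom_coe_pow _ rfl (fun _ _ => rfl) F n

section Component

variable {Λ : AddSubgroup ℂ} {F : ℂ ≃ₜ ℂ} {U W D : Set ℂ} {x k m : ℂ} {p : ℕ}

theorem image_iterate_connectedComponentIn_fullOrbit (hx : x ∈ fullOrbit Λ F U) (n : ℕ) :
    F^[n] '' connectedComponentIn (fullOrbit Λ F U) x
      = connectedComponentIn (fullOrbit Λ F U) (F^[n] x) := by
  have himage : F '' fullOrbit Λ F U = fullOrbit Λ F U := by
    rw [F.image_eq_preimage_symm]
    ext y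
    rw [mem_preimage, ← map_mem_fullOrbit_iff, F.apply_symm_apply]
  induction n generalizing x with
  | zero => simp
  | succ n ih =>
    rw [Function.iterate_succ, image_comp, F.image_connectedComponentIn hx, himage,
      ih (map_mem_fullOrbit_iff.2 hx)]
    rfl

theorem image_add_connectedComponentIn_fullOrbit (hF : ∀ m ∈ Λ, Function.Commute F (· + m))
    (hk : k ∈ Λ) (hx : x ∈ fullOrbit Λ F U) :
    (· + k) '' connectedComponentIn (fullOrbit Λ F U) x
      = connectedComponentIn (fullOrbit Λ F U) (x + k) := by
  have himage : Homeomorph.addRight k '' fullOrbit Λ F U = fullOrbit Λ F U := by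
    refine Subset.antisymm (image_subset_iff.2 fun y hy => add_mem_fullOrbit hF hk hy) ?_
    exact fun y hy => ⟨y + -k, add_mem_fullOrbit hF (Λ.neg_mem hk) hy, neg_add_cancel_right y k⟩
  have h := (Homeomorph.addRight k).image_connectedComponentIn hx
  rwa [himage] at h

theorem image_iterate_eq_image_add (hF : ∀ m ∈ Λ, Function.Commute F (· + m)) (hk : k ∈ Λ) {b : ℂ}
    (hb : b ∈ connectedComponentIn (fullOrbit Λ F U) x) {n : ℕ}
    (hbk : F^[n] b - k ∈ connectedComponentIn (fullOrbit Λ F U) x) :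
    F^[n] '' connectedComponentIn (fullOrbit Λ F U) x
      = (· + k) '' connectedComponentIn (fullOrbit Λ F U) x := by
  have hsub := connectedComponentIn_subset (fullOrbit Λ F U) x
  nth_rewrite 1 [connectedComponentIn_eq hb]
  rw [connectedComponentIn_eq hbk, image_iterate_connectedComponentIn_fullOrbit (hsub hb),
    image_add_connectedComponentIn_fullOrbit hF hk (hsub hbk), sub_add_cancel]

theorem isPeriodicDisk_filling {c : ℝ} (hc : ∀ z, ‖F z - z‖ ≤ c) (hWo : IsOpen W)
    (hWc : IsConnected W) (hWd : ∀ k ∈ Λ, k ≠ 0 → Disjoint W ((· + k) '' W))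
    (hpm : F^[p] '' W = (· + m) '' W) : IsPeriodicDisk Λ F p m (filling W) where
  isOpen := isOpen_filling hWo
  isSimplyConnected := hasNoHoles_filling.isSimplyConnected (isOpen_filling hWo)
    (isConnected_filling hWo hWc)
  disjoint_translate k hk hk0 := disjoint_filling_translate hWo hWc hk0 (hWd k hk hk0)
  image_iterate := by
    have hFp := image_filling (F ^ p) (M := p * c) (fun x => by
      rw [coe_homeomorph_pow, dist_eq_norm]
      exact norm_iterate_sub_le hc p x) W
    have hadd := image_filling (Homeomorph.addRight m) (M := ‖m‖)
      (fun x => by simp [dist_eq_norm]) W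
    rw [coe_homeomorph_pow, hpm] at hFp
    exact hFp.trans hadd.symm

theorem IsPeriodicDisk.exists_iterate_eq (hD : IsPeriodicDisk Λ F p m D)
    (hF : Function.Commute F (· + m)) {c : ℝ} (hc : ∀ z, ‖F z - z‖ ≤ c) (hWD : W ⊆ D)
    (hWo : IsOpen W) (hWc : IsConnected W) (hpm : F^[p] '' W = (· + m) '' W)
    (hret : ∀ V ⊆ W, IsOpen V → V.Nonempty →
      ∃ q ≥ 1, ∃ b ∈ V, F^[p * q] b - q • m ∈ V) : ∃ z ∈ D, F^[p] z = z + m := by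
  have hmaps {S : Set ℂ} (hS : F^[p] '' S = (· + m) '' S) : MapsTo (fun z => F^[p] z - m) S S := by
    intro z hz
    obtain ⟨y, hy, hyz⟩ : F^[p] z ∈ (· + m) '' S := hS ▸ mem_image_of_mem _ hz
    simpa [← hyz] using hy
  obtain ⟨z, hz, hzz⟩ := exists_fixedPoint_of_nonwandering (h := fun z => F^[p] z - m)
    (M := p * c + ‖m‖) ((F.continuous.iterate p).sub continuous_const)
    (sub_left_injective.comp (F.injective.iterate p))
    (fun z => by
      rw [sub_right_comm]
      exact (norm_sub_le _ _).trans (add_le_add_left (norm_iterate_sub_le hc p z) _))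
    hD.isSimplyConnected hD.isOpen (hmaps hD.image_iterate) hWD hWo hWc (hmaps hpm)
    fun V hVW hVo hV => by simpa only [iterate_iterate_sub hF] using hret V hVW hVo hV
  exact ⟨z, hz, sub_eq_iff_eq_add.1 hzz⟩

theorem exists_isPeriodicDisk {R : NNReal} (hΛ : IsCover R univ (Λ : Set ℂ))
    (hF : ∀ m ∈ Λ, Function.Commute F (· + m)) (hnw : IsNonwanderingMod Λ F)
    (hint : (interior (rotationSetOn F univ)).Nonempty) (hUo : IsOpen U) (hUc : IsConnected U)
    (hUb : Bornology.IsBounded U) {ρ₀ : ℂ} (hU : rotationSetOn F U = {ρ₀}) :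
    ∃ p : ℕ, 1 ≤ p ∧ ∃ m ∈ Λ, (p : ℝ)⁻¹ • m = ρ₀ ∧
      ∃ D, IsPeriodicDisk Λ F p m D ∧ U ⊆ D ∧ ∃ z ∈ D, F^[p] z = z + m := by
  obtain ⟨c, hc⟩ := exists_norm_sub_le_of_commute hΛ F.continuous hF
  obtain ⟨x, hx⟩ := hUc.nonempty
  set W := connectedComponentIn (fullOrbit Λ F U) x
  have hxO : x ∈ fullOrbit Λ F U := subset_fullOrbit hx
  have hWo : IsOpen W := (isOpen_fullOrbit F.continuous F.isOpenMap hUo).connectedComponentIn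
  have hWc : IsConnected W := isConnected_connectedComponentIn_iff.2 hxO
  have hUW : U ⊆ W := hUc.isPreconnected.subset_connectedComponentIn hx subset_fullOrbit
  have hloop (y k : ℂ) (hk : k ∈ Λ) (hy : y ∈ W) (hyk : y + k ∈ W) : k = 0 :=
    eq_zero_of_joinedIn_fullOrbit F.continuous F.injective F.isOpenMap hΛ hF hint hUo
      (hU ▸ subsingleton_singleton) hk
      (((hWo.isConnected_iff_isPathConnected.1 hWc).joinedIn _ hy _ hyk).mono
        (connectedComponentIn_subset _ _))
  obtain ⟨p, hp, m, hm, hpm, hdvd⟩ := exists_period (F := F) (W := W) hF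
    (fun k hk hWk => hloop x k hk (hUW hx) (hWk ▸ mem_image_of_mem _ (hUW hx))) <| by
      obtain ⟨n, hn, b, hb, k, hk, hbk⟩ := hnw U hUo hUc.nonempty
      exact ⟨n, hn, k, hk, image_iterate_eq_image_add hF hk (hUW hb) (hUW hbk)⟩
  have hret (V : Set ℂ) (hVW : V ⊆ W) (hVo : IsOpen V) (hV : V.Nonempty) (N : ℕ) :
      ∃ q ≥ N, ∃ b ∈ V, F^[p * q] b - q • m ∈ V := by
    obtain ⟨n, hn, b, hb, k, hk, hbk⟩ := hnw.exists_ge F.continuous hF hVo hV (p * N)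
    obtain ⟨q, rfl, rfl⟩ := hdvd n k hk (image_iterate_eq_image_add hF hk (hVW hb) (hVW hbk))
    exact ⟨q, le_of_mul_le_mul_left hn hp, b, hb, hbk⟩
  have hdisj (k : ℂ) (hk : k ∈ Λ) (hk0 : k ≠ 0) : Disjoint W ((· + k) '' W) := by
    rw [disjoint_right]
    rintro _ ⟨y, hy, rfl⟩ hyk
    exact hk0 (hloop y k hk hy hyk)
  have hD : IsPeriodicDisk Λ F p m (filling W) := isPeriodicDisk_filling hc hWo hWc hdisj hpm
  refine ⟨p, hp, m, hm, ?_, _, hD, hUW.trans (subset_filling), ?_⟩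
  · have := inv_smul_mem_rotationSetOn hUb hp (hret U hUW hUo hUc.nonempty)
    rwa [hU] at this
  · exact hD.exists_iterate_eq (hF m hm) hc (subset_filling) hWo hWc hpm
      fun V hVW hVo hV => hret V hVW hVo hV 1

end Component

/-! ### The dichotomy on the torus -/

section Planar

variable {F : ℂ → ℂ} {Λ : AddSubgroup ℂ} {U : Set ℂ}

theorem exists_linearIsometryEquiv_re_eq_zero {S : Submodule ℝ ℂ} (hS : S ≠ ⊤) :
    ∃ L : ℂ ≃ₗᵢ[ℝ] ℂ, ∀ z ∈ S, (L z).re = 0 := by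
  obtain ⟨v, hv, hv0⟩ := Submodule.exists_mem_ne_zero_of_ne_bot
    (mt Submodule.orthogonal_eq_bot_iff.1 hS)
  let L : ℂ ≃ₗᵢ[ℝ] ℂ := (ℝ ∙ (v - ‖v‖))ᗮ.reflection
  have hLv : L v = ‖v‖ := Submodule.reflection_sub (by simp)
  refine ⟨L, fun z hz => ?_⟩
  have horth : ‖v‖ * (L z).re = 0 := by
    simpa [← L.inner_map_map z, hLv, Complex.inner, hv0, or_comm] using hv z hz
  exact (mul_eq_zero.1 horth).resolve_left (norm_ne_zero_iff.2 hv0)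

theorem rotationSetOn_subsingleton_or_interior_convexHull_nonempty (hFc : Continuous F)
    (hFi : Function.Injective F) (hFo : IsOpenMap F) {R : NNReal}
    (hΛ : IsCover R univ (Λ : Set ℂ)) (hF : ∀ m ∈ Λ, Function.Commute F (· + m))
    (hnw : IsNonwanderingMod Λ F) (hint : (interior (rotationSetOn F univ)).Nonempty)
    (hUo : IsOpen U) (hU : IsConnected U) (hUb : Bornology.IsBounded U) :
    (rotationSetOn F U).Subsingleton ∨
      (interior (convexHull ℝ (rotationSetOn F U))).Nonempty := by
  rcases (rotationSetOn F U).eq_empty_or_nonempty with hempty | ⟨ρ₁, h₁⟩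
  · exact Or.inl (hempty ▸ subsingleton_empty)
  rw [interior_convexHull_nonempty_iff_affineSpan_eq_top,
    ← AffineSubspace.direction_eq_top_iff_of_nonempty ((affineSpan_nonempty ℝ).2 ⟨ρ₁, h₁⟩),
    direction_affineSpan, or_iff_not_imp_right]
  intro hspan
  obtain ⟨L, hL⟩ := exists_linearIsometryEquiv_re_eq_zero hspan
  refine rotationSetOn_subsingleton_of_re_eq (L := L) (lam := (L ρ₁).re) hFc hFi hFo hΛ hF hnw
    hint hUo hU hUb fun ρ hρ => ?_
  simpa [sub_eq_zero] using hL _ (vsub_mem_vectorSpan ℝ hρ h₁)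

end Planar

theorem isSimplyConnected_image_of_injOn {X Y : Type*} [TopologicalSpace X] [TopologicalSpace Y]
    {f : X → Y} {D : Set X} (hD : IsSimplyConnected D) (hDo : IsOpen D) (hf : Continuous f)
    (hfo : IsOpenMap f) (hfD : InjOn f D) : IsSimplyConnected (f '' D) := by
  have hemb : IsOpenEmbedding (D.domRestrict f) :=
    .of_continuous_injective_isOpenMap (hf.comp continuous_subtype_val) hfD.injective
      (hfo.comp hDo.isOpenMap_subtype_val)
  rw [← range_domRestrict f D]
  have := hD.simplyConnectedSpace
  exact hemb.isEmbedding.toHomeomorph.symm.toHomotopyEquiv.simplyConnectedSpace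

section Quotient

open scoped Pointwise

variable {V X : Type*} [AddCommGroup V] {Λ : AddSubgroup V} {P : V → X}

theorem preimage_image_eq_add (hP : ∀ x y, P x = P y ↔ y - x ∈ Λ) (S : Set V) :
    P ⁻¹' (P '' S) = S + (Λ : Set V) := by
  ext z
  simp only [mem_preimage, mem_image, hP, Set.mem_add]
  exact exists_congr fun x => and_congr_right fun _ =>
    ⟨fun h => ⟨_, h, add_sub_cancel _ _⟩, fun ⟨y, hy, hz⟩ => by simpa [← hz] using hy⟩

theorem apply_add_eq (hP : ∀ x y, P x = P y ↔ y - x ∈ Λ) (z : V) {m : V} (hm : m ∈ Λ) :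
    P (z + m) = P z :=
  ((hP _ _).2 (by simpa using hm)).symm

theorem add_mem_connectedComponentIn_preimage [TopologicalSpace V] [ContinuousAdd V]
    (hP : ∀ x y, P x = P y ↔ y - x ∈ Λ) {U : Set X} {x y m : V} (hm : m ∈ Λ)
    (hy : y ∈ connectedComponentIn (P ⁻¹' U) x) :
    y + m ∈ connectedComponentIn (P ⁻¹' U) (x + m) := by
  have hx : x ∈ P ⁻¹' U := connectedComponentIn_nonempty_iff.1 ⟨y, hy⟩
  have himage : (· + m) '' connectedComponentIn (P ⁻¹' U) x ⊆ P ⁻¹' U := by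
    rintro _ ⟨z, hz, rfl⟩
    rw [mem_preimage, apply_add_eq hP z hm]
    exact connectedComponentIn_subset (P ⁻¹' U) x hz
  exact (isPreconnected_connectedComponentIn.image (· + m)
    (by fun_prop)).subset_connectedComponentIn (mem_image_of_mem _ (mem_connectedComponentIn hx))
      himage (mem_image_of_mem _ hy)

variable [TopologicalSpace V] [TopologicalSpace X]

theorem isNonwanderingMod_of_semiconj (hPo : IsOpenMap P)
    (hP : ∀ x y, P x = P y ↔ y - x ∈ Λ) {F : V → V} {f : X → X} (hf : Function.Semiconj P F f)
    (hnw : ∀ W, IsOpen W → W.Nonempty → ∃ n ≥ 1, (f^[n] '' W ∩ W).Nonempty) :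
    IsNonwanderingMod Λ F := by
  intro W hW hne
  obtain ⟨n, hn, _, ⟨_, ⟨b, hb, rfl⟩, rfl⟩, b', hb', hbb'⟩ := hnw _ (hPo W hW) (hne.image P)
  rw [← (hf.iterate_right n).eq, hP] at hbb'
  exact ⟨n, hn, b, hb, _, hbb', by simpa using hb'⟩

theorem image_connectedComponentIn_preimage [ContinuousAdd V] [LocallyConnectedSpace V]
    (hPc : Continuous P) (hPo : IsOpenMap P) (hPs : Function.Surjective P)
    (hP : ∀ x y, P x = P y ↔ y - x ∈ Λ) {U : Set X} (hUo : IsOpen U) (hU : IsPreconnected U) {x : V}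
    (hx : P x ∈ U) : P '' connectedComponentIn (P ⁻¹' U) x = U := by
  refine Subset.antisymm (image_subset_iff.2 (connectedComponentIn_subset _ _)) fun u hu => ?_
  have hlift {z w x : V} (hzw : w ∈ connectedComponentIn (P ⁻¹' U) z) (hzx : P z = P x) :
      ∃ y ∈ connectedComponentIn (P ⁻¹' U) x, P y = P w := by
    have hm : x - z ∈ Λ := (hP _ _).1 hzx
    have hmem := add_mem_connectedComponentIn_preimage hP hm hzw
    rw [add_sub_cancel] at hmem
    exact ⟨_, hmem, apply_add_eq hP w hm⟩
  suffices h : ∃ z, P z = P x ∧ ∃ w ∈ connectedComponentIn (P ⁻¹' U) z, P w = u by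
    obtain ⟨z, hz, w, hw, rfl⟩ := h
    exact hlift hw hz
  refine hU.induction₂ (fun u v => ∃ z, P z = u ∧ ∃ w ∈ connectedComponentIn (P ⁻¹' U) z, P w = v)
    ?_ ?_ ?_ hx hu
  · rintro u hu
    obtain ⟨z, rfl⟩ := hPs u
    have hz : connectedComponentIn (P ⁻¹' U) z ∈ 𝓝 z :=
      connectedComponentIn_mem_nhds ((hUo.preimage hPc).mem_nhds hu)
    filter_upwards [nhdsWithin_le_nhds (hPo.image_mem_nhds hz)] with v hv
    exact ⟨z, rfl, hv⟩
  · rintro _ _ _ - - - ⟨z, rfl, w, hw, rfl⟩ ⟨z', hz', w', hw', rfl⟩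
    exact ⟨z, rfl, connectedComponentIn_eq hw ▸ hlift hw' hz'⟩
  · rintro _ _ - - ⟨z, rfl, w, hw, rfl⟩
    refine ⟨w, rfl, z, ?_, rfl⟩
    rw [← connectedComponentIn_eq hw]
    exact mem_connectedComponentIn (connectedComponentIn_nonempty_iff.1 ⟨w, hw⟩)

end Quotient

section Torus

variable {X : Type*} {P : ℂ → X} {F : ℂ → ℂ} {f : X → X} {Λ : AddSubgroup ℂ}
  {U : Set X} {D : Set ℂ} {m : ℂ} {p : ℕ}

theorem IsPeriodicDisk.injOn (hD : IsPeriodicDisk Λ F p m D)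
    (hP : ∀ x y, P x = P y ↔ y - x ∈ Λ) : InjOn P D := by
  intro x hx y hy hxy
  by_contra! hne
  exact disjoint_left.1 (hD.disjoint_translate _ ((hP _ _).1 hxy) (sub_ne_zero.2 hne.symm)) hy
    ⟨x, hx, add_sub_cancel _ _⟩

theorem IsPeriodicDisk.image_iterate_image (hD : IsPeriodicDisk Λ F p m D) (hm : m ∈ Λ)
    (hP : ∀ x y, P x = P y ↔ y - x ∈ Λ) (hf : Function.Semiconj P F f) :
    f^[p] '' (P '' D) = P '' D := by
  rw [← (hf.iterate_right p).set_image D, hD.image_iterate, image_image]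
  exact image_congr fun z _ => apply_add_eq hP z hm

theorem exists_periodic_disk_or_interior_convexHull_nonempty [TopologicalSpace X] {F : ℂ ≃ₜ ℂ}
    (hPc : Continuous P) (hPo : IsOpenMap P) (hPs : Function.Surjective P)
    (hP : ∀ x y, P x = P y ↔ y - x ∈ Λ) {R : NNReal}
    (hΛ : IsCover R univ (Λ : Set ℂ)) (hF : ∀ m ∈ Λ, Function.Commute F (· + m))
    (hf : Function.Semiconj P F f)
    (hnw : ∀ W, IsOpen W → W.Nonempty → ∃ n ≥ 1, (f^[n] '' W ∩ W).Nonempty)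
    (hint : (interior (rotationSetOn F univ)).Nonempty) (hUo : IsOpen U) (hU : IsConnected U)
    (hUb : ∀ z ∈ P ⁻¹' U, Bornology.IsBounded (connectedComponentIn (P ⁻¹' U) z)) :
    (∃ p : ℕ, 1 ≤ p ∧ ∃ m ∈ Λ, rotationSetOn F (P ⁻¹' U) = {(p : ℝ)⁻¹ • m} ∧
      ∃ D, U ⊆ D ∧ IsOpen D ∧ IsSimplyConnected D ∧ f^[p] '' D = D ∧ ∃ z ∈ D, f^[p] z = z) ∨
    (interior (convexHull ℝ (rotationSetOn F (P ⁻¹' U)))).Nonempty := by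
  have hnw' := isNonwanderingMod_of_semiconj hPo hP hf hnw
  obtain ⟨u, hx⟩ := hU.nonempty
  obtain ⟨x, rfl⟩ := hPs u
  set C := connectedComponentIn (P ⁻¹' U) x
  have hCo : IsOpen C := (hUo.preimage hPc).connectedComponentIn
  have hCc : IsConnected C := isConnected_connectedComponentIn_iff.2 hx
  have hPC : P '' C = U :=
    image_connectedComponentIn_preimage hPc hPo hPs hP hUo hU.isPreconnected hx
  have hrot : rotationSetOn F (P ⁻¹' U) = rotationSetOn F C := by
    rw [← hPC, preimage_image_eq_add hP, rotationSetOn_add_addSubgroup hF]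
  rw [hrot]
  refine (rotationSetOn_subsingleton_or_interior_convexHull_nonempty F.continuous F.injective
    F.isOpenMap hΛ hF hnw' hint hCo hCc (hUb x hx)).imp_left fun hsub => ?_
  obtain ⟨c, hc⟩ := exists_norm_sub_le_of_commute hΛ F.continuous hF
  obtain ⟨ρ₀, hρ₀⟩ := rotationSetOn_nonempty hc hCc.nonempty
  obtain ⟨p, hp, m, hm, rfl, D, hD, hCD, z, hz, hfz⟩ := exists_isPeriodicDisk hΛ hF hnw' hint hCo
    hCc (hUb x hx) (hsub.eq_singleton_of_mem hρ₀)
  refine ⟨p, hp, m, hm, hsub.eq_singleton_of_mem hρ₀, P '' D, hPC ▸ image_mono hCD,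
    hPo _ hD.isOpen, isSimplyConnected_image_of_injOn hD.isSimplyConnected hD.isOpen hPc hPo
      (hD.injOn hP), hD.image_iterate_image hm hP hf, P z, mem_image_of_mem P hz, ?_⟩
  rw [← (hf.iterate_right p).eq, hfz, apply_add_eq hP z hm]

end Torus

section Plane

theorem image_rotationSetOn {V V' : Type*} [NormedAddCommGroup V] [NormedSpace ℝ V]
    [NormedAddCommGroup V'] [NormedSpace ℝ V'] (φ : V ≃L[ℝ] V') {G : V → V} {F : V' → V'}
    (h : Function.Semiconj φ G F) (W : Set V) :
    φ '' rotationSetOn G W = rotationSetOn F (φ '' W) := by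
  have hφ (n : ℕ) (z : V) : φ ((n : ℝ)⁻¹ • (G^[n] z - z)) = (n : ℝ)⁻¹ • (F^[n] (φ z) - φ z) := by
    rw [map_smul, map_sub, (h.iterate_right n).eq]
  refine Subset.antisymm ?_ ?_
  · rintro _ ⟨ρ, ⟨n, z, hn, hz, hlim⟩, rfl⟩
    refine ⟨n, φ ∘ z, hn, fun i => mem_image_of_mem φ (hz i), ?_⟩
    simpa only [Function.comp_def, hφ] using (φ.continuous.tendsto ρ).comp hlim
  · rintro ρ ⟨n, z, hn, hz, hlim⟩
    choose u hu huz using hz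
    refine ⟨φ.symm ρ, ⟨n, u, hn, hu, ?_⟩, φ.apply_symm_apply ρ⟩
    simpa [Function.comp_def, ← huz, ← hφ] using (φ.symm.continuous.tendsto ρ).comp hlim

variable {V : Type*} [NormedAddCommGroup V] [NormedSpace ℝ V] {Λ : AddSubgroup V}

theorem exists_periodic_disk_or_interior_convexHull_nonempty_quotient (φ : ℂ ≃ₗᵢ[ℝ] V)
    {R : NNReal} (hΛ : IsCover R univ (Λ : Set V)) {F : V ≃ₜ V}
    (hF : ∀ m ∈ Λ, Function.Commute F (· + m)) {f : V ⧸ Λ → V ⧸ Λ}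
    (hf : Function.Semiconj (QuotientAddGroup.mk (s := Λ)) F f)
    (hnw : ∀ W, IsOpen W → W.Nonempty → ∃ n ≥ 1, (f^[n] '' W ∩ W).Nonempty)
    (hint : (interior (rotationSetOn F univ)).Nonempty) {U : Set (V ⧸ Λ)} (hUo : IsOpen U)
    (hU : IsConnected U) (hUb : ∀ z ∈ QuotientAddGroup.mk ⁻¹' U,
      Bornology.IsBounded (connectedComponentIn (QuotientAddGroup.mk ⁻¹' U) z)) :
    (∃ p : ℕ, 1 ≤ p ∧ ∃ m ∈ Λ, rotationSetOn F (QuotientAddGroup.mk ⁻¹' U) = {(p : ℝ)⁻¹ • m} ∧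
      ∃ D, U ⊆ D ∧ IsOpen D ∧ IsSimplyConnected D ∧ f^[p] '' D = D ∧ ∃ z ∈ D, f^[p] z = z) ∨
    (interior (convexHull ℝ (rotationSetOn F (QuotientAddGroup.mk ⁻¹' U)))).Nonempty := by
  let H : ℂ ≃ₜ V := φ.toHomeomorph
  let G : ℂ ≃ₜ ℂ := (H.trans F).trans H.symm
  let P : ℂ → V ⧸ Λ := QuotientAddGroup.mk ∘ φ
  have hφG : Function.Semiconj φ G F := fun z => φ.apply_symm_apply _
  have hrot (W : Set V) : rotationSetOn F W = H '' rotationSetOn G (H ⁻¹' W) := by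
    rw [← H.image_preimage W, H.preimage_image]
    exact (image_rotationSetOn φ.toContinuousLinearEquiv hφG _).symm
  have hG (m : ℂ) (hm : φ m ∈ Λ) : Function.Commute G (· + m) := fun z => by
    refine φ.injective ?_
    rw [hφG.eq, map_add φ, map_add φ, hφG.eq]
    exact hF _ hm _
  have hcover : IsCover R univ (Λ.comap (φ : ℂ →+ V) : Set ℂ) := by
    rw [← φ.isometry.isCover_image_iff]
    simpa [image_preimage_eq _ φ.surjective] using hΛ
  rw [hrot] at hint ⊢
  rw [preimage_univ, ← H.image_interior, image_nonempty] at hint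
  have hconvex (S : Set ℂ) : convexHull ℝ (H '' S) = H '' convexHull ℝ S :=
    (LinearMap.image_convexHull (φ.toLinearEquiv : ℂ →ₗ[ℝ] V) _).symm
  have hbounded (z : ℂ) (hz : z ∈ P ⁻¹' U) :
      Bornology.IsBounded (connectedComponentIn (P ⁻¹' U) z) := by
    refine (φ.isometry.antilipschitz.isBounded_preimage (hUb (φ z) hz)).subset ?_
    rw [← image_subset_iff]
    exact (φ.continuous.continuousOn.mapsTo_connectedComponentIn hz).image_subset.trans
      (connectedComponentIn_mono _ (image_preimage_subset φ (QuotientAddGroup.mk ⁻¹' U)))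
  rw [hconvex, ← H.image_interior, image_nonempty]
  refine (exists_periodic_disk_or_interior_convexHull_nonempty
    (QuotientAddGroup.continuous_mk.comp φ.continuous)
    (QuotientAddGroup.isOpenMap_coe.comp H.isOpenMap)
    (QuotientAddGroup.mk_surjective.comp φ.surjective)
    (fun x y => by
      rw [Function.comp_apply, Function.comp_apply, QuotientAddGroup.eq, ← sub_eq_neg_add,
        ← map_sub]
      rfl) hcover hG (hf.comp_left hφG) hnw hint hUo hU hbounded).imp_left ?_
  rintro ⟨p, hp, m, hm, hρ, hD⟩
  refine ⟨p, hp, φ m, hm, ?_, hD⟩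
  exact (congrArg (H '' ·) hρ).trans (image_singleton.trans (congrArg _ (map_smul φ _ m)))

end Plane

theorem isCover_zLat (d : ℕ) : IsCover (NNReal.sqrt d) univ (ZLat d : Set (E d)) := by
  intro x _
  refine ⟨WithLp.toLp 2 fun i => (⌊x i⌋ : ℝ), fun i => ⟨_, rfl⟩, ?_⟩
  have hcoord (i : Fin d) : nndist (x i) ⌊x i⌋ ^ 2 ≤ 1 := by
    refine pow_le_one₀ zero_le (NNReal.coe_le_coe.1 ?_)
    rw [coe_nndist, Real.dist_eq, Int.self_sub_floor, Int.abs_fract]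
    exact (Int.fract_lt_one _).le
  change edist x _ ≤ _
  rw [edist_nndist, ENNReal.coe_le_coe, EuclideanSpace.nndist_eq]
  exact NNReal.sqrt_le_sqrt.2 ((Finset.sum_le_card_nsmul _ _ 1 fun i _ => hcoord i).trans (by simp))

theorem ratVec_inv_smul {m : E 2} (hm : m ∈ ZLat 2) (p : ℕ) : RatVec ((p : ℝ)⁻¹ • m) := by
  obtain ⟨⟨a, ha⟩, ⟨b, hb⟩⟩ := And.intro (hm 0) (hm 1)
  exact ⟨⟨(p : ℚ)⁻¹ * a, by simp [ha]⟩, ⟨(p : ℚ)⁻¹ * b, by simp [hb]⟩⟩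

/-- **Main theorem (elliptic islands dichotomy).**
If `f` is non-wandering and `ρ(F)` has non-empty interior, then for every open,
bounded and connected `U ⊆ T²` either (i) `ρ_U(F)` is a single rational vector and
`U` lies in a periodic embedded open topological disk containing a periodic point,
or (ii) the convex hull of `ρ_U(F)` has non-empty interior. -/
theorem elliptic_islands_dichotomy
    (F : E 2 ≃ₜ E 2) (f : T 2 ≃ₜ T 2) (hlift : IsLift F f)
    (hnw : ∀ V : Set (T 2), IsOpen V → V.Nonempty →
      ∃ n : ℕ, 1 ≤ n ∧ ((⇑f)^[n] '' V ∩ V).Nonempty)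
    (hint : (interior (rotSet (⇑F))).Nonempty)
    (U : Set (T 2)) (hUopen : IsOpen U) (hUbdd : BoundedSet U) (hUconn : IsConnected U) :
    (∃ ρ : E 2, RatVec ρ ∧ rotU (⇑F) U = {ρ} ∧
      ∃ (p : ℕ) (D : Set (T 2)), 1 ≤ p ∧ U ⊆ D ∧ IsOpen D ∧ IsConnected D ∧
        SimplyConnectedSpace D ∧ (⇑f)^[p] '' D = D ∧ ∃ z ∈ D, (⇑f)^[p] z = z) ∨
    (interior (convexHull ℝ (rotU (⇑F) U))).Nonempty := by
  refine (exists_periodic_disk_or_interior_convexHull_nonempty_quotient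
    Complex.orthonormalBasisOneI.repr (isCover_zLat 2) (fun m hm z => hlift.2 z m hm) hlift.1 hnw
    hint hUopen hUconn hUbdd).imp_left ?_
  rintro ⟨p, hp, m, hm, hρ, D, hUD, hDo, hD, hfD, hfix⟩
  exact ⟨_, ratVec_inv_smul hm p, hρ, p, D, hp, hUD, hDo, hD.isPathConnected.isConnected,
    hD.simplyConnectedSpace, hfD, hfix⟩
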